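/- arXiv:2512.07759 — 2 statements merged into one kernel-verified Lean document; each statement's English description precedes it below -/
import Mathlib

section
/- Let n ≥ 3, let p be an odd prime, and let f ∈ Aut(F_n) have order p. Then N(f) = SAut(F_n) if det(f̄) = 1, and N(f) = Aut(F_n) if det(f̄) = −1. -/
open Matrix

namespace NormalClosurePaper

/-- The automorphism group of the free group on `n` generators. -/
abbrev FrAut (n : ℕ) := MulAut (FreeGroup (Fin n))

/-- Exponent sum of the generator `x_i` in a word of the free group. -/
def expSum {n : ℕ} (i : Fin n) : FreeGroup (Fin n) →* Multiplicative ℤ :=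
  FreeGroup.lift fun j => Multiplicative.ofAdd (if j = i then (1 : ℤ) else 0)

/-- The abelianized matrix of an automorphism of the free group:
the `(i, j)` entry is the exponent sum of `x_i` in `f x_j`. -/
def mat {n : ℕ} (f : FrAut n) : Matrix (Fin n) (Fin n) ℤ :=
  Matrix.of fun i j => (expSum i (f (FreeGroup.of j))).toAdd

lemma expSum_apply {n : ℕ} (f : FrAut n) (i : Fin n) (w : FreeGroup (Fin n)) :
    (expSum i (f w)).toAdd = ∑ k, mat f i k * (expSum k w).toAdd := by
  induction w using FreeGroup.induction_on with
  | C1 => simp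
  | of j =>
      have h : (expSum i (f (FreeGroup.of j))).toAdd = mat f i j := rfl
      rw [h]
      simp [expSum, mul_ite, Finset.sum_ite_eq]
  | inv_of j ih =>
      simp only [_root_.map_inv, toAdd_inv, mul_neg, Finset.sum_neg_distrib, ih]
  | mul x y ihx ihy =>
      simp only [_root_.map_mul, toAdd_mul, mul_add, Finset.sum_add_distrib, ihx, ihy]

lemma mat_one {n : ℕ} : mat (1 : FrAut n) = 1 := by
  ext i j
  simp [mat, expSum, Matrix.one_apply, eq_comm]

lemma mat_mul {n : ℕ} (f g : FrAut n) : mat (f * g) = mat f * mat g := by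
  ext i j
  rw [Matrix.mul_apply]
  show (expSum i ((f * g) (FreeGroup.of j))).toAdd = _
  rw [show (f * g) (FreeGroup.of j) = f (g (FreeGroup.of j)) from rfl, expSum_apply]
  rfl

/-- The matrix of the induced map on the abelianization, as a monoid homomorphism. -/
def matHom (n : ℕ) : FrAut n →* Matrix (Fin n) (Fin n) ℤ where
  toFun := mat
  map_one' := mat_one
  map_mul' := mat_mul

/-- The homomorphism `Aut(F_n) → GL_n(ℤ)` induced by abelianization. -/
def ρ (n : ℕ) : FrAut n →* GL (Fin n) ℤ := (matHom n).toHomUnits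

/-- The composition of `ρ` with the determinant. -/
def detρ (n : ℕ) : FrAut n →* ℤˣ := (Matrix.GeneralLinearGroup.det).comp (ρ n)

/-- The special automorphism group `SAut(F_n)`: automorphisms whose induced matrix
has determinant `1`. -/
def SAut (n : ℕ) : Subgroup (FrAut n) := (detρ n).ker

/-- The Torelli subgroup `IA_n`, the kernel of `ρ`. -/
def IA (n : ℕ) : Subgroup (FrAut n) := (ρ n).ker

/-- The group of inner automorphisms of the free group. -/
def Inn (n : ℕ) : Subgroup (FrAut n) := (MulAut.conj (G := FreeGroup (Fin n))).range

instance Inn_normal (n : ℕ) : (Inn n).Normal := by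
  constructor
  rintro - ⟨a, rfl⟩ g
  refine ⟨g a, ?_⟩
  ext y
  simp [MulAut.conj_apply, MulAut.mul_apply, _root_.map_mul, _root_.map_inv]

/-- The outer automorphism group `Out(F_n)`. -/
abbrev OutF (n : ℕ) := FrAut n ⧸ Inn n

/-- The projection `Aut(F_n) → Out(F_n)`. -/
def toOut (n : ℕ) : FrAut n →* OutF n := QuotientGroup.mk' (Inn n)

lemma mat_conj {n : ℕ} (g : FreeGroup (Fin n)) : mat (MulAut.conj g) = 1 := by
  rw [← mat_one (n := n)]
  ext i j
  simp only [mat, Matrix.of_apply, MulAut.conj_apply, MulAut.one_apply, _root_.map_mul,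
    _root_.map_inv, toAdd_mul, toAdd_inv]
  omega

lemma ρ_conj {n : ℕ} (g : FreeGroup (Fin n)) : ρ n (MulAut.conj g) = 1 :=
  Units.ext (mat_conj g)

/-- The homomorphism `Out(F_n) → GL_n(ℤ)` induced by abelianization. -/
def ρOut (n : ℕ) : OutF n →* GL (Fin n) ℤ :=
  QuotientGroup.lift (Inn n) (ρ n) (by rintro - ⟨g, rfl⟩; exact ρ_conj g)

/-- The composition of `ρOut` with the determinant. -/
def detρOut (n : ℕ) : OutF n →* ℤˣ := (Matrix.GeneralLinearGroup.det).comp (ρOut n)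

/-- The special outer automorphism group `SOut(F_n)`. -/
def SOut (n : ℕ) : Subgroup (OutF n) := (detρOut n).ker

/-- Entrywise reduction `GL_n(ℤ) → GL_n(ℤ/ℓℤ)`. -/
def redGL (n ℓ : ℕ) : GL (Fin n) ℤ →* GL (Fin n) (ZMod ℓ) :=
  Units.map (RingHom.mapMatrix (Int.castRingHom (ZMod ℓ))).toMonoidHom

/-- The subgroup `GΓ_n(ℓ)` of `GL_n(ℤ)` of matrices congruent to the identity mod `ℓ`. -/
def GGamma (n ℓ : ℕ) : Subgroup (GL (Fin n) ℤ) := (redGL n ℓ).ker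

/-- The level `ℓ` congruence subgroup `Γ_n(ℓ)` (viewed inside `GL_n(ℤ)`): matrices with
determinant `1` that are congruent to the identity mod `ℓ`. -/
def GammaGL (n ℓ : ℕ) : Subgroup (GL (Fin n) ℤ) :=
  GGamma n ℓ ⊓ (Matrix.GeneralLinearGroup.det).ker

/-- Reduction `SL_n(ℤ) → SL_n(ℤ/ℓℤ)`. -/
def redSL (n ℓ : ℕ) : Matrix.SpecialLinearGroup (Fin n) ℤ →*
    Matrix.SpecialLinearGroup (Fin n) (ZMod ℓ) :=
  Matrix.SpecialLinearGroup.map (Int.castRingHom (ZMod ℓ))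

/-- Projection `SL_n(ℤ/ℓℤ) → PSL_n(ℤ/ℓℤ)`. -/
def projPSL (n ℓ : ℕ) : Matrix.SpecialLinearGroup (Fin n) (ZMod ℓ) →*
    Matrix.ProjectiveSpecialLinearGroup (Fin n) (ZMod ℓ) :=
  QuotientGroup.mk' _

/-!
Abelianization detects `f`: an automorphism of odd prime order inducing the identity on `ℤⁿ` would
induce it on every finite `2`-group quotient of `F_n` with invariant kernel, and `F_n` is residually
a finite `2`-group. Almost invariant subsets `C` of `F_n` define homomorphisms to `ℤ` that count the
Cayley graph edges crossing the boundary of `C`, and these include the exponent sums; so `f` moves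
the homomorphism of some `C`. As in Dunwoody's theory of cuts, suitably minimal such sets `C` are
pairwise nested. Two of them, `A` and `f '' A`, and their translates form the half-trees of a free
splitting of `F_n`, in which, after translation, they correspond to two elements `x` and `y` of a
basis. Up to the complementary free factors `f` sends `x` to `y`, and a commutator with such an `f`
yields a transvection in `N(f)`. Nielsen reduction shows that its conjugates generate `SAut(F_n)`.
-/

section

open FreeGroup

section GromovProduct

/-- The length of the longest common prefix of two lists. -/
def commonPrefixLength {β : Type*} [DecidableEq β] : List β → List β → ℕ
  | a :: l, b :: m => if a = b then commonPrefixLength l m + 1 else 0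
  | [], _ => 0
  | _ :: _, [] => 0

lemma le_commonPrefixLength_iff {β : Type*} [DecidableEq β] (k : ℕ) (l m : List β) :
    k ≤ commonPrefixLength l m ↔ k ≤ l.length ∧ k ≤ m.length ∧ l.take k = m.take k := by
  induction l generalizing k m with
  | nil => simp +contextual [commonPrefixLength]
  | cons a l ih =>
    cases m with
    | nil => simp +contextual [commonPrefixLength]
    | cons b m =>
      cases k with
      | zero => simp
      | succ k => by_cases h : a = b <;> simp [commonPrefixLength, h, ih]

variable {α : Type*} [DecidableEq α]

/-- The Gromov product of two elements of a free group based at `1`: the length of the longest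
common prefix of their reduced words. -/
def gromovProd (x y : FreeGroup α) : ℕ := commonPrefixLength x.toWord y.toWord

lemma le_gromovProd_iff (k : ℕ) (x y : FreeGroup α) :
    k ≤ gromovProd x y ↔ k ≤ x.norm ∧ k ≤ y.norm ∧ x.toWord.take k = y.toWord.take k :=
  le_commonPrefixLength_iff k _ _

lemma take_gromovProd (x y : FreeGroup α) :
    x.toWord.take (gromovProd x y) = y.toWord.take (gromovProd x y) :=
  ((le_gromovProd_iff _ x y).1 le_rfl).2.2

lemma gromovProd_comm (x y : FreeGroup α) : gromovProd x y = gromovProd y x :=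
  eq_of_forall_le_iff fun k => by simp only [le_gromovProd_iff, eq_comm, and_left_comm]

lemma min_gromovProd_le (x y z : FreeGroup α) :
    min (gromovProd x y) (gromovProd y z) ≤ gromovProd x z := by
  obtain ⟨hx, -, hxy⟩ := (le_gromovProd_iff _ x y).1 (min_le_left _ (gromovProd y z))
  obtain ⟨-, hz, hyz⟩ := (le_gromovProd_iff _ y z).1 (min_le_right (gromovProd x y) _)
  exact (le_gromovProd_iff _ _ _).2 ⟨hx, hz, hxy.trans hyz⟩

lemma isReduced_invRev_cons_append_cons {α : Type*} {a b : α × Bool} {l m : List (α × Bool)}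
    (hl : IsReduced (a :: l)) (hm : IsReduced (b :: m)) (hab : a ≠ b) :
    IsReduced (invRev (a :: l) ++ b :: m) := by
  classical
  have hinv : IsReduced (invRev (a :: l)) := by
    rw [isReduced_iff_reduce_eq, reduce_invRev, hl.reduce_eq]
  refine List.isChain_append.2 ⟨hinv, hm, fun x hx y hy hxy => ?_⟩
  simp only [invRev, List.map_cons, List.reverse_cons, List.getLast?_append,
    List.getLast?_singleton, Option.some_or, Option.mem_def, Option.some.injEq,
    List.head?_cons] at hx hy
  subst hx hy
  exact (Bool.eq_not_of_ne fun h => hab (Prod.ext hxy h.symm)).symm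

lemma norm_inv_mk_mul_mk (l m : List (α × Bool)) (hl : IsReduced l) (hm : IsReduced m) :
    ((mk l)⁻¹ * mk m).norm + 2 * commonPrefixLength l m = l.length + m.length := by
  induction l generalizing m with
  | nil => simp [FreeGroup.norm, commonPrefixLength, hm.reduce_eq, ← FreeGroup.one_eq_mk]
  | cons a l ih =>
    cases m with
    | nil => simp [FreeGroup.norm, commonPrefixLength, reduce_invRev, hl.reduce_eq]
    | cons b m =>
      by_cases h : a = b
      · subst h
        have hcancel : (mk (a :: l))⁻¹ * mk (a :: m) = (mk l)⁻¹ * mk m := by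
          rw [← List.singleton_append, ← List.singleton_append (l := m), ← FreeGroup.mul_mk,
            ← FreeGroup.mul_mk]
          group
        have := ih m hl.tail hm.tail
        simp only [hcancel, commonPrefixLength, if_true, List.length_cons]
        lia
      · rw [FreeGroup.inv_mk, FreeGroup.mul_mk, FreeGroup.norm, toWord_mk,
          (isReduced_invRev_cons_append_cons hl hm h).reduce_eq]
        simp [commonPrefixLength, h]

lemma norm_inv_mul_add_gromovProd (x y : FreeGroup α) :
    (x⁻¹ * y).norm + 2 * gromovProd x y = x.norm + y.norm := by
  have := norm_inv_mk_mul_mk x.toWord y.toWord isReduced_toWord isReduced_toWord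
  rwa [mk_toWord, mk_toWord] at this

lemma norm_mul_add_gromovProd (x y : FreeGroup α) :
    (x * y).norm + 2 * gromovProd x⁻¹ y = x.norm + y.norm := by
  have := norm_inv_mul_add_gromovProd x⁻¹ y
  rwa [inv_inv, norm_inv_eq] at this

lemma reduceCyclically_toWord_ne_nil {x : FreeGroup α} (hx : x ≠ 1) :
    reduceCyclically x.toWord ≠ [] := by
  intro h
  have hconj := reduceCyclically.conj_conjugator_reduceCyclically x.toWord
  rw [h, List.append_nil] at hconj
  rw [← mk_toWord (x := x), ← hconj, ← FreeGroup.mul_mk, ← FreeGroup.inv_mk, mul_inv_cancel] at hx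
  exact hx rfl

lemma norm_lt_norm_mul_self {x : FreeGroup α} (hx : x ≠ 1) : x.norm < (x * x).norm := by
  have hpow (k : ℕ) : (x ^ (k + 1)).norm = (reduceCyclically.conjugator x.toWord).length +
      (k + 1) * (reduceCyclically x.toWord).length +
      (reduceCyclically.conjugator x.toWord).length := by
    rw [FreeGroup.norm, toWord_pow,
      reduceCyclically.reduce_flatten_replicate_succ isReduced_toWord]
    simp [add_assoc]
  have hpos := List.length_pos_iff.2 (reduceCyclically_toWord_ne_nil hx)
  have h0 := hpow 0
  have h1 := hpow 1
  rw [zero_add, pow_one] at h0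
  rw [one_add_one_eq_two, pow_two] at h1
  lia

lemma two_mul_gromovProd_inv_self_lt {x : FreeGroup α} (hx : x ≠ 1) :
    2 * gromovProd x⁻¹ x < x.norm := by
  have := norm_mul_add_gromovProd x x
  have := norm_lt_norm_mul_self hx
  lia

end GromovProduct

section NielsenReduced

variable {α β : Type*} [DecidableEq α]

/-- The value of a signed letter under an assignment of the generators. -/
def letterVal {α β : Type*} (U : β → FreeGroup α) (s : β × Bool) : FreeGroup α :=
  cond s.2 (U s.1) (U s.1)⁻¹

lemma letterVal_not {α β : Type*} (U : β → FreeGroup α) (s : β × Bool) :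
    letterVal U (s.1, !s.2) = (letterVal U s)⁻¹ := by
  rcases s with ⟨i, _ | _⟩ <;> simp [letterVal]

lemma lift_mk_cons {α β : Type*} (U : β → FreeGroup α) (s : β × Bool) (L : List (β × Bool)) :
    lift U (mk (s :: L)) = letterVal U s * lift U (mk L) := by
  simp [lift_mk, letterVal]

/-- Two consecutive signed letters do not cancel. Reduced words are the chains for this relation. -/
def NonCancel {β : Type*} (s t : β × Bool) : Prop := s.1 = t.1 → s.2 = t.2

/-- Nielsen reduced families of elements of a free group. The usual conditions on the lengths of
products of two and three letters are expressed through Gromov products. -/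
structure NielsenReduced (U : β → FreeGroup α) : Prop where
  ne_one : ∀ s, letterVal U s ≠ 1
  two_mul_gromovProd_le : ∀ s t, NonCancel s t →
    2 * gromovProd (letterVal U s)⁻¹ (letterVal U t) ≤ (letterVal U t).norm
  gromovProd_add_lt : ∀ r s t, NonCancel r s → NonCancel s t →
    gromovProd (letterVal U r)⁻¹ (letterVal U s) + gromovProd (letterVal U s)⁻¹ (letterVal U t) <
      (letterVal U s).norm

-- The first inequality says that the tail of the word cancels no further into `s` than its first
-- letter does, which is what makes the induction on the length run.
lemma NielsenReduced.norm_lift_cons {U : β → FreeGroup α} (hU : NielsenReduced U)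
    (L : List (β × Bool)) (s w : β × Bool) (hL : (s :: L).IsChain NonCancel)
    (hw : NonCancel w s) :
    gromovProd (letterVal U w)⁻¹ (lift U (FreeGroup.mk (s :: L))) ≤
        gromovProd (letterVal U w)⁻¹ (letterVal U s) ∧
      (s :: L).length + gromovProd (letterVal U w)⁻¹ (letterVal U s) ≤
        (lift U (FreeGroup.mk (s :: L))).norm := by
  induction L generalizing s w with
  | nil =>
    have hpos := mt FreeGroup.norm_eq_zero.1 (hU.ne_one s)
    have hhalf := hU.two_mul_gromovProd_le w s hw
    rw [lift_mk_cons, ← one_eq_mk, _root_.map_one, mul_one, List.length_singleton]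
    lia
  | cons t L ih =>
    rw [List.isChain_cons_cons] at hL
    obtain ⟨htail, hlength⟩ := ih t s hL.2 hL.1
    have hsum := hU.gromovProd_add_lt w s t hw hL.1
    rw [lift_mk_cons, List.length_cons]
    set h := lift U (FreeGroup.mk (t :: L))
    set v := letterVal U s
    have hcancel := norm_inv_mul_add_gromovProd v (v * h)
    have hmul := norm_mul_add_gromovProd v h
    have hultra := min_gromovProd_le (letterVal U w)⁻¹ (v * h) v
    rw [inv_mul_cancel_left] at hcancel
    rw [gromovProd_comm (v * h) v] at hultra
    lia

lemma NielsenReduced.length_le_norm {U : β → FreeGroup α} (hU : NielsenReduced U)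
    (L : List (β × Bool)) (hL : IsReduced L) : L.length ≤ (lift U (FreeGroup.mk L)).norm := by
  cases L with
  | nil => simp
  | cons s L => exact (Nat.le_add_right _ _).trans (hU.norm_lift_cons L s s hL fun _ => rfl).2

end NielsenReduced

section ReducedWords

variable {α : Type*} [DecidableEq α]

lemma drop_toWord_eq_invRev_take (v : FreeGroup α) (k : ℕ) :
    v.toWord.drop (v.norm - k) = invRev (v⁻¹.toWord.take k) := by
  simp [toWord_inv, FreeGroup.norm, invRev, List.take_reverse, Function.comp_def, List.map_drop]

lemma toWord_mk_of_norm_eq {L : List (α × Bool)} (h : (mk L).norm = L.length) :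
    (mk L).toWord = L :=
  (reduce.red (L := L)).sublist.eq_of_length h

lemma toWord_mul_eq_take_append_drop (v w : FreeGroup α) :
    (v * w).toWord = v.toWord.take (v.norm - gromovProd v⁻¹ w) ++
      w.toWord.drop (gromovProd v⁻¹ w) := by
  obtain ⟨hv, hw, -⟩ := (le_gromovProd_iff _ v⁻¹ w).1 le_rfl
  rw [norm_inv_eq] at hv
  have hnorm := norm_mul_add_gromovProd v w
  have hmk : v * w = mk (v.toWord.take (v.norm - gromovProd v⁻¹ w) ++
      w.toWord.drop (gromovProd v⁻¹ w)) := by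
    conv_lhs =>
      rw [← mk_toWord (x := v), ← mk_toWord (x := w),
        ← List.take_append_drop (v.norm - gromovProd v⁻¹ w) v.toWord,
        ← List.take_append_drop (gromovProd v⁻¹ w) w.toWord, drop_toWord_eq_invRev_take,
        take_gromovProd, ← FreeGroup.mul_mk, ← FreeGroup.mul_mk, ← FreeGroup.inv_mk]
    rw [mul_assoc, inv_mul_cancel_left, FreeGroup.mul_mk]
  rw [hmk]
  refine toWord_mk_of_norm_eq ?_
  rw [← hmk, List.length_append, List.length_take, List.length_drop]
  simp only [FreeGroup.norm] at *
  lia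

end ReducedWords

section Weight

variable {n : ℕ}

/-- The numerical value of a word in signed letters, read in base `2 * n + 1`; among words of equal
length it is a total order compatible with appending. -/
def wordNum (l : List (Fin n × Bool)) : ℕ :=
  Nat.ofDigits (2 * n + 1) (l.map fun s => 2 * s.1.1 + s.2.toNat).reverse

lemma wordNum_append_lt {p q : List (Fin n × Bool)} (b : List (Fin n × Bool))
    (h : wordNum p < wordNum q) : wordNum (p ++ b) < wordNum (q ++ b) := by
  simp only [wordNum, List.map_append, List.reverse_append, Nat.ofDigits_append] at *
  gcongr

lemma eq_of_wordNum_eq {p q : List (Fin n × Bool)} (hl : p.length = q.length)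
    (h : wordNum p = wordNum q) : p = q := by
  rcases Nat.eq_zero_or_pos n with rfl | hn
  · cases p with
    | nil => exact (List.length_eq_zero_iff.1 hl.symm).symm
    | cons a _ => exact a.1.elim0
  have hdigit (l : List (Fin n × Bool)) :
      ∀ d ∈ (l.map fun s => 2 * s.1.1 + s.2.toNat).reverse, d < 2 * n + 1 := by
    simp only [List.mem_reverse, List.mem_map]
    rintro _ ⟨⟨⟨i, hi⟩, b⟩, -, rfl⟩
    have := Bool.toNat_le b
    lia
  have hrev := Nat.ofDigits_inj_of_len_eq (by lia) (by simpa using hl) (hdigit p) (hdigit q) h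
  refine List.map_injective_iff.2 ?_ (List.reverse_inj.1 hrev)
  rintro ⟨i, b⟩ ⟨j, c⟩ h
  simp only [Prod.mk.injEq, Fin.ext_iff]
  cases b <;> cases c <;>
    simp only [Bool.toNat_false, Bool.toNat_true, reduceCtorEq, and_true, and_false] at h ⊢ <;> lia

/-- The sum of the numerical values of the initial halves of a word and of its inverse. -/
def halfNum (w : FreeGroup (Fin n)) : ℕ :=
  wordNum (w.toWord.take ((w.norm + 1) / 2)) + wordNum (w⁻¹.toWord.take ((w.norm + 1) / 2))

lemma halfNum_inv (w : FreeGroup (Fin n)) : halfNum w⁻¹ = halfNum w := by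
  simp only [halfNum, norm_inv_eq, inv_inv, add_comm]

lemma halfNum_lt_of_append {v w : FreeGroup (Fin n)} {p q b : List (Fin n × Bool)}
    (hv : v.toWord = p ++ b) (hw : w.toWord = q ++ b) (hpq : p.length = q.length)
    (hqb : q.length ≤ b.length) (hlt : wordNum p < wordNum q) : halfNum v < halfNum w := by
  have hnorm : v.norm = w.norm := by simp [FreeGroup.norm, hv, hw, hpq]
  have hwlen : w.norm = q.length + b.length := by simp [FreeGroup.norm, hw]
  have htail (r : List (Fin n × Bool)) : (invRev (r ++ b)).take ((w.norm + 1) / 2) =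
      (invRev b).take ((w.norm + 1) / 2) := by
    rw [invRev_append, List.take_append_of_le_length]
    rw [invRev_length]
    lia
  rw [halfNum, halfNum, hnorm, toWord_inv, toWord_inv, hv, hw, htail, htail, List.take_append,
    List.take_append, List.take_of_length_le (l := p) (by lia),
    List.take_of_length_le (l := q) (by lia), hpq]
  exact Nat.add_lt_add_right (wordNum_append_lt _ hlt) _

/-- The length of a word, with ties broken by `halfNum`. It does not change under inversion, and
families which are minimal for it are Nielsen reduced. -/
def weight (w : FreeGroup (Fin n)) : ℕ ×ₗ ℕ := toLex (w.norm, halfNum w)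

lemma weight_inv (w : FreeGroup (Fin n)) : weight w⁻¹ = weight w := by
  simp [weight, halfNum_inv]

lemma norm_le_of_weight_le {x y : FreeGroup (Fin n)} (h : weight x ≤ weight y) :
    x.norm ≤ y.norm :=
  (Prod.Lex.toLex_le_toLex.1 h).elim le_of_lt fun h => h.1.le

lemma weight_mul_lt {v w : FreeGroup (Fin n)} {c : ℕ} (hv : v.norm = 2 * c)
    (hc : gromovProd v⁻¹ w = c) (hw : 2 * c ≤ w.norm)
    (hlt : wordNum (v.toWord.take c) < wordNum (v⁻¹.toWord.take c)) :
    weight (v * w) < weight w := by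
  have hnorm : (v * w).norm = w.norm := by
    have := norm_mul_add_gromovProd v w
    lia
  have hvw := toWord_mul_eq_take_append_drop v w
  have hinv := take_gromovProd v⁻¹ w
  rw [hc] at hvw hinv
  rw [show v.norm - c = c by lia] at hvw
  rw [hinv] at hlt
  refine Prod.Lex.toLex_lt_toLex.2 (Or.inr ⟨hnorm, ?_⟩)
  refine halfNum_lt_of_append hvw (List.take_append_drop c w.toWord).symm ?_ ?_ hlt <;>
    simp only [FreeGroup.norm, List.length_take, List.length_drop] at * <;> lia

lemma two_mul_gromovProd_le_right {u v : FreeGroup (Fin n)} (h : weight u ≤ weight (u * v)) :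
    2 * gromovProd u⁻¹ v ≤ v.norm := by
  have := norm_le_of_weight_le h
  have := norm_mul_add_gromovProd u v
  lia

lemma two_mul_gromovProd_le_left {u v : FreeGroup (Fin n)} (h : weight v ≤ weight (u * v)) :
    2 * gromovProd u⁻¹ v ≤ u.norm := by
  have := norm_le_of_weight_le h
  have := norm_mul_add_gromovProd u v
  lia

-- If both neighbours cancel exactly half of `v`, one of the halves of `v` has the smaller value,
-- and multiplying one of the neighbours by `v` replaces the larger half by the smaller one.
lemma gromovProd_add_lt_of_weight_le {u v w : FreeGroup (Fin n)} (hv : v ≠ 1)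
    (hu : weight u ≤ weight (u * v)) (huv : weight v ≤ weight (u * v))
    (hvw : weight v ≤ weight (v * w)) (hw : weight w ≤ weight (v * w)) :
    gromovProd u⁻¹ v + gromovProd v⁻¹ w < v.norm := by
  have hu_v := two_mul_gromovProd_le_right hu
  have hu_u := two_mul_gromovProd_le_left huv
  have hw_w := two_mul_gromovProd_le_right hvw
  have hw_v := two_mul_gromovProd_le_left hw
  by_contra! hle
  obtain ⟨c, hc⟩ : ∃ c, v.norm = 2 * c := ⟨gromovProd v⁻¹ w, by lia⟩
  rcases lt_trichotomy (wordNum (v.toWord.take c)) (wordNum (v⁻¹.toWord.take c)) with h | h | h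
  · exact hw.not_gt (weight_mul_lt hc (by lia) (by lia) h)
  · have hlen : v.toWord.length = v⁻¹.toWord.length := norm_inv_eq.symm
    have heq := eq_of_wordNum_eq (by rw [List.length_take, List.length_take, hlen]) h
    have hself := two_mul_gromovProd_inv_self_lt hv
    have : c ≤ gromovProd v⁻¹ v :=
      (le_gromovProd_iff _ _ _).2 ⟨by rw [norm_inv_eq]; lia, by lia, heq.symm⟩
    lia
  · refine hu.not_gt ?_
    rw [← weight_inv (u * v), ← weight_inv u, _root_.mul_inv_rev]
    exact weight_mul_lt (by rwa [norm_inv_eq]) (by rw [inv_inv, gromovProd_comm]; lia)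
      (by rw [norm_inv_eq]; lia) (by rwa [inv_inv])

lemma nielsenReduced_of_weight_le {β : Type*} {U : β → FreeGroup (Fin n)}
    (hU : ∀ s, letterVal U s ≠ 1)
    (hmin : ∀ s t : β × Bool, s.1 ≠ t.1 →
      weight (letterVal U s) ≤ weight (letterVal U s * letterVal U t)) : NielsenReduced U := by
  have hmin' (s t : β × Bool) (hst : s.1 ≠ t.1) :
      weight (letterVal U t) ≤ weight (letterVal U s * letterVal U t) := by
    have := hmin (t.1, !t.2) (s.1, !s.2) hst.symm
    rwa [letterVal_not, letterVal_not, ← _root_.mul_inv_rev, weight_inv, weight_inv] at this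
  have hself (s : β × Bool) := two_mul_gromovProd_inv_self_lt (hU s)
  have hhalf (s t : β × Bool) (hst : NonCancel s t) :
      2 * gromovProd (letterVal U s)⁻¹ (letterVal U t) ≤ (letterVal U t).norm ∧
        2 * gromovProd (letterVal U s)⁻¹ (letterVal U t) ≤ (letterVal U s).norm := by
    by_cases h : s.1 = t.1
    · obtain rfl : s = t := Prod.ext h (hst h)
      exact ⟨(hself s).le, (hself s).le⟩
    · exact ⟨two_mul_gromovProd_le_right (hmin s t h), two_mul_gromovProd_le_left (hmin' s t h)⟩
  refine ⟨hU, fun s t hst => (hhalf s t hst).1, fun r s t hrs hst => ?_⟩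
  have hr := (hhalf r s hrs).1
  have ht := (hhalf s t hst).2
  by_cases hrs' : r.1 = s.1
  · obtain rfl : r = s := Prod.ext hrs' (hrs hrs')
    have := hself r
    lia
  by_cases hst' : s.1 = t.1
  · obtain rfl : s = t := Prod.ext hst' (hst hst')
    have := hself s
    lia
  exact gromovProd_add_lt_of_weight_le (hU s) (hmin r s hrs') (hmin' r s hrs') (hmin s t hst')
    (hmin' s t hst')

end Weight

section ElementaryAutomorphisms

variable {n : ℕ}

lemma FrAut.ext_of {f g : FrAut n} (h : ∀ i, f (FreeGroup.of i) = g (FreeGroup.of i)) : f = g :=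
  MulEquiv.toMonoidHom_injective (FreeGroup.ext_hom _ _ h)

lemma FrAut.inv_apply_eq {f : FrAut n} {x y : FreeGroup (Fin n)} : f⁻¹ x = y ↔ x = f y :=
  f.symm_apply_eq

/-- An automorphism given by the images of the generators under it and under its inverse. -/
def autOf (u v : Fin n → FreeGroup (Fin n)) (huv : ∀ i, lift v (u i) = FreeGroup.of i)
    (hvu : ∀ i, lift u (v i) = FreeGroup.of i) : FrAut n :=
  MonoidHom.toMulEquiv (lift u) (lift v) (FreeGroup.ext_hom _ _ (by simpa using huv))
    (FreeGroup.ext_hom _ _ (by simpa using hvu))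

@[simp] lemma autOf_of (u v : Fin n → FreeGroup (Fin n)) (huv hvu) (i : Fin n) :
    autOf u v huv hvu (FreeGroup.of i) = u i :=
  lift_apply_of

lemma lift_update_letterVal {i : Fin n} {t : Fin n × Bool} (h : t.1 ≠ i)
    (a : FreeGroup (Fin n)) :
    lift (Function.update FreeGroup.of i a) (letterVal FreeGroup.of t) =
      letterVal FreeGroup.of t := by
  rcases t with ⟨j, _ | _⟩ <;> simp_all [letterVal]

lemma map_letterVal (f : FrAut n) (t : Fin n × Bool) :
    f (letterVal FreeGroup.of t) = letterVal (fun i => f (FreeGroup.of i)) t := by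
  rcases t with ⟨j, _ | _⟩ <;> simp [letterVal]

lemma letterVal_of_ne_one (t : Fin n × Bool) :
    letterVal (FreeGroup.of : Fin n → FreeGroup (Fin n)) t ≠ 1 := by
  rcases t with ⟨j, _ | _⟩ <;> simp [letterVal, of_ne_one]

lemma lift_update_mul_letterVal_not {i : Fin n} {t : Fin n × Bool} (h : t.1 ≠ i) (k : Fin n) :
    lift (Function.update FreeGroup.of i (FreeGroup.of i * letterVal FreeGroup.of (t.1, !t.2)))
      (Function.update FreeGroup.of i (FreeGroup.of i * letterVal FreeGroup.of t) k) =
        FreeGroup.of k := by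
  rcases eq_or_ne k i with rfl | hk
  · simp [lift_update_letterVal h, letterVal_not]
  · simp [hk]

/-- The automorphism `x_i ↦ x_i t` fixing the other generators, for a signed letter `t`. -/
def rightTransvection (i : Fin n) (t : Fin n × Bool) (h : t.1 ≠ i) : FrAut n :=
  autOf (Function.update FreeGroup.of i (FreeGroup.of i * letterVal FreeGroup.of t))
    (Function.update FreeGroup.of i (FreeGroup.of i * letterVal FreeGroup.of (t.1, !t.2)))
    (lift_update_mul_letterVal_not h)
    (by simpa using lift_update_mul_letterVal_not (t := (t.1, !t.2)) h)

lemma rightTransvection_self (i : Fin n) (t : Fin n × Bool) (h : t.1 ≠ i) :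
    rightTransvection i t h (FreeGroup.of i) = FreeGroup.of i * letterVal FreeGroup.of t := by
  simp [rightTransvection]

lemma rightTransvection_of_ne (i : Fin n) (t : Fin n × Bool) (h : t.1 ≠ i) {k : Fin n}
    (hk : k ≠ i) : rightTransvection i t h (FreeGroup.of k) = FreeGroup.of k := by
  simp [rightTransvection, hk]

lemma lift_update_inv (i k : Fin n) :
    lift (Function.update FreeGroup.of i (FreeGroup.of i)⁻¹)
      (Function.update FreeGroup.of i (FreeGroup.of i)⁻¹ k) = FreeGroup.of k := by
  rcases eq_or_ne k i with rfl | hk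
  · simp
  · simp [hk]

/-- The automorphism `x_i ↦ x_i⁻¹` fixing the other generators. -/
def inversion (i : Fin n) : FrAut n :=
  autOf (Function.update FreeGroup.of i (FreeGroup.of i)⁻¹)
    (Function.update FreeGroup.of i (FreeGroup.of i)⁻¹) (lift_update_inv i) (lift_update_inv i)

lemma inversion_self (i : Fin n) : inversion i (FreeGroup.of i) = (FreeGroup.of i)⁻¹ := by
  simp [inversion]

lemma inversion_of_ne {i k : Fin n} (hk : k ≠ i) :
    inversion i (FreeGroup.of k) = FreeGroup.of k := by
  simp [inversion, hk]

lemma inversion_mul_self (i : Fin n) : inversion i * inversion i = 1 := by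
  refine FrAut.ext_of fun k => ?_
  rcases eq_or_ne k i with rfl | hk
  · simp [inversion_self]
  · simp [inversion_of_ne hk]

lemma inversion_inv (i : Fin n) : (inversion i)⁻¹ = inversion i :=
  inv_eq_of_mul_eq_one_left (inversion_mul_self i)

lemma inversion_letterVal {i : Fin n} {t : Fin n × Bool} (h : t.1 ≠ i) :
    inversion i (letterVal FreeGroup.of t) = letterVal FreeGroup.of t := by
  rcases t with ⟨j, _ | _⟩ <;> simp [letterVal, inversion_of_ne h]

lemma mat_inversion (i : Fin n) :
    mat (inversion i) = Matrix.diagonal (Function.update 1 i (-1)) := by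
  ext a b
  rcases eq_or_ne b i with rfl | hb <;> rcases eq_or_ne a b with rfl | hab <;>
    simp_all [mat, expSum, inversion_self, inversion_of_ne, Ne.symm]

lemma detρ_inversion (i : Fin n) : detρ n (inversion i) = -1 := by
  refine Units.ext ?_
  change (mat (inversion i)).det = -1
  simp [mat_inversion, Matrix.det_diagonal, Finset.prod_update_of_mem]

/-- The automorphism `x_i ↦ t x_i` fixing the other generators, for a signed letter `t`. -/
def leftTransvection (i : Fin n) (t : Fin n × Bool) (h : t.1 ≠ i) : FrAut n :=
  inversion i * rightTransvection i (t.1, !t.2) h * (inversion i)⁻¹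

lemma leftTransvection_self (i : Fin n) (t : Fin n × Bool) (h : t.1 ≠ i) :
    leftTransvection i t h (FreeGroup.of i) = letterVal FreeGroup.of t * FreeGroup.of i := by
  simp [leftTransvection, inversion_inv, inversion_self, rightTransvection_self, letterVal_not,
    inversion_letterVal h]

lemma leftTransvection_of_ne (i : Fin n) (t : Fin n × Bool) (h : t.1 ≠ i) {k : Fin n}
    (hk : k ≠ i) : leftTransvection i t h (FreeGroup.of k) = FreeGroup.of k := by
  simp [leftTransvection, inversion_inv, inversion_of_ne hk, rightTransvection_of_ne _ _ _ hk]

/-- The automorphisms permuting the generators. -/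
def permAut : Equiv.Perm (Fin n) →* FrAut n where
  toFun σ := freeGroupCongr σ
  map_one' := FrAut.ext_of (by simp)
  map_mul' σ τ := FrAut.ext_of (by simp)

@[simp] lemma permAut_of (σ : Equiv.Perm (Fin n)) (i : Fin n) :
    permAut σ (FreeGroup.of i) = FreeGroup.of (σ i) := by
  simp [permAut]

lemma exists_permAut_eq {φ : FrAut n} (h : ∀ j, ∃ i, φ (FreeGroup.of j) = FreeGroup.of i) :
    ∃ σ : Equiv.Perm (Fin n), φ = permAut σ := by
  choose π hπ using h
  have hinj : Function.Injective π := fun a b hab =>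
    of_injective (φ.injective (by rw [hπ, hπ, hab]))
  exact ⟨Equiv.ofBijective π (Finite.injective_iff_bijective.1 hinj),
    FrAut.ext_of (by simp [hπ])⟩

lemma permAut_mul_rightTransvection_mul_inv (σ : Equiv.Perm (Fin n)) (i j : Fin n) (h : j ≠ i) :
    permAut σ * rightTransvection i (j, true) h * (permAut σ)⁻¹ =
      rightTransvection (σ i) (σ j, true) (σ.injective.ne h) := by
  rw [mul_inv_eq_iff_eq_mul]
  refine FrAut.ext_of fun k => ?_
  rcases eq_or_ne k i with rfl | hk
  · simp [rightTransvection_self, letterVal]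
  · simp [rightTransvection_of_ne _ _ _ hk, rightTransvection_of_ne _ _ _ (σ.injective.ne hk)]

lemma rightTransvection_false (i j : Fin n) (h : j ≠ i) :
    rightTransvection i (j, false) h = (rightTransvection i (j, true) h)⁻¹ := by
  rw [eq_inv_iff_mul_eq_one]
  refine FrAut.ext_of fun k => ?_
  rcases eq_or_ne k i with rfl | hk
  · simp [rightTransvection_self, letterVal, rightTransvection_of_ne _ _ _ h]
  · simp [rightTransvection_of_ne _ _ _ hk]

-- The right-hand side is a lift of the factorization of `!![0, -1; 1, 0]` into elementary matrices.
lemma permAut_swap_mul_inversion {i j : Fin n} (h : i ≠ j) :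
    permAut (Equiv.swap i j) * inversion j =
      rightTransvection i (j, true) h.symm * leftTransvection j (i, false) h *
        rightTransvection i (j, true) h.symm * leftTransvection j (i, true) h *
          rightTransvection j (i, false) h := by
  refine FrAut.ext_of fun k => ?_
  rcases eq_or_ne k i with rfl | hi
  · simp [inversion_of_ne h, rightTransvection_self, rightTransvection_of_ne _ _ _ h,
      leftTransvection_of_ne _ _ _ h, letterVal, leftTransvection_self,
      rightTransvection_of_ne _ _ _ h.symm]
  rcases eq_or_ne k j with rfl | hj
  · simp [inversion_self, rightTransvection_self, leftTransvection_of_ne _ _ _ h, letterVal,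
      leftTransvection_self, rightTransvection_of_ne _ _ _ hi, mul_assoc]
  · simp [inversion_of_ne hj, rightTransvection_of_ne _ _ _ hi, rightTransvection_of_ne _ _ _ hj,
      leftTransvection_of_ne _ _ _ hj, Equiv.swap_apply_of_ne_of_ne hi hj]

lemma inversion_mul_inversion {i j : Fin n} (h : i ≠ j) :
    inversion i * inversion j = (permAut (Equiv.swap i j) * inversion j) ^ 2 := by
  rw [pow_two]
  refine FrAut.ext_of fun k => ?_
  rcases eq_or_ne k i with rfl | hi
  · simp [inversion_of_ne h, inversion_self]
  rcases eq_or_ne k j with rfl | hj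
  · simp [inversion_of_ne hi, inversion_self, inversion_of_ne h]
  · simp [inversion_of_ne hj, inversion_of_ne hi, Equiv.swap_apply_of_ne_of_ne hi hj]

end ElementaryAutomorphisms

section NielsenGeneration

variable {n : ℕ}

/-- The subgroup contains all right transvections by signed letters. -/
def ContainsTransvections (N : Subgroup (FrAut n)) : Prop :=
  ∀ (i : Fin n) (t : Fin n × Bool) (h : t.1 ≠ i), rightTransvection i t h ∈ N

lemma exists_perm_apply_apply {α : Type*} {i j k l : α} (hij : i ≠ j) (hkl : k ≠ l) :
    ∃ σ : Equiv.Perm α, σ i = k ∧ σ j = l := by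
  classical
  refine ⟨Equiv.swap (Equiv.swap i k j) l * Equiv.swap i k, ?_, by simp⟩
  rw [Equiv.Perm.mul_apply, Equiv.swap_apply_left]
  refine Equiv.swap_apply_of_ne_of_ne (fun h => hij ?_) hkl
  exact (Equiv.swap i k).injective ((Equiv.swap_apply_left i k).trans h)

lemma exists_mul_weight_le (N : Subgroup (FrAut n)) (ψ : FrAut n) :
    ∃ g ∈ N, ∀ h ∈ N, ∀ i, (∀ k, k ≠ i → h (FreeGroup.of k) = FreeGroup.of k) →
      weight ((ψ * g) (FreeGroup.of i)) ≤ weight ((ψ * g) (h (FreeGroup.of i))) := by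
  obtain ⟨g, hg⟩ : ∃ g : N, ∀ h : N,
      ¬∑ k, weight ((ψ * h) (FreeGroup.of k)) < ∑ k, weight ((ψ * g) (FreeGroup.of k)) :=
    ⟨_, Function.not_lt_argmin fun g : N => ∑ k, weight ((ψ * g) (FreeGroup.of k))⟩
  refine ⟨g, g.2, fun h hh i hfix => le_of_not_gt fun hlt => hg ⟨g * h, N.mul_mem g.2 hh⟩ ?_⟩
  refine Finset.sum_lt_sum (fun k _ => ?_) ⟨i, Finset.mem_univ _, hlt⟩
  rcases eq_or_ne k i with rfl | hki
  · exact hlt.le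
  · simp [hfix k hki]

variable {N : Subgroup (FrAut n)} [hN : N.Normal]

lemma containsTransvections_of_mem {i j : Fin n} (h : j ≠ i)
    (hmem : rightTransvection i (j, true) h ∈ N) : ContainsTransvections N := by
  have hpos (k l : Fin n) (hlk : l ≠ k) : rightTransvection k (l, true) hlk ∈ N := by
    obtain ⟨σ, rfl, rfl⟩ := exists_perm_apply_apply h hlk
    exact permAut_mul_rightTransvection_mul_inv σ i j h ▸ hN.conj_mem _ hmem _
  rintro k ⟨l, _ | _⟩ hlk
  · exact rightTransvection_false k l hlk ▸ N.inv_mem (hpos k l hlk)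
  · exact hpos k l hlk

namespace ContainsTransvections

lemma leftTransvection_mem (hN' : ContainsTransvections N) (i : Fin n) (t : Fin n × Bool)
    (h : t.1 ≠ i) : leftTransvection i t h ∈ N :=
  hN.conj_mem _ (hN' _ _ _) _

lemma permAut_swap_mul_inversion_mem (hN' : ContainsTransvections N) {i j : Fin n} (h : i ≠ j) :
    permAut (Equiv.swap i j) * inversion j ∈ N := by
  rw [permAut_swap_mul_inversion h]
  exact N.mul_mem (N.mul_mem (N.mul_mem (N.mul_mem (hN' _ _ _) (hN'.leftTransvection_mem _ _ _))
    (hN' _ _ _)) (hN'.leftTransvection_mem _ _ _)) (hN' _ _ _)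

lemma inversion_mul_inversion_mem (hN' : ContainsTransvections N) {i j : Fin n} (h : i ≠ j) :
    inversion i * inversion j ∈ N :=
  inversion_mul_inversion h ▸ N.pow_mem (hN'.permAut_swap_mul_inversion_mem h) 2

lemma inversion_mem_sup (hN' : ContainsTransvections N) (i₀ i : Fin n) :
    inversion i ∈ N ⊔ Subgroup.zpowers (inversion i₀) := by
  have hi₀ := Subgroup.mem_sup_right (S := N) (Subgroup.mem_zpowers (inversion i₀))
  rcases eq_or_ne i i₀ with rfl | h
  · exact hi₀
  · exact (Subgroup.mul_mem_cancel_right _ hi₀).1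
      (Subgroup.mem_sup_left (hN'.inversion_mul_inversion_mem h))

lemma permAut_mem_sup (hN' : ContainsTransvections N) (i₀ : Fin n) (σ : Equiv.Perm (Fin n)) :
    permAut σ ∈ N ⊔ Subgroup.zpowers (inversion i₀) := by
  induction σ using Equiv.Perm.swap_induction_on with
  | one => exact _root_.map_one (permAut (n := n)) ▸ Subgroup.one_mem _
  | swap_mul σ i j hij ih =>
    rw [_root_.map_mul]
    refine Subgroup.mul_mem _ ?_ ih
    exact (Subgroup.mul_mem_cancel_right _ (hN'.inversion_mem_sup i₀ j)).1
      (Subgroup.mem_sup_left (hN'.permAut_swap_mul_inversion_mem hij))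

lemma signedPerm_mem_sup (hN' : ContainsTransvections N) (i₀ : Fin n) (s : Finset (Fin n))
    (φ : FrAut n) (hs : ∀ j ∈ s, ∃ t, φ (FreeGroup.of j) = letterVal FreeGroup.of t)
    (hsc : ∀ j ∉ s, ∃ i, φ (FreeGroup.of j) = FreeGroup.of i) :
    φ ∈ N ⊔ Subgroup.zpowers (inversion i₀) := by
  induction s using Finset.induction_on generalizing φ with
  | empty =>
    obtain ⟨σ, rfl⟩ := exists_permAut_eq fun j => hsc j (Finset.notMem_empty j)
    exact hN'.permAut_mem_sup i₀ σ
  | insert a s ha ih =>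
    rw [Finset.forall_mem_insert] at hs
    obtain ⟨⟨⟨i, b⟩, hb⟩, hs⟩ := hs
    cases b with
    | true =>
      refine ih φ hs fun j hj => ?_
      rcases eq_or_ne j a with rfl | hja
      · exact ⟨i, hb⟩
      · exact hsc j (by simp [hja, hj])
    | false =>
      refine (Subgroup.mul_mem_cancel_right _ (hN'.inversion_mem_sup i₀ a)).1 <|
        ih _ (fun j hj => ?_) (fun j hj => ?_)
      · rw [MulAut.mul_apply, inversion_of_ne (ne_of_mem_of_not_mem hj ha)]
        exact hs j hj
      · rcases eq_or_ne j a with rfl | hja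
        · exact ⟨i, by simp [inversion_self, hb, letterVal]⟩
        · rw [MulAut.mul_apply, inversion_of_ne hja]
          exact hsc j (by simp [hja, hj])

lemma exists_mul_nielsenReduced (hN' : ContainsTransvections N) (ψ : FrAut n) :
    ∃ g ∈ N, NielsenReduced fun i => (ψ * g) (FreeGroup.of i) := by
  obtain ⟨g, hg, hmin⟩ := exists_mul_weight_le N ψ
  refine ⟨g, hg, nielsenReduced_of_weight_le (fun s => ?_) ?_⟩
  · rw [← map_letterVal, Ne, map_eq_one_iff _ (ψ * g).injective]
    exact letterVal_of_ne_one s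
  · rintro ⟨i, _ | _⟩ t hst
    · have := hmin _ (hN'.leftTransvection_mem i (t.1, !t.2) hst.symm) i fun k =>
        leftTransvection_of_ne _ _ _
      rwa [leftTransvection_self, _root_.map_mul, map_letterVal, letterVal_not, ← weight_inv,
        ← weight_inv (_ * _), _root_.mul_inv_rev, inv_inv] at this
    · have := hmin _ (hN' i t hst.symm) i fun k => rightTransvection_of_ne _ _ _
      rwa [rightTransvection_self, _root_.map_mul, map_letterVal] at this

end ContainsTransvections

lemma NielsenReduced.exists_inv_apply_eq_letterVal {φ : FrAut n}
    (hφ : NielsenReduced fun i => φ (FreeGroup.of i)) (j : Fin n) :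
    ∃ t, φ⁻¹ (FreeGroup.of j) = letterVal FreeGroup.of t := by
  have hlift : lift (fun i => φ (FreeGroup.of i)) = φ.toMonoidHom := FreeGroup.ext_hom _ _ (by simp)
  have hle := hφ.length_le_norm (φ⁻¹ (FreeGroup.of j)).toWord isReduced_toWord
  rw [mk_toWord, hlift, MulEquiv.toMonoidHom_eq_coe, MonoidHom.coe_coe, MulAut.apply_inv_self,
    norm_of] at hle
  have hne : (φ⁻¹ (FreeGroup.of j)).toWord ≠ [] := by
    rw [Ne, toWord_eq_nil_iff, map_eq_one_iff _ φ⁻¹.injective]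
    exact of_ne_one j
  obtain ⟨t, ht⟩ := List.length_eq_one_iff.1 (le_antisymm hle (List.length_pos_iff.2 hne))
  refine ⟨t, ?_⟩
  rw [← mk_toWord (x := φ⁻¹ (FreeGroup.of j)), ht, ← lift_of_apply (FreeGroup.mk [t]), lift_mk_cons,
    ← one_eq_mk, _root_.map_one, mul_one]

lemma ContainsTransvections.sup_zpowers_inversion (hN' : ContainsTransvections N) (i : Fin n) :
    N ⊔ Subgroup.zpowers (inversion i) = ⊤ := by
  refine (Subgroup.eq_top_iff' _).2 fun ψ => ?_
  obtain ⟨g, hg, hred⟩ := hN'.exists_mul_nielsenReduced ψ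
  have hφ := hN'.signedPerm_mem_sup i Finset.univ (ψ * g)⁻¹
    (fun j _ => hred.exists_inv_apply_eq_letterVal j) (by simp)
  exact (Subgroup.mul_mem_cancel_right _ (Subgroup.mem_sup_left hg)).1 (inv_mem_iff.1 hφ)

lemma ker_le_of_sup_zpowers_eq_top {G H : Type*} [Group G] [Group H] {φ : G →* H}
    {N : Subgroup G} [N.Normal] {x : G} (hN : N ≤ φ.ker) (hx : x ^ 2 = 1) (hφx : φ x ≠ 1)
    (htop : N ⊔ Subgroup.zpowers x = ⊤) : φ.ker ≤ N := by
  intro g hg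
  obtain ⟨a, ha, b, hb, rfl⟩ :=
    Subgroup.mem_sup_of_normal_left.1 (htop ▸ Subgroup.mem_top g : g ∈ N ⊔ Subgroup.zpowers x)
  obtain ⟨k, rfl⟩ := Subgroup.mem_zpowers_iff.1 hb
  have hk : φ (x ^ k) = 1 := (φ.ker.mul_mem_cancel_left (hN ha)).1 hg
  obtain ⟨m, rfl | rfl⟩ := Int.even_or_odd' k
  · rwa [_root_.zpow_mul, zpow_ofNat, hx, _root_.one_zpow, mul_one]
  · rw [_root_.zpow_add, _root_.zpow_mul, zpow_ofNat, hx, _root_.one_zpow, one_mul, zpow_one] at hk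
    exact absurd hk hφx

theorem ContainsTransvections.sAut_le (hN' : ContainsTransvections N) (hle : N ≤ SAut n)
    [NeZero n] : SAut n ≤ N :=
  ker_le_of_sup_zpowers_eq_top hle ((pow_two _).trans (inversion_mul_self 0))
    (by rw [detρ_inversion]; decide) (hN'.sup_zpowers_inversion 0)

end NielsenGeneration

section Exchange

open scoped commutatorElement

variable {n : ℕ}

/-- The subgroup generated by all generators except `x_i`. -/
def omitGen (i : Fin n) : Subgroup (FreeGroup (Fin n)) :=
  Subgroup.closure (FreeGroup.of '' {i}ᶜ)

lemma of_mem_omitGen {i k : Fin n} (h : k ≠ i) : FreeGroup.of k ∈ omitGen i :=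
  Subgroup.subset_closure ⟨k, h, rfl⟩

lemma apply_eq_of_mem_omitGen {f : FrAut n} {i : Fin n}
    (h : ∀ k, k ≠ i → f (FreeGroup.of k) = FreeGroup.of k) {x : FreeGroup (Fin n)}
    (hx : x ∈ omitGen i) : f x = x :=
  MonoidHom.eqOn_closure (f := f.toMonoidHom) (g := MonoidHom.id _)
    (Set.forall_mem_image.2 h) hx

lemma commutatorElement_mem_of_commute_conj {G : Type*} [Group G] (N : Subgroup G) [N.Normal]
    {f τ ψ : G} (hf : f ∈ N) (h : Commute (f⁻¹ * τ * f) ψ) : ⁅τ, ψ⁆ ∈ N := by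
  have hf' : (f : G ⧸ N) = 1 := (QuotientGroup.eq_one_iff f).2 hf
  have := h.map (QuotientGroup.mk' N)
  rw [← QuotientGroup.eq_one_iff, ← QuotientGroup.mk'_apply, map_commutatorElement,
    commutatorElement_eq_one_iff_commute]
  simpa [hf'] using this

lemma commutatorElement_leftTransvection_rightTransvection {i j l : Fin n} (hij : j ≠ i)
    (hil : l ≠ i) (hjl : l ≠ j) :
    ⁅leftTransvection j (l, true) hjl, rightTransvection i (j, true) hij⁆ =
      rightTransvection i (l, true) hil := by
  rw [commutatorElement_def, mul_inv_eq_iff_eq_mul, mul_inv_eq_iff_eq_mul]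
  refine FrAut.ext_of fun k => ?_
  simp only [MulAut.mul_apply]
  rcases eq_or_ne k i with rfl | hki
  · simp [rightTransvection_self, leftTransvection_self, leftTransvection_of_ne _ _ _ hij.symm,
      rightTransvection_of_ne _ _ _ hij, letterVal, mul_assoc]
  rcases eq_or_ne k j with rfl | hkj
  · simp [rightTransvection_of_ne _ _ _ hki, leftTransvection_self, letterVal,
      rightTransvection_of_ne _ _ _ hil]
  · simp [rightTransvection_of_ne _ _ _ hki, leftTransvection_of_ne _ _ _ hkj]

lemma commute_rightTransvection {φ : FrAut n} {i j : Fin n} (hij : j ≠ i)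
    (hφ : ∀ k, k ≠ i → φ (FreeGroup.of k) = FreeGroup.of k) {x : FreeGroup (Fin n)}
    (hx : x ∈ omitGen i) (hφi : φ (FreeGroup.of i) = x * FreeGroup.of i) :
    Commute φ (rightTransvection i (j, true) hij) := by
  refine FrAut.ext_of fun k => ?_
  simp only [MulAut.mul_apply]
  rcases eq_or_ne k i with rfl | hki
  · have hψx := apply_eq_of_mem_omitGen (fun _ => rightTransvection_of_ne k (j, true) hij) hx
    simp [rightTransvection_self, hφi, hφ j hij, hψx, letterVal, mul_assoc]
  · simp [rightTransvection_of_ne _ _ _ hki, hφ k hki]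

-- With `τ : x_j ↦ x_l x_j` and `ψ : x_i ↦ x_i x_j`, the conjugate of `τ` by `f` is a left
-- multiplication of `x_i`, so it commutes with `ψ`; modulo `N` it agrees with `τ`.
lemma rightTransvection_mem_of_exchange (N : Subgroup (FrAut n)) [N.Normal] {f : FrAut n}
    (hf : f ∈ N) {i j l : Fin n} (hij : j ≠ i) (hil : l ≠ i) (hjl : l ≠ j)
    (hmap : (omitGen i).map f.toMonoidHom = omitGen j) {a b : FreeGroup (Fin n)}
    (ha : a ∈ omitGen j) (hb : b ∈ omitGen j)
    (hfi : f (FreeGroup.of i) = a * FreeGroup.of j * b) :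
    rightTransvection i (l, true) hil ∈ N := by
  rw [← commutatorElement_leftTransvection_rightTransvection hij hil hjl]
  refine commutatorElement_mem_of_commute_conj N hf ?_
  have hτ {x} (hx : x ∈ omitGen j) : leftTransvection j (l, true) hjl x = x :=
    apply_eq_of_mem_omitGen (fun _ => leftTransvection_of_ne _ _ _) hx
  obtain ⟨x, hx, hfx⟩ : a * FreeGroup.of l * a⁻¹ ∈ (omitGen i).map f.toMonoidHom :=
    hmap ▸ mul_mem (mul_mem ha (of_mem_omitGen hjl)) (inv_mem ha)
  replace hfx : f x = a * FreeGroup.of l * a⁻¹ := hfx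
  refine commute_rightTransvection hij (fun k hk => ?_) hx ?_
  · rw [MulAut.mul_apply, MulAut.mul_apply, FrAut.inv_apply_eq]
    exact hτ (hmap ▸ Subgroup.mem_map_of_mem _ (of_mem_omitGen hk))
  · rw [MulAut.mul_apply, MulAut.mul_apply, FrAut.inv_apply_eq]
    simp only [hfi, _root_.map_mul, hτ ha, hτ hb, hfx, leftTransvection_self, letterVal,
      cond_true]
    group

end Exchange

section ResiduallyTwo

/-- The parabolic matrix fixing `(i, 1)`, generating a cyclic group of matrices congruent to `1`
modulo `8`. -/
def parabolic (i : ℤ) : GL (Fin 2) ℤ where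
  val := !![1 + 8 * i, -8 * i * i; 8, 1 - 8 * i]
  inv := !![1 - 8 * i, 8 * i * i; -8, 1 + 8 * i]
  val_inv := by
    ext a b
    fin_cases a <;> fin_cases b <;> simp [Matrix.mul_apply, Fin.sum_univ_two] <;> ring
  inv_val := by
    ext a b
    fin_cases a <;> fin_cases b <;> simp [Matrix.mul_apply, Fin.sum_univ_two] <;> ring

/-- The action of invertible integral matrices on nonzero vectors. -/
local instance : MulAction (GL (Fin 2) ℤ) {v : Fin 2 → ℤ // v ≠ 0} where
  smul A v := ⟨A.1 *ᵥ v.1, fun h => v.2 (by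
    rw [← Matrix.one_mulVec v.1, ← A.inv_mul, ← Matrix.mulVec_mulVec, h, Matrix.mulVec_zero])⟩
  one_smul v := Subtype.ext (Matrix.one_mulVec v.1)
  mul_smul A B v := Subtype.ext (Matrix.mulVec_mulVec v.1 A.1 B.1).symm

lemma parabolic_smul (i : ℤ) (v : {v : Fin 2 → ℤ // v ≠ 0}) :
    (parabolic i • v).1 = v.1 + (8 * (v.1 0 - i * v.1 1)) • ![i, 1] := by
  change !![1 + 8 * i, -8 * i * i; 8, 1 - 8 * i] *ᵥ v.1 = _
  ext a
  fin_cases a <;> simp [Matrix.mulVec, dotProduct, Fin.sum_univ_two] <;> ring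

lemma parabolic_inv_smul (i : ℤ) (v : {v : Fin 2 → ℤ // v ≠ 0}) :
    ((parabolic i)⁻¹ • v).1 = v.1 - (8 * (v.1 0 - i * v.1 1)) • ![i, 1] := by
  change !![1 - 8 * i, 8 * i * i; -8, 1 + 8 * i] *ᵥ v.1 = _
  ext a
  fin_cases a <;> simp [Matrix.mulVec, dotProduct, Fin.sum_univ_two] <;> ring

lemma eq_of_two_mul_abs_sub_lt {i j a b : ℤ} (hi : 2 * |a - i * b| < |b|)
    (hj : 2 * |a - j * b| < |b|) : i = j := by
  have hle : |i - j| * |b| ≤ |a - j * b| + |a - i * b| := by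
    rw [← abs_mul, show (i - j) * b = (a - j * b) - (a - i * b) by ring]
    exact abs_sub _ _
  have hlt : |i - j| < 1 := by
    by_contra! h
    nlinarith [abs_nonneg b]
  exact sub_eq_zero.1 (Int.abs_lt_one_iff.1 hlt)

/-- The nonzero vectors close to the line through `(i, 1)`. -/
def nearLine (i : ℤ) : Set {v : Fin 2 → ℤ // v ≠ 0} := {v | 2 * |v.1 0 - i * v.1 1| < |v.1 1|}

/-- The attracting side of `nearLine i` for `parabolic i`. -/
def attractingSide (i : ℤ) : Set {v : Fin 2 → ℤ // v ≠ 0} :=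
  {v ∈ nearLine i | 0 ≤ v.1 1 * (v.1 0 - i * v.1 1)}

/-- The repelling side of `nearLine i` for `parabolic i`. -/
def repellingSide (i : ℤ) : Set {v : Fin 2 → ℤ // v ≠ 0} :=
  {v ∈ nearLine i | v.1 1 * (v.1 0 - i * v.1 1) < 0}

lemma disjoint_nearLine {i j : ℤ} (hij : i ≠ j) : Disjoint (nearLine i) (nearLine j) :=
  Set.disjoint_left.2 fun _ hi hj => hij (eq_of_two_mul_abs_sub_lt hi hj)

lemma apply_one_ne_zero_of_sub_eq_zero {i : ℤ} (v : {v : Fin 2 → ℤ // v ≠ 0})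
    (h : v.1 0 - i * v.1 1 = 0) : v.1 1 ≠ 0 := fun h1 => v.2 <| by
  ext a
  fin_cases a
  · simpa [h1] using h
  · exact h1

lemma attracted_of_not_repelled {b t : ℤ} (hbt : t = 0 → b ≠ 0)
    (h : 2 * |t| < |b| → 0 ≤ b * t) :
    2 * |t| < |b + 8 * t| ∧ 0 ≤ (b + 8 * t) * t := by
  rcases lt_trichotomy t 0 with ht | rfl | ht
  · have hb : b ≤ -2 * t := by
      by_contra! hc
      have := h (by rw [abs_of_neg ht, abs_of_pos (by linarith)]; linarith)
      nlinarith
    rw [abs_of_neg ht, abs_of_neg (by linarith)]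
    exact ⟨by linarith, by nlinarith⟩
  · simpa using hbt rfl
  · have hb : -2 * t ≤ b := by
      by_contra! hc
      have := h (by rw [abs_of_pos ht, abs_of_neg (by linarith)]; linarith)
      nlinarith
    rw [abs_of_pos ht, abs_of_pos (by linarith)]
    exact ⟨by linarith, by nlinarith⟩

lemma repelled_of_not_attracted {b t : ℤ} (hbt : t = 0 → b ≠ 0)
    (h : 2 * |t| < |b| → b * t < 0) :
    2 * |t| < |b - 8 * t| ∧ (b - 8 * t) * t < 0 := by
  rcases lt_trichotomy t 0 with ht | rfl | ht
  · have hb : 2 * t ≤ b := by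
      by_contra! hc
      have := h (by rw [abs_of_neg ht, abs_of_neg (by linarith)]; linarith)
      nlinarith
    rw [abs_of_neg ht, abs_of_pos (by linarith)]
    exact ⟨by linarith, by nlinarith⟩
  · simpa using h (by simpa using hbt rfl)
  · have hb : b ≤ 2 * t := by
      by_contra! hc
      have := h (by rw [abs_of_pos ht, abs_of_pos (by linarith)]; linarith)
      nlinarith
    rw [abs_of_pos ht, abs_of_neg (by linarith)]
    exact ⟨by linarith, by nlinarith⟩

open scoped Pointwise in
lemma parabolic_smul_compl_repellingSide_subset (i : ℤ) :
    parabolic i • (repellingSide i)ᶜ ⊆ attractingSide i := by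
  rintro _ ⟨v, hv, rfl⟩
  have hv' : 2 * |v.1 0 - i * v.1 1| < |v.1 1| → 0 ≤ v.1 1 * (v.1 0 - i * v.1 1) :=
    fun h => not_lt.1 fun h' => hv ⟨h, h'⟩
  have h := attracted_of_not_repelled (apply_one_ne_zero_of_sub_eq_zero v) hv'
  have hw : (parabolic i • v).1 0 - i * (parabolic i • v).1 1 = v.1 0 - i * v.1 1 := by
    simp [parabolic_smul]; ring
  have hw1 : (parabolic i • v).1 1 = v.1 1 + 8 * (v.1 0 - i * v.1 1) := by simp [parabolic_smul]
  rwa [← hw1, ← hw] at h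

open scoped Pointwise in
lemma parabolic_inv_smul_compl_attractingSide_subset (i : ℤ) :
    (parabolic i)⁻¹ • (attractingSide i)ᶜ ⊆ repellingSide i := by
  rintro _ ⟨v, hv, rfl⟩
  have hv' : 2 * |v.1 0 - i * v.1 1| < |v.1 1| → v.1 1 * (v.1 0 - i * v.1 1) < 0 :=
    fun h => not_le.1 fun h' => hv ⟨h, h'⟩
  have h := repelled_of_not_attracted (apply_one_ne_zero_of_sub_eq_zero v) hv'
  have hw : ((parabolic i)⁻¹ • v).1 0 - i * ((parabolic i)⁻¹ • v).1 1 = v.1 0 - i * v.1 1 := by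
    simp [parabolic_inv_smul]; ring
  have hw1 : ((parabolic i)⁻¹ • v).1 1 = v.1 1 - 8 * (v.1 0 - i * v.1 1) := by
    simp [parabolic_inv_smul]
  rwa [← hw1, ← hw] at h

theorem lift_parabolic_injective : Function.Injective (lift parabolic) := by
  refine FreeGroup.injective_lift_of_ping_pong _ attractingSide repellingSide (fun i => ?_)
    (fun i j hij => ?_) (fun i j hij => ?_) (fun i j => ?_)
    parabolic_smul_compl_repellingSide_subset parabolic_inv_smul_compl_attractingSide_subset
  · exact ⟨⟨![i, 1], fun h => by simpa using congrFun h 1⟩, by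
      simp [attractingSide, nearLine]⟩
  · exact (disjoint_nearLine hij).mono (Set.sep_subset _ _) (Set.sep_subset _ _)
  · exact (disjoint_nearLine hij).mono (Set.sep_subset _ _) (Set.sep_subset _ _)
  · rcases eq_or_ne i j with rfl | hij
    · exact Set.disjoint_left.2 fun v hX hY => hX.2.not_gt hY.2
    · exact (disjoint_nearLine hij).mono (Set.sep_subset _ _) (Set.sep_subset _ _)

lemma natCast_pow_dvd_one_add_mul_pow_sub_one {R : Type*} [Ring R] (p k : ℕ) (B : R) :
    (p : R) ^ (k + 1) ∣ (1 + p * B) ^ p ^ k - 1 := by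
  have h : (p : Polynomial ℤ) ^ (k + 1) ∣
      (1 + (p : Polynomial ℤ) * Polynomial.X) ^ p ^ k - 1 ^ p ^ k :=
    dvd_sub_pow_of_dvd_sub (by simp) k
  simpa using map_dvd (Polynomial.aeval B) h

lemma redGL_eq_one_iff {n ℓ : ℕ} {A : GL (Fin n) ℤ} :
    redGL n ℓ A = 1 ↔ ∀ i j, (ℓ : ℤ) ∣ A.1 i j - (1 : Matrix (Fin n) (Fin n) ℤ) i j := by
  rw [Units.ext_iff, ← Matrix.ext_iff]
  refine forall₂_congr fun i j => ?_
  rw [← ZMod.intCast_zmod_eq_zero_iff_dvd, Int.cast_sub, sub_eq_zero]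
  have h : (((1 : Matrix (Fin n) (Fin n) ℤ) i j : ℤ) : ZMod ℓ) =
      (1 : Matrix (Fin n) (Fin n) (ZMod ℓ)) i j := by
    rw [Matrix.one_apply, Matrix.one_apply]
    split_ifs <;> simp
  rw [h]
  rfl

lemma isPGroup_map_GGamma (n p k : ℕ) : IsPGroup p ((GGamma n p).map (redGL n (p ^ k))) := by
  rintro ⟨_, A, hA, rfl⟩
  choose B hB using redGL_eq_one_iff.1 hA
  have hAB : A.1 = 1 + p * Matrix.of B := by
    ext i j
    rw [Matrix.add_apply, ← nsmul_eq_mul, Matrix.smul_apply, nsmul_eq_mul, Matrix.of_apply, ← hB,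
      add_sub_cancel]
  refine ⟨k, Subtype.ext ?_⟩
  rw [SubmonoidClass.coe_pow, OneMemClass.coe_one, ← _root_.map_pow, redGL_eq_one_iff]
  intro i j
  obtain ⟨C, hC⟩ := natCast_pow_dvd_one_add_mul_pow_sub_one p k (Matrix.of B)
  rw [← Matrix.sub_apply, Units.val_pow_eq_pow_val, hAB, hC, pow_succ, mul_assoc, ← Nat.cast_pow,
    ← nsmul_eq_mul, Matrix.smul_apply, nsmul_eq_mul]
  exact dvd_mul_right _ _

lemma exists_redGL_pow_ne_one {n p : ℕ} (hp : 1 < p) {A : GL (Fin n) ℤ} (hA : A ≠ 1) :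
    ∃ k, redGL n (p ^ k) A ≠ 1 := by
  by_contra! h
  refine hA (Units.ext (Matrix.ext fun i j => sub_eq_zero.1 ?_))
  set d := A.1 i j - (1 : Matrix (Fin n) (Fin n) ℤ) i j
  refine Int.eq_zero_of_abs_lt_dvd (redGL_eq_one_iff.1 (h d.natAbs) i j) ?_
  rw [Int.abs_eq_natAbs]
  exact_mod_cast Nat.lt_pow_self hp

lemma lift_parabolic_mem_GGamma (g : FreeGroup ℤ) : lift parabolic g ∈ GGamma 2 2 := by
  refine FreeGroup.range_lift_le (Set.range_subset_iff.2 fun i => ?_) ⟨g, rfl⟩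
  refine redGL_eq_one_iff.2 fun a b => ?_
  fin_cases a <;> fin_cases b <;> simp [parabolic] <;> lia

theorem exists_isPGroup_two_hom_ne_one {α : Type*} [Countable α] {g : FreeGroup α} (hg : g ≠ 1) :
    ∃ (U : Type) (_ : Group U) (_ : Finite U) (φ : FreeGroup α →* U),
      IsPGroup 2 U ∧ φ g ≠ 1 := by
  obtain ⟨e, he⟩ := exists_injective_nat α
  let θ := (lift parabolic).comp (FreeGroup.map fun a => (e a : ℤ))
  have hθ : Function.Injective θ :=
    lift_parabolic_injective.comp (FreeGroup.map_injective (Nat.cast_injective.comp he))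
  obtain ⟨k, hk⟩ := exists_redGL_pow_ne_one one_lt_two ((map_ne_one_iff θ hθ).2 hg)
  have : NeZero (2 ^ k) := ⟨by positivity⟩
  exact ⟨(GGamma 2 2).map (redGL 2 (2 ^ k)), inferInstance, inferInstance,
    ((redGL 2 (2 ^ k)).comp θ).codRestrict _ fun x => ⟨_, lift_parabolic_mem_GGamma _, rfl⟩,
    isPGroup_map_GGamma 2 2 k, fun h => hk (congrArg Subtype.val h)⟩

end ResiduallyTwo

section KernelTorsion

open scoped Pointwise

lemma eq_top_of_sup_commutator_eq_top {P : Type*} [Group P] [Finite P] [Group.IsNilpotent P]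
    {H : Subgroup P} (h : H ⊔ commutator P = ⊤) : H = ⊤ := by
  rcases eq_top_or_exists_le_coatom H with hH | ⟨M, hM, hHM⟩
  · exact hH
  exfalso
  have : M.Normal := Subgroup.NormalizerCondition.normal_of_coatom M
    Group.normalizerCondition_of_isNilpotent hM
  have : Nontrivial (P ⧸ M) := QuotientGroup.nontrivial_iff.2 hM.1
  refine (Group.IsSolvable.commutator_lt_top_of_nontrivial (P ⧸ M)).ne ?_
  have hmap : (commutator P).map (QuotientGroup.mk' M) = commutator (P ⧸ M) := by
    rw [map_commutator_eq, MonoidHom.range_eq_top.2 (QuotientGroup.mk'_surjective M),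
      commutator_def]
  have hH : H.map (QuotientGroup.mk' M) = ⊥ :=
    (Subgroup.map_eq_bot_iff _).2 (by rwa [QuotientGroup.ker_mk'])
  rw [← hmap, ← bot_sup_eq ((commutator P).map _), ← hH, ← Subgroup.map_sup, h,
    Subgroup.map_top_of_surjective _ (QuotientGroup.mk'_surjective M)]

lemma exists_fixed_of_mapsTo {α : Type*} [Finite α] {p : ℕ} (hp : p.Prime) {f : α → α}
    (hf : f^[p] = id) {s : Set α} (hs : Set.MapsTo f s s) (hcard : ¬ p ∣ s.ncard) :
    ∃ x ∈ s, f x = x := by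
  classical
  have := Fintype.ofFinite α
  have : Fact p.Prime := ⟨hp⟩
  let g : Function.End s := hs.restrict f s s
  have hg : g ^ p ^ 1 = 1 := by
    have hiter (k : ℕ) : g ^ k = (hs.restrict f s s)^[k] := by
      induction k with
      | zero => rfl
      | succ k ih => rw [pow_succ, ih]; rfl
    rw [pow_one, hiter]
    exact funext fun x => Subtype.ext ((hs.coe_iterate_restrict x p).trans (congrFun hf x))
  have hmod := Equiv.Perm.card_fixedPoints_modEq hg
  have hne : Fintype.card (Function.fixedPoints g) ≠ 0 := fun h0 => hcard <| by
    rw [h0, ← Nat.card_eq_fintype_card, Nat.card_coe_set_eq] at hmod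
    exact (Nat.modEq_zero_iff_dvd).1 hmod
  obtain ⟨x, hx⟩ := Fintype.card_pos_iff.1 (Nat.pos_of_ne_zero hne)
  exact ⟨x, x.2, congrArg Subtype.val hx⟩

lemma apply_eq_of_inv_mul_mem_commutator {P : Type*} [Group P] [Finite P] [Group.IsNilpotent P]
    {p : ℕ} (hp : p.Prime) (hcard : ¬ p ∣ Nat.card P) {σ : P →* P} (hσ : σ^[p] = id)
    (h : ∀ x, x⁻¹ * σ x ∈ commutator P) (x : P) : σ x = x := by
  suffices hfix : σ.eqLocus (MonoidHom.id P) ⊔ commutator P = ⊤ from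
    (eq_top_of_sup_commutator_eq_top hfix).ge (Subgroup.mem_top x)
  refine eq_top_iff.2 fun y _ => ?_
  have hmaps : Set.MapsTo σ (y • (commutator P : Set P)) (y • (commutator P : Set P)) := by
    intro z hz
    rw [Set.mem_smul_set_iff_inv_smul_mem] at hz ⊢
    have := mul_mem hz (h z)
    simpa [mul_assoc] using this
  obtain ⟨z, hz, hσz⟩ := exists_fixed_of_mapsTo hp hσ hmaps <| by
    rw [Set.ncard_smul_set, ← Nat.card_coe_set_eq]
    exact fun hdvd => hcard (hdvd.trans (Subgroup.card_subgroup_dvd_card (commutator P)))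
  rw [Set.mem_smul_set_iff_inv_smul_mem] at hz
  have := Subgroup.mul_mem_sup (S := σ.eqLocus (MonoidHom.id P)) hσz (inv_mem hz)
  rwa [smul_eq_mul, _root_.mul_inv_rev, inv_inv, mul_inv_cancel_left] at this

-- The orbit of `φ` under `f` has an `f`-invariant kernel, on whose finite nilpotent quotient `f`
-- induces an automorphism acting trivially modulo commutators.
lemma hom_apply_eq_of_pow_prime_eq_one {G U : Type*} [Group G] [Group U] [Finite U]
    [Group.IsNilpotent U] {p : ℕ} (hp : p.Prime) (hcard : ¬ p ∣ Nat.card U) {f : MulAut G}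
    (hf : f ^ p = 1) (h : ∀ x, x⁻¹ * f x ∈ commutator G) (φ : G →* U) (x : G) :
    φ (f x) = φ x := by
  have : Finite (Subgroup.zpowers f) :=
    (finite_zpowers.2 (isOfFinOrder_iff_pow_eq_one.2 ⟨p, hp.pos, hf⟩)).to_subtype
  let Φ : G →* (Subgroup.zpowers f → U) := MonoidHom.pi fun g => φ.comp g.1.toMonoidHom
  have hΦ : Φ.ker ≤ Φ.ker.comap f.toMonoidHom := fun y hy => funext fun g =>
    congrFun hy ⟨g.1 * f, mul_mem g.2 (Subgroup.mem_zpowers f)⟩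
  let σ : G ⧸ Φ.ker →* G ⧸ Φ.ker := QuotientGroup.map _ _ f.toMonoidHom hΦ
  have hker := QuotientGroup.kerLift_injective Φ
  have : Finite (G ⧸ Φ.ker) := Finite.of_injective _ hker
  have : Group.IsNilpotent (G ⧸ Φ.ker) :=
    Group.nilpotent_of_mulEquiv (QuotientGroup.quotientKerEquivRange Φ).symm
  have hσp : σ^[p] = id := by
    have hσ (k : ℕ) (y : G) : σ^[k] (y : G ⧸ Φ.ker) = ((f ^ k) y : G) := by
      induction k generalizing y with
      | zero => rfl
      | succ _ ih => exact ih (f y)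
    refine funext fun q => QuotientGroup.induction_on q fun y => ?_
    rw [hσ, hf]
    rfl
  have hcardQ : ¬ p ∣ Nat.card (G ⧸ Φ.ker) := fun hdvd => hcard <| by
    have := hdvd.trans (Subgroup.card_dvd_of_injective _ hker)
    rw [Nat.card_fun] at this
    exact hp.dvd_of_dvd_pow this
  have hσ := apply_eq_of_inv_mul_mem_commutator hp hcardQ hσp (fun q => ?_) x
  · have : φ ((f x)⁻¹ * x) = 1 := congrFun (QuotientGroup.eq.1 hσ) 1
    rwa [_root_.map_mul, _root_.map_inv, inv_mul_eq_one] at this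
  · induction q using QuotientGroup.induction_on with
    | H y =>
      have := Subgroup.mem_map_of_mem (QuotientGroup.mk' Φ.ker) (h y)
      rw [map_commutator_eq] at this
      exact Subgroup.commutator_mono le_top le_top this

lemma map_eq_prod_zpow_expSum {n : ℕ} {A : Type*} [CommGroup A] (θ : FreeGroup (Fin n) →* A)
    (w : FreeGroup (Fin n)) : θ w = ∏ k, θ (FreeGroup.of k) ^ (expSum k w).toAdd := by
  induction w using FreeGroup.induction_on with
  | C1 => simp
  | of i =>
    rw [Finset.prod_eq_single i]
    · simp [expSum]
    · intro j _ hj; simp [expSum, Ne.symm hj]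
    · simp
  | inv_of i ih => simpa using ih
  | mul x y hx hy => simp only [_root_.map_mul, hx, hy, toAdd_mul, _root_.zpow_add,
      Finset.prod_mul_distrib]

lemma mem_IA_iff_expSum {n : ℕ} {f : FrAut n} :
    f ∈ IA n ↔ ∀ i w, expSum i (f w) = expSum i w := by
  constructor
  · intro hf i w
    have hmat : mat f = 1 := congrArg Units.val hf
    refine Multiplicative.toAdd.injective ?_
    simp [expSum_apply, hmat, Matrix.one_apply]
  · intro h
    refine Units.ext ?_
    change mat f = 1
    rw [← mat_one]
    ext i j
    exact congrArg Multiplicative.toAdd (h i (FreeGroup.of j))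

lemma inv_mul_apply_mem_commutator_of_mem_IA {n : ℕ} {f : FrAut n} (hf : f ∈ IA n)
    (w : FreeGroup (Fin n)) : w⁻¹ * f w ∈ commutator (FreeGroup (Fin n)) := by
  rw [← Abelianization.ker_of, MonoidHom.mem_ker, _root_.map_mul, _root_.map_inv, inv_mul_eq_one,
    map_eq_prod_zpow_expSum _ w, map_eq_prod_zpow_expSum _ (f w)]
  simp only [mem_IA_iff_expSum.1 hf]

theorem eq_one_of_pow_prime_of_mem_IA {n p : ℕ} (hp : p.Prime) (hodd : Odd p) {f : FrAut n}
    (hf : f ^ p = 1) (hIA : f ∈ IA n) : f = 1 := by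
  refine MulEquiv.ext fun x => (inv_mul_eq_one.1 ?_).symm
  by_contra hx
  obtain ⟨U, _, _, φ, hU, hφ⟩ := exists_isPGroup_two_hom_ne_one hx
  have := hU.isNilpotent
  obtain ⟨k, hk⟩ := IsPGroup.iff_card.1 hU
  have hcard : ¬ p ∣ Nat.card U := fun hdvd => by
    rw [hk] at hdvd
    rw [(Nat.prime_dvd_prime_iff_eq hp Nat.prime_two).1 (hp.dvd_of_dvd_pow hdvd)] at hodd
    exact Nat.not_odd_iff_even.2 even_two hodd
  refine hφ ?_
  rw [_root_.map_mul, _root_.map_inv, inv_mul_eq_one]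
  exact (hom_apply_eq_of_pow_prime_eq_one hp hcard hf
    (inv_mul_apply_mem_commutator_of_mem_IA hIA) φ x).symm

end KernelTorsion

section Cuts

variable {G : Type*} [Group G]

/-- The elements `x` at which the Cayley graph edge from `x` to `x * g` leaves or enters `C`. -/
def coboundary (C : Set G) (g : G) : Set G := {x | ¬(x ∈ C ↔ x * g ∈ C)}

/-- A set is almost invariant if every right translation changes it by finitely many elements.
The almost invariant sets play the role of cuts in a Cayley graph. -/
def AlmostInvariant (C : Set G) : Prop := ∀ g, (coboundary C g).Finite

/-- The homomorphism to `ℤ` attached to an almost invariant set `C`: the number of edges from `x`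
to `x * g` that enter `C`, minus the number of those that leave it. -/
noncomputable def cutHom (C : Set G) (g : G) : ℤ :=
  ∑ᶠ x, (C.indicator 1 (x * g) - C.indicator 1 x)

lemma mem_coboundary {C : Set G} {g x : G} : x ∈ coboundary C g ↔ ¬(x ∈ C ↔ x * g ∈ C) :=
  Iff.rfl

lemma coboundary_compl (C : Set G) (g : G) : coboundary Cᶜ g = coboundary C g := by
  ext x; simp only [mem_coboundary, Set.mem_compl_iff]; tauto

lemma coboundary_inter_subset (C D : Set G) (g : G) :
    coboundary (C ∩ D) g ⊆ coboundary C g ∪ coboundary D g := by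
  intro x; simp only [mem_coboundary, Set.mem_inter_iff, Set.mem_union]; tauto

namespace AlmostInvariant

variable {C D : Set G}

lemma compl (hC : AlmostInvariant C) : AlmostInvariant Cᶜ := fun g =>
  coboundary_compl C g ▸ hC g

lemma inter (hC : AlmostInvariant C) (hD : AlmostInvariant D) : AlmostInvariant (C ∩ D) :=
  fun g => ((hC g).union (hD g)).subset (coboundary_inter_subset C D g)

lemma union (hC : AlmostInvariant C) (hD : AlmostInvariant D) : AlmostInvariant (C ∪ D) := by
  rw [← compl_compl (C ∪ D), Set.compl_union]
  exact (hC.compl.inter hD.compl).compl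

lemma of_closure_eq_top {S : Set G} (hS : Subgroup.closure S = ⊤)
    (h : ∀ s ∈ S, (coboundary C s).Finite) : AlmostInvariant C := by
  intro g
  have hg : g ∈ Subgroup.closure S := hS ▸ Subgroup.mem_top g
  induction hg using Subgroup.closure_induction with
  | mem s hs => exact h s hs
  | one => convert Set.finite_empty; ext x; simp [mem_coboundary]
  | mul a b _ _ ha hb =>
    refine (ha.union (hb.preimage (mul_left_injective a).injOn)).subset fun x => ?_
    simp only [mem_coboundary, Set.mem_union, Set.mem_preimage, ← mul_assoc]
    tauto
  | inv a _ ha =>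
    refine (ha.preimage (mul_left_injective a⁻¹).injOn).subset fun x => ?_
    simp only [mem_coboundary, Set.mem_preimage, inv_mul_cancel_right]
    tauto

end AlmostInvariant

lemma support_indicator_sub (C : Set G) (g : G) :
    (Function.support fun x => C.indicator (1 : G → ℤ) (x * g) - C.indicator 1 x) =
      coboundary C g := by
  ext x
  by_cases h : x ∈ C <;> by_cases hg : x * g ∈ C <;> simp [mem_coboundary, h, hg]

lemma cutHom_mul {C : Set G} (hC : AlmostInvariant C) (g h : G) :
    cutHom C (g * h) = cutHom C g + cutHom C h := by
  have hh : cutHom C h = ∑ᶠ x, (C.indicator 1 (x * g * h) - C.indicator 1 (x * g)) :=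
    (finsum_comp_equiv (Equiv.mulRight g)
      (f := fun x => C.indicator (1 : G → ℤ) (x * h) - C.indicator 1 x)).symm
  rw [hh, cutHom, cutHom, ← finsum_add_distrib]
  · refine finsum_congr fun x => ?_
    rw [mul_assoc]
    ring
  · rw [Function.HasFiniteSupport, support_indicator_sub]
    exact hC g
  · have := (hC h).preimage (mul_left_injective g).injOn
    rwa [← support_indicator_sub] at this

lemma cutHom_inter_add_union {C D : Set G} (hC : AlmostInvariant C) (hD : AlmostInvariant D)
    (g : G) : cutHom (C ∩ D) g + cutHom (C ∪ D) g = cutHom C g + cutHom D g := by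
  simp only [cutHom]
  rw [← finsum_add_distrib, ← finsum_add_distrib]
  · refine finsum_congr fun x => ?_
    have h (y : G) : (C ∩ D).indicator (1 : G → ℤ) y + (C ∪ D).indicator 1 y =
        C.indicator 1 y + D.indicator 1 y := by
      rw [add_comm, Set.indicator_union_add_inter_apply]
    linear_combination h (x * g) - h x
  all_goals rw [Function.HasFiniteSupport, support_indicator_sub]
  · exact hC g
  · exact hD g
  · exact hC.inter hD g
  · exact hC.union hD g

lemma cutHom_compl (C : Set G) (g : G) : cutHom Cᶜ g = -cutHom C g := by
  rw [cutHom, cutHom, ← finsum_neg_distrib]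
  refine finsum_congr fun x => ?_
  simp only [Set.indicator_compl, Pi.sub_apply, Pi.one_apply]
  ring

lemma cutHom_empty (g : G) : cutHom (∅ : Set G) g = 0 := by
  simp [cutHom]

-- Both left translations, with `φ = 1`, and automorphisms `T = φ` satisfy the relation `hT`.
section Image

variable {T : G ≃ G} {φ : MulAut G} (hT : ∀ x g, T (x * g) = T x * φ g)
include hT

lemma coboundary_image (C : Set G) (g : G) :
    coboundary (T '' C) (φ g) = T '' coboundary C g := by
  ext x
  obtain ⟨y, rfl⟩ := T.surjective x
  rw [T.injective.mem_set_image, mem_coboundary, mem_coboundary, ← hT,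
    T.injective.mem_set_image, T.injective.mem_set_image]

lemma AlmostInvariant.image {C : Set G} (hC : AlmostInvariant C) : AlmostInvariant (T '' C) := by
  intro g
  obtain ⟨g, rfl⟩ := φ.surjective g
  rw [coboundary_image hT]
  exact (hC g).image _

lemma cutHom_image (C : Set G) (g : G) : cutHom (T '' C) (φ g) = cutHom C g := by
  rw [cutHom, cutHom, ← finsum_comp_equiv T]
  refine finsum_congr fun x => ?_
  have h (y : G) : (T '' C).indicator (1 : G → ℤ) (T y) = C.indicator 1 y := by
    classical
    simp only [Set.indicator_apply, T.injective.mem_set_image, Pi.one_apply]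
  rw [← hT, h, h]

end Image

end Cuts

section BasicCuts

variable {n : ℕ}

/-- The set of elements whose reduced word starts with `x_i`, encoded through the last letter of
the inverse. -/
def basicCut (i : Fin n) : Set (FreeGroup (Fin n)) :=
  {w | (toWord w⁻¹).getLast? = some (i, false)}

lemma one_notMem_basicCut (i : Fin n) : (1 : FreeGroup (Fin n)) ∉ basicCut i := by
  simp [basicCut]

lemma mul_of_mem_basicCut_iff (i j : Fin n) (x : FreeGroup (Fin n)) :
    x * FreeGroup.of j ∈ basicCut i ↔ x ∈ basicCut i ∨ (x = 1 ∧ i = j) := by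
  have hmul : toWord (x * FreeGroup.of j)⁻¹ = reduce ((j, false) :: toWord x⁻¹) := by
    rw [_root_.mul_inv_rev, toWord_mul]
    rfl
  have hone : x = 1 ↔ toWord x⁻¹ = [] := by rw [toWord_eq_nil_iff, inv_eq_one]
  rw [basicCut, Set.mem_ofPred_eq, Set.mem_ofPred_eq, hmul, hone, reduce.cons, reduce_toWord]
  rcases toWord x⁻¹ with _ | ⟨⟨a, b⟩, _ | ⟨c, l⟩⟩
  · simp [eq_comm]
  · simp only
    split_ifs with h
    · obtain rfl : b = true := by simpa using h.2.symm
      simp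
    · simp
  · simp only
    split_ifs <;> simp

lemma coboundary_basicCut_of (i j : Fin n) :
    coboundary (basicCut i) (FreeGroup.of j) = if i = j then {1} else ∅ := by
  have h1 := one_notMem_basicCut i
  ext x
  rw [mem_coboundary, mul_of_mem_basicCut_iff]
  split_ifs with h
  · rw [Set.mem_singleton_iff]
    refine ⟨by tauto, ?_⟩
    rintro rfl
    tauto
  · simp [h]

lemma almostInvariant_basicCut (i : Fin n) : AlmostInvariant (basicCut i) := by
  refine .of_closure_eq_top (FreeGroup.closure_range_of (Fin n)) ?_
  rintro _ ⟨j, rfl⟩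
  rw [coboundary_basicCut_of]
  split_ifs
  · exact Set.finite_singleton _
  · exact Set.finite_empty

lemma cutHom_basicCut_of (i j : Fin n) :
    cutHom (basicCut i) (FreeGroup.of j) = if j = i then 1 else 0 := by
  have hterm (x : FreeGroup (Fin n)) :
      (basicCut i).indicator (1 : FreeGroup (Fin n) → ℤ) (x * FreeGroup.of j) -
        (basicCut i).indicator 1 x = if x = 1 ∧ i = j then 1 else 0 := by
    classical
    have h1 := one_notMem_basicCut i
    by_cases hx : x ∈ basicCut i
    · have : x ≠ 1 := fun h => h1 (h ▸ hx)
      simp [mul_of_mem_basicCut_iff, hx, this]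
    · simp [Set.indicator_apply, mul_of_mem_basicCut_iff, hx]
  rw [cutHom, finsum_congr hterm, finsum_eq_single _ 1 fun x hx => if_neg fun h => hx h.1]
  simp [eq_comm]

lemma cutHom_basicCut (i : Fin n) (w : FreeGroup (Fin n)) :
    cutHom (basicCut i) w = (expSum i w).toAdd := by
  let θ : FreeGroup (Fin n) →* Multiplicative ℤ :=
    MonoidHom.mk' (fun g => Multiplicative.ofAdd (cutHom (basicCut i) g)) fun a b => by
      rw [cutHom_mul (almostInvariant_basicCut i), ofAdd_add]
  suffices θ = expSum i from congrArg Multiplicative.toAdd (DFunLike.congr_fun this w)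
  ext j
  simp [θ, cutHom_basicCut_of, expSum]

end BasicCuts

section Bonds

variable {V : Type*} {R : V → V → Prop} {C : Set V} {x y : V} {k : ℕ}

/-- A set is connected for a relation if no proper nonempty subset splits off. -/
def RelConnected (R : V → V → Prop) (C : Set V) : Prop :=
  ∀ B ⊆ C, B.Nonempty → (C \ B).Nonempty → ∃ x ∈ B, ∃ y ∈ C \ B, R x y

/-- The edges, as ordered pairs, that leave a set. -/
def outEdges (R : V → V → Prop) (C : Set V) : Set (V × V) :=
  {e | R e.1 e.2 ∧ e.1 ∈ C ∧ e.2 ∉ C}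

/-- The bonds with at most `k` edges of the graph with adjacency relation `R`: such a bond is
given by one of its two sides, both of which are connected. -/
def IsBond (R : V → V → Prop) (k : ℕ) (C : Set V) : Prop :=
  RelConnected R C ∧ RelConnected R Cᶜ ∧ (outEdges R C).encard ≤ k

/-- The graph obtained by deleting the edge between `x` and `y`. -/
def eraseEdge (R : V → V → Prop) (x y : V) (a b : V) : Prop :=
  R a b ∧ ¬(a = x ∧ b = y) ∧ ¬(a = y ∧ b = x)

instance [Std.Symm R] : Std.Symm (eraseEdge R x y) :=
  ⟨fun _ _ h => ⟨symm_of R h.1, fun hab => h.2.2 hab.symm, fun hab => h.2.1 hab.symm⟩⟩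

lemma exists_finset_of_reflTransGen (h : Relation.ReflTransGen R x y) :
    ∃ T : Finset (V × V), (∀ e ∈ T, R e.1 e.2) ∧
      ∀ C : Set V, x ∈ C → y ∉ C → ∃ e ∈ T, e.1 ∈ C ∧ e.2 ∉ C := by
  classical
  induction h with
  | refl => exact ⟨∅, by simp, fun C hx hy => absurd hx hy⟩
  | @tail b c _ hbc ih =>
    obtain ⟨T, hT, hC⟩ := ih
    refine ⟨insert (b, c) T, Finset.forall_mem_insert .. |>.2 ⟨hbc, hT⟩, fun C hx hc => ?_⟩
    by_cases hb : b ∈ C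
    · exact ⟨(b, c), Finset.mem_insert_self _ _, hb, hc⟩
    · obtain ⟨e, he, h⟩ := hC C hx hb
      exact ⟨e, Finset.mem_insert_of_mem he, h⟩

lemma RelConnected.subset_reflTransGen (hC : RelConnected R C) (hx : x ∈ C) :
    C ⊆ {z | Relation.ReflTransGen R x z} := by
  intro z hz
  by_contra hzn
  obtain ⟨a, ha, b, hb, hab⟩ := hC (C ∩ {z | Relation.ReflTransGen R x z})
    Set.inter_subset_left ⟨x, hx, .refl⟩ ⟨z, hz, fun h => hzn h.2⟩
  exact hb.2 ⟨hb.1, ha.2.tail hab⟩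

namespace IsBond

lemma erase (h : IsBond R (k + 1) C) (hxy : R x y) (hx : x ∈ C) (hy : y ∉ C) :
    IsBond (eraseEdge R x y) k C := by
  obtain ⟨hconn, hconn', hcard⟩ := h
  have hsub : outEdges (eraseEdge R x y) C ⊆ outEdges R C \ {(x, y)} := by
    rintro ⟨a, b⟩ ⟨hab, hout⟩
    exact ⟨⟨hab.1, hout⟩, fun he => hab.2.1 (Prod.ext_iff.1 he)⟩
  refine ⟨fun B hB hne hne' => ?_, fun B hB hne hne' => ?_, ?_⟩
  · obtain ⟨a, ha, b, hb, hab⟩ := hconn B hB hne hne'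
    exact ⟨a, ha, b, hb, hab, fun h => hy (h.2 ▸ hb.1), fun h => hy (h.1 ▸ hB ha)⟩
  · obtain ⟨a, ha, b, hb, hab⟩ := hconn' B hB hne hne'
    exact ⟨a, ha, b, hb, hab, fun h => hB ha (h.1 ▸ hx), fun h => hb.1 (h.2 ▸ hx)⟩
  · have hmem : (x, y) ∈ outEdges R C := ⟨hxy, hx, hy⟩
    rw [← Set.encard_sdiff_singleton_add_one hmem, Nat.cast_add, Nat.cast_one] at hcard
    exact (Set.encard_le_encard hsub).trans
      ((ENat.add_le_add_iff_right ENat.one_ne_top).1 hcard)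

lemma eq_setOf_reflTransGen [Std.Symm R] (h : IsBond R k C) (hx : x ∈ C) (hy : y ∉ C)
    (hxy : ¬Relation.ReflTransGen R x y) : C = {z | Relation.ReflTransGen R x z} := by
  refine (h.1.subset_reflTransGen hx).antisymm fun z hxz => ?_
  by_contra hz
  have hyz : Relation.ReflTransGen R y z := h.2.1.subset_reflTransGen hy hz
  exact hxy (hxz.trans (symm_of _ hyz))

end IsBond

/-- Induction on `k`: after deleting the edge from `x` to `y`, a bond containing it must contain
an edge of any path that still joins `x` to `y`. -/
theorem finite_isBond_of_mem_notMem [Std.Symm R] (hxy : R x y) :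
    {C : Set V | x ∈ C ∧ y ∉ C ∧ IsBond R k C}.Finite := by
  induction k generalizing R x y with
  | zero =>
    refine Set.finite_empty.subset ?_
    rintro C ⟨hx, hy, -, -, hcard⟩
    have hempty : outEdges R C = ∅ := by simpa using hcard
    exact hempty.subset (show (x, y) ∈ outEdges R C from ⟨hxy, hx, hy⟩)
  | succ k ih =>
    by_cases hreach : Relation.ReflTransGen (eraseEdge R x y) x y
    · obtain ⟨T, hT, hcut⟩ := exists_finset_of_reflTransGen hreach
      refine (T.finite_toSet.biUnion fun e he => ih (hT e he)).subset ?_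
      rintro C ⟨hx, hy, hC⟩
      obtain ⟨e, he, he1, he2⟩ := hcut C hx hy
      exact Set.mem_biUnion he ⟨he1, he2, hC.erase hxy hx hy⟩
    · refine (Set.finite_singleton {z | Relation.ReflTransGen (eraseEdge R x y) x z}).subset ?_
      rintro C ⟨hx, hy, hC⟩
      exact (hC.erase hxy hx hy).eq_setOf_reflTransGen hx hy hreach

end Bonds

section BoundarySize

variable {G : Type*} [Group G] {S : Finset G} {B C D : Set G} {g s : G}

/-- The number of boundary edges of a set in the Cayley graph of a finite set `S`; an edge is
counted once for `s ∈ S` and once for `s⁻¹ ∈ S`. -/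
noncomputable def boundarySize (S : Finset G) (C : Set G) : ℕ := ∑ s ∈ S, (coboundary C s).ncard

/-- Adjacency in the Cayley graph. -/
def cayleyRel (S : Finset G) (x y : G) : Prop := x⁻¹ * y ∈ S

lemma boundarySize_compl (S : Finset G) (C : Set G) : boundarySize S Cᶜ = boundarySize S C := by
  simp only [boundarySize, coboundary_compl]

lemma boundarySize_image {T : G ≃ G} {φ : MulAut G} (hT : ∀ x g, T (x * g) = T x * φ g)
    (hS : ∀ s, φ s ∈ S ↔ s ∈ S) (C : Set G) : boundarySize S (T '' C) = boundarySize S C := by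
  refine (Finset.sum_equiv φ.toEquiv (fun s => (hS s).symm) fun s _ => ?_).symm
  change _ = (coboundary (T '' C) (φ s)).ncard
  rw [coboundary_image hT, Set.ncard_image_of_injective _ T.injective]

lemma coboundary_inter_union_coboundary_union_subset :
    coboundary (C ∩ D) g ∪ coboundary (C ∪ D) g ⊆ coboundary C g ∪ coboundary D g := by
  intro x; simp only [mem_coboundary, Set.mem_inter_iff, Set.mem_union]; tauto

lemma coboundary_inter_inter_coboundary_union_subset :
    coboundary (C ∩ D) g ∩ coboundary (C ∪ D) g ⊆ coboundary C g ∩ coboundary D g := by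
  intro x; simp only [mem_coboundary, Set.mem_inter_iff, Set.mem_union]; tauto

lemma ncard_coboundary_inter_add_union_le (hC : AlmostInvariant C) (hD : AlmostInvariant D)
    (g : G) : (coboundary (C ∩ D) g).ncard + (coboundary (C ∪ D) g).ncard ≤
      (coboundary C g).ncard + (coboundary D g).ncard := by
  rw [← Set.ncard_union_add_ncard_inter _ _ (hC.inter hD g) (hC.union hD g),
    ← Set.ncard_union_add_ncard_inter _ _ (hC g) (hD g)]
  exact Nat.add_le_add
    (Set.ncard_le_ncard coboundary_inter_union_coboundary_union_subset ((hC g).union (hD g)))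
    (Set.ncard_le_ncard coboundary_inter_inter_coboundary_union_subset
      ((hC g).inter_of_left _))

lemma ncard_coboundary_inter_add_union_lt (hC : AlmostInvariant C) (hD : AlmostInvariant D)
    {v u : G} (hv : v ∈ C \ D) (hu : u ∈ D \ C) :
    (coboundary (C ∩ D) (v⁻¹ * u)).ncard + (coboundary (C ∪ D) (v⁻¹ * u)).ncard <
      (coboundary C (v⁻¹ * u)).ncard + (coboundary D (v⁻¹ * u)).ncard := by
  set g := v⁻¹ * u with hg
  have hvg : v * g = u := by rw [hg, mul_inv_cancel_left]
  have hmem : v ∈ coboundary C g ∩ coboundary D g := by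
    simp only [mem_coboundary, Set.mem_inter_iff, hvg]
    exact ⟨fun h => hu.2 (h.1 hv.1), fun h => hv.2 (h.2 hu.1)⟩
  have hnotMem : v ∉ coboundary (C ∩ D) g := by
    simp only [mem_coboundary, Set.mem_inter_iff, hvg, hv.2, hu.2, and_false, false_and,
      iff_self, not_true, not_false_eq_true]
  rw [← Set.ncard_union_add_ncard_inter _ _ (hC.inter hD g) (hC.union hD g),
    ← Set.ncard_union_add_ncard_inter _ _ (hC g) (hD g)]
  refine Nat.add_lt_add_of_le_of_lt (Set.ncard_le_ncard
    coboundary_inter_union_coboundary_union_subset ((hC g).union (hD g)))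
    (Set.ncard_lt_ncard ⟨coboundary_inter_inter_coboundary_union_subset, fun h => ?_⟩
      ((hC g).inter_of_left _))
  exact hnotMem (h hmem).1

lemma boundarySize_inter_add_union_le (hC : AlmostInvariant C) (hD : AlmostInvariant D) :
    boundarySize S (C ∩ D) + boundarySize S (C ∪ D) ≤ boundarySize S C + boundarySize S D := by
  simp only [boundarySize, ← Finset.sum_add_distrib]
  exact Finset.sum_le_sum fun s _ => ncard_coboundary_inter_add_union_le hC hD s

lemma boundarySize_inter_add_union_lt (hC : AlmostInvariant C) (hD : AlmostInvariant D)
    {v u : G} (hv : v ∈ C \ D) (hu : u ∈ D \ C) (hS : v⁻¹ * u ∈ S) :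
    boundarySize S (C ∩ D) + boundarySize S (C ∪ D) < boundarySize S C + boundarySize S D := by
  simp only [boundarySize, ← Finset.sum_add_distrib]
  exact Finset.sum_lt_sum (fun s _ => ncard_coboundary_inter_add_union_le hC hD s)
    ⟨_, hS, ncard_coboundary_inter_add_union_lt hC hD hv hu⟩

lemma coboundary_eq_union_of_separated (hBC : B ⊆ C)
    (hsep : ∀ x, ¬(x ∈ B ∧ x * s ∈ C \ B) ∧ ¬(x ∈ C \ B ∧ x * s ∈ B)) :
    coboundary C s = coboundary B s ∪ coboundary (C \ B) s := by
  ext x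
  have := hsep x
  have := @hBC x
  have := @hBC (x * s)
  simp only [mem_coboundary, Set.mem_sdiff, Set.mem_union] at *
  tauto

lemma disjoint_coboundary_of_separated (hBC : B ⊆ C)
    (hsep : ∀ x, ¬(x ∈ B ∧ x * s ∈ C \ B) ∧ ¬(x ∈ C \ B ∧ x * s ∈ B)) :
    Disjoint (coboundary B s) (coboundary (C \ B) s) := by
  refine Set.disjoint_left.2 fun x hB hCB => ?_
  have := hsep x
  have := @hBC x
  have := @hBC (x * s)
  simp only [mem_coboundary, Set.mem_sdiff] at *
  tauto

lemma eq_univ_of_boundarySize_eq_zero (hS : Subgroup.closure (S : Set G) = ⊤)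
    (hC : AlmostInvariant C) (h0 : boundarySize S C = 0) (hne : C.Nonempty) : C = Set.univ := by
  have hstep (s : G) (hs : s ∈ S) (x : G) : x ∈ C ↔ x * s ∈ C := by
    by_contra hx
    have := Finset.sum_eq_zero_iff.1 h0 s hs
    exact ((Set.ncard_eq_zero (hC s)).1 this).subset hx
  have hall (g : G) : ∀ x, x ∈ C ↔ x * g ∈ C := by
    have hg : g ∈ Subgroup.closure (S : Set G) := hS ▸ Subgroup.mem_top g
    induction hg using Subgroup.closure_induction with
    | mem s hs => exact hstep s hs
    | one => simp
    | mul a b _ _ ha hb => intro x; rw [ha, hb, mul_assoc]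
    | inv a _ ha => intro x; rw [ha (x * a⁻¹), inv_mul_cancel_right]
  obtain ⟨x, hx⟩ := hne
  refine Set.eq_univ_iff_forall.2 fun y => ?_
  simpa using (hall (x⁻¹ * y) x).1 hx

lemma encard_outEdges_cayleyRel_le (hC : AlmostInvariant C) :
    (outEdges (cayleyRel S) C).encard ≤ boundarySize S C := by
  classical
  let T : Finset (Σ _ : G, G) := S.sigma fun s => (hC s).toFinset
  have hsub : outEdges (cayleyRel S) C ⊆ (fun e : Σ _ : G, G => (e.2, e.2 * e.1)) '' T := by
    rintro ⟨a, b⟩ ⟨hab, ha, hb⟩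
    refine ⟨⟨a⁻¹ * b, a⟩, ?_, by simp⟩
    simp only [T, Finset.coe_sigma, Set.mem_sigma_iff, Finset.mem_coe, Set.Finite.mem_toFinset,
      mem_coboundary, mul_inv_cancel_left]
    exact ⟨hab, fun h => hb (h.1 ha)⟩
  calc (outEdges (cayleyRel S) C).encard
      ≤ (T : Set (Σ _ : G, G)).encard := (Set.encard_le_encard hsub).trans (Set.encard_image_le _ _)
    _ = boundarySize S C := by
      rw [Set.encard_coe_eq_coe_finsetCard, Finset.card_sigma, boundarySize]
      exact congrArg _ (Finset.sum_congr rfl fun s _ =>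
        (Set.ncard_eq_toFinset_card _ (hC s)).symm)

end BoundarySize

section MinimalCuts

/-- `a` minimizes the function `e` among the elements with property `P`. -/
def Minimizes {α : Type*} (P : α → Prop) (e : α → ℕ) (a : α) : Prop :=
  P a ∧ ∀ b, P b → e a ≤ e b

lemma exists_minimizes {α : Type*} {P : α → Prop} (e : α → ℕ) (h : ∃ a, P a) :
    ∃ a, Minimizes P e a :=
  ⟨_, Function.argminOn_mem e {a | P a} h, fun _ hb => Function.argminOn_le e {a | P a} hb⟩

lemma Minimizes.map {α : Type*} {P : α → Prop} {e : α → ℕ} {a : α} (h : Minimizes P e a)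
    {t : α → α} (hP : ∀ b, P b → P (t b)) (he : ∀ b, e (t b) = e b) : Minimizes P e (t a) :=
  ⟨hP a h.1, fun b hb => (he a).trans_le (h.2 b hb)⟩

variable {G : Type*} [Group G] {f : MulAut G} {S : Finset G} {B C D : Set G}

/-- The almost invariant sets whose homomorphism to `ℤ` is moved by the automorphism `f`. -/
def Moved (f : MulAut G) (C : Set G) : Prop :=
  AlmostInvariant C ∧ ∃ g, cutHom C (f g) ≠ cutHom C g

namespace Moved

lemma image (h : Moved f C) {T : G ≃ G} {φ : MulAut G} (hT : ∀ x g, T (x * g) = T x * φ g)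
    (hφ : ∀ g, φ (f g) = f (φ g)) : Moved f (T '' C) := by
  obtain ⟨hC, g, hg⟩ := h
  refine ⟨hC.image hT, φ g, ?_⟩
  rwa [← hφ, cutHom_image hT, cutHom_image hT]

lemma compl (h : Moved f C) : Moved f Cᶜ := by
  obtain ⟨hC, g, hg⟩ := h
  refine ⟨hC.compl, g, ?_⟩
  rwa [cutHom_compl, cutHom_compl, ne_eq, neg_inj]

lemma nonempty (h : Moved f C) : C.Nonempty := by
  refine Set.nonempty_iff_ne_empty.2 ?_
  rintro rfl
  obtain ⟨g, hg⟩ := h.2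
  exact hg (by rw [cutHom_empty, cutHom_empty])

lemma or_of_union_eq (h : Moved f C) (hB : AlmostInvariant B) (hD : AlmostInvariant D)
    (hdisj : B ∩ D = ∅) (hunion : B ∪ D = C) : Moved f B ∨ Moved f D := by
  by_contra! hcon
  obtain ⟨g, hg⟩ := h.2
  have hadd (g : G) : cutHom C g = cutHom B g + cutHom D g := by
    rw [← cutHom_inter_add_union hB hD, hdisj, hunion, cutHom_empty, zero_add]
  have hBg : cutHom B (f g) = cutHom B g := by_contra fun h => hcon.1 ⟨hB, g, h⟩
  have hDg : cutHom D (f g) = cutHom D g := by_contra fun h => hcon.2 ⟨hD, g, h⟩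
  exact hg (by rw [hadd, hadd, hBg, hDg])

end Moved

/-- If `C` were not connected, one of its two pieces would be moved and have a smaller boundary. -/
lemma relConnected_of_minimizes_moved (hinv : ∀ s ∈ S, s⁻¹ ∈ S)
    (hS : Subgroup.closure (S : Set G) = ⊤) (hC : Minimizes (Moved f) (boundarySize S) C) :
    RelConnected (cayleyRel S) C := by
  rintro B hBC ⟨b, hb⟩ ⟨d, hd⟩
  by_contra! hcon
  have hsep (s : G) (hs : s ∈ S) (x : G) :
      ¬(x ∈ B ∧ x * s ∈ C \ B) ∧ ¬(x ∈ C \ B ∧ x * s ∈ B) :=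
    ⟨fun h => hcon x h.1 _ h.2 (by simpa [cayleyRel] using hs),
      fun h => hcon _ h.2 _ h.1 (by simpa [cayleyRel] using hinv s hs)⟩
  have hunion (s : G) (hs : s ∈ S) := coboundary_eq_union_of_separated hBC (hsep s hs)
  have hB : AlmostInvariant B := .of_closure_eq_top hS fun s hs =>
    (hC.1.1 s).subset (Set.subset_union_left.trans (hunion s hs).ge)
  have hCB : AlmostInvariant (C \ B) := .of_closure_eq_top hS fun s hs =>
    (hC.1.1 s).subset (Set.subset_union_right.trans (hunion s hs).ge)
  have hadd : boundarySize S B + boundarySize S (C \ B) = boundarySize S C := by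
    simp only [boundarySize, ← Finset.sum_add_distrib]
    refine Finset.sum_congr rfl fun s hs => ?_
    rw [hunion s hs,
      Set.ncard_union_eq (disjoint_coboundary_of_separated hBC (hsep s hs)) (hB s) (hCB s)]
  rcases hC.1.or_of_union_eq hB hCB (Set.inter_sdiff_self B C) (Set.union_sdiff_cancel hBC)
    with h | h
  · have huniv := eq_univ_of_boundarySize_eq_zero hS hCB (by have := hC.2 B h; lia) ⟨d, hd⟩
    exact (huniv.ge (Set.mem_univ b)).2 hb
  · have huniv := eq_univ_of_boundarySize_eq_zero hS hB (by have := hC.2 _ h; lia) ⟨b, hb⟩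
    exact hd.2 (huniv.ge (Set.mem_univ d))

end MinimalCuts

open scoped Pointwise

section NestedCuts

/-- Two sets are nested if one of them or its complement is contained in the other one or its
complement. -/
def Nested {X : Type*} (C D : Set X) : Prop := C ⊆ D ∨ D ⊆ C ∨ C ⊆ Dᶜ ∨ Cᶜ ⊆ D

namespace Nested

variable {X : Type*} {C D : Set X}

lemma symm (h : Nested C D) : Nested D C := by
  unfold Nested at *
  rw [Set.subset_compl_comm (s := D), Set.compl_subset_comm (s := D)]
  tauto

lemma compl_left (h : Nested C D) : Nested Cᶜ D := by
  unfold Nested at *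
  rw [compl_compl, Set.compl_subset_compl, Set.subset_compl_comm (s := D)]
  tauto

lemma compl_right (h : Nested C D) : Nested C Dᶜ := h.symm.compl_left.symm

lemma smul {G : Type*} [Group G] {C D : Set G} (h : Nested C D) (a : G) :
    Nested (a • C) (a • D) := by
  unfold Nested at *
  simpa only [← Set.smul_set_compl, Set.smul_set_subset_smul_set_iff] using h

end Nested

variable {G : Type*} [Group G] {f : MulAut G} {S : Finset G} {C D : Set G}

lemma cutHom_smul (a : G) (C : Set G) (g : G) : cutHom (a • C) g = cutHom C g :=
  cutHom_image (T := MulAction.toPerm a) (φ := 1) (fun x g => (mul_assoc a x g).symm) C g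

lemma boundarySize_smul (S : Finset G) (a : G) (C : Set G) :
    boundarySize S (a • C) = boundarySize S C :=
  boundarySize_image (T := MulAction.toPerm a) (φ := 1) (fun x g => (mul_assoc a x g).symm)
    (fun _ => Iff.rfl) C

lemma boundarySize_mulAut_image (hSf : ∀ s, f s ∈ S ↔ s ∈ S) (C : Set G) :
    boundarySize S (f '' C) = boundarySize S C :=
  boundarySize_image (T := f.toEquiv) (_root_.map_mul f) hSf C

/-- The endpoints of the boundary edges of a set. -/
def endpoints (S : Finset G) (C : Set G) : Set G := {a | ∃ s ∈ S, a ∈ coboundary C s}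

lemma AlmostInvariant.finite_endpoints (hC : AlmostInvariant C) : (endpoints S C).Finite := by
  refine (S.finite_toSet.biUnion fun s _ => hC s).subset ?_
  rintro a ⟨s, hs, ha⟩
  exact Set.mem_biUnion hs ha

lemma mem_endpoints_image {T : G ≃ G} {φ : MulAut G} (hT : ∀ x g, T (x * g) = T x * φ g)
    (hS : ∀ s, φ s ∈ S ↔ s ∈ S) {a : G} (ha : a ∈ endpoints S C) :
    T a ∈ endpoints S (T '' C) := by
  obtain ⟨s, hs, has⟩ := ha
  exact ⟨φ s, (hS s).2 hs, coboundary_image hT C s ▸ ⟨a, has, rfl⟩⟩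

lemma mul_mem_endpoints_smul (c : G) {a : G} (ha : a ∈ endpoints S C) :
    c * a ∈ endpoints S (c • C) :=
  mem_endpoints_image (T := MulAction.toPerm c) (φ := 1) (fun x g => (mul_assoc c x g).symm)
    (fun _ => Iff.rfl) ha

/-- The moved sets with the smallest number of boundary edges. -/
abbrev MinimalMoved (f : MulAut G) (S : Finset G) : Set G → Prop :=
  Minimizes (Moved f) (boundarySize S)

namespace MinimalMoved

lemma compl (hC : MinimalMoved f S C) : MinimalMoved f S Cᶜ :=
  hC.map (fun _ => Moved.compl) (boundarySize_compl S)

lemma smul (hC : MinimalMoved f S C) (a : G) : MinimalMoved f S (a • C) :=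
  hC.map (fun _ hD => hD.image (T := MulAction.toPerm a) (φ := 1)
    (fun x g => (mul_assoc a x g).symm) fun _ => rfl) (boundarySize_smul S a)

lemma image (hSf : ∀ s, f s ∈ S ↔ s ∈ S) (hC : MinimalMoved f S C) :
    MinimalMoved f S (f '' C) :=
  hC.map (fun _ hD => hD.image (T := f.toEquiv) (_root_.map_mul f) fun _ => rfl)
    (boundarySize_mulAut_image hSf)

lemma inter_and_union (hC : MinimalMoved f S C) (hD : MinimalMoved f S D)
    (hI : Moved f (C ∩ D)) (hU : Moved f (C ∪ D)) :
    MinimalMoved f S (C ∩ D) ∧ MinimalMoved f S (C ∪ D) := by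
  have hle := boundarySize_inter_add_union_le (S := S) hC.1.1 hD.1.1
  have hCI := hC.2 _ hI
  have hDU := hD.2 _ hU
  exact ⟨⟨hI, fun E hE => by have := hC.2 E hE; lia⟩, hU, fun E hE => by have := hD.2 E hE; lia⟩

end MinimalMoved

lemma exists_mem_mul_notMem (hinv : ∀ s ∈ S, s⁻¹ ∈ S) (hS : Subgroup.closure (S : Set G) = ⊤)
    (hC : AlmostInvariant C) (hne : C.Nonempty) (hne' : Cᶜ.Nonempty) :
    ∃ c ∈ C, ∃ s ∈ S, c * s ∉ C := by
  by_contra! hcon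
  have h0 : boundarySize S C = 0 := by
    refine Finset.sum_eq_zero fun s hs => (Set.ncard_eq_zero (hC s)).2 ?_
    refine Set.eq_empty_of_forall_notMem fun x hx => hx ?_
    exact ⟨fun h => hcon x h s hs, fun h => by simpa using hcon _ h _ (hinv s hs)⟩
  obtain ⟨y, hy⟩ := hne'
  exact hy (eq_univ_of_boundarySize_eq_zero hS hC h0 hne ▸ Set.mem_univ y)

lemma finite_minimalMoved_separating_one (hinv : ∀ s ∈ S, s⁻¹ ∈ S)
    (hS : Subgroup.closure (S : Set G) = ⊤) :
    {C | MinimalMoved f S C ∧ 1 ∈ C ∧ ∃ s ∈ S, s ∉ C}.Finite := by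
  rcases Set.eq_empty_or_nonempty {C | MinimalMoved f S C} with hempty | ⟨C₀, hC₀⟩
  · exact Set.finite_empty.subset fun C hC => hempty.subset hC.1
  have : Std.Symm (cayleyRel S) := ⟨fun a b hab => by simpa [cayleyRel] using hinv _ hab⟩
  refine (S.finite_toSet.biUnion fun s hs => finite_isBond_of_mem_notMem (k := boundarySize S C₀)
    (R := cayleyRel S) (x := 1) (y := s) (by simpa [cayleyRel] using hs)).subset ?_
  rintro C ⟨hC, h1, s, hs, hsC⟩
  exact Set.mem_biUnion hs ⟨h1, hsC, relConnected_of_minimizes_moved hinv hS hC,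
    relConnected_of_minimizes_moved hinv hS hC.compl,
    (encard_outEdges_cayleyRel_le hC.1.1).trans (Nat.cast_le.2 (hC.2 C₀ hC₀.1))⟩

/-- The displacements between two endpoints of boundary edges of the same minimal moved set. -/
def boundaryDisplacements (f : MulAut G) (S : Finset G) : Set G :=
  {g | ∃ D, MinimalMoved f S D ∧ ∃ a ∈ endpoints S D, ∃ b ∈ endpoints S D, g = a⁻¹ * b}

lemma finite_boundaryDisplacements (hinv : ∀ s ∈ S, s⁻¹ ∈ S)
    (hS : Subgroup.closure (S : Set G) = ⊤) : (boundaryDisplacements f S).Finite := by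
  refine ((finite_minimalMoved_separating_one (f := f) hinv hS).biUnion fun D hD =>
    Set.Finite.image2 (fun a b => a⁻¹ * b) (hD.1.1.1.finite_endpoints (S := S))
      (hD.1.1.1.finite_endpoints (S := S))).subset ?_
  rintro g ⟨D, hD, a, ha, b, hb, rfl⟩
  obtain ⟨c, hc, s, hs, hcs⟩ :=
    exists_mem_mul_notMem hinv hS hD.1.1 hD.1.nonempty hD.1.compl.nonempty
  refine Set.mem_biUnion (x := c⁻¹ • D) ⟨hD.smul _, ?_, s, hs, ?_⟩
    ⟨_, mul_mem_endpoints_smul c⁻¹ ha, _, mul_mem_endpoints_smul c⁻¹ hb, by group⟩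
  · rwa [Set.mem_inv_smul_set_iff, smul_eq_mul, mul_one]
  · rwa [Set.mem_inv_smul_set_iff, smul_eq_mul]

lemma apply_mem_boundaryDisplacements_iff (hSf : ∀ s, f s ∈ S ↔ s ∈ S)
    (hfin : (boundaryDisplacements f S).Finite) (g : G) :
    f g ∈ boundaryDisplacements f S ↔ g ∈ boundaryDisplacements f S := by
  have hmaps : Set.MapsTo f (boundaryDisplacements f S) (boundaryDisplacements f S) := by
    rintro _ ⟨D, hD, a, ha, b, hb, rfl⟩
    exact ⟨f '' D, hD.image hSf,
      f a, mem_endpoints_image (T := f.toEquiv) (_root_.map_mul f) hSf ha,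
      f b, mem_endpoints_image (T := f.toEquiv) (_root_.map_mul f) hSf hb, by simp⟩
  refine ⟨fun hg => ?_, fun hg => hmaps hg⟩
  obtain ⟨h, hh, hhg⟩ :=
    ((hfin.injOn_iff_bijOn_of_mapsTo hmaps).1 f.injective.injOn).surjOn hg
  exact f.injective hhg ▸ hh

/-- Both `C` and `Cᶜ` are connected, so each of them contains an edge crossing the boundary
of `D`. -/
lemma exists_mem_boundaryDisplacements (hinv : ∀ s ∈ S, s⁻¹ ∈ S)
    (hS : Subgroup.closure (S : Set G) = ⊤) (hC : MinimalMoved f S C) (hD : MinimalMoved f S D)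
    (hI : (C ∩ D).Nonempty) (hU : (C ∪ D)ᶜ.Nonempty) (hCD : (C \ D).Nonempty)
    (hDC : (D \ C).Nonempty) :
    ∃ v ∈ C \ D, ∃ u ∈ D \ C, v⁻¹ * u ∈ boundaryDisplacements f S := by
  obtain ⟨x, hx, v, hv, hxv⟩ := relConnected_of_minimizes_moved hinv hS hC (C ∩ D)
    Set.inter_subset_left hI (by rwa [Set.sdiff_self_inter])
  rw [Set.sdiff_self_inter] at hv
  have hU' : (Cᶜ \ (D \ C)).Nonempty :=
    hU.mono fun z (hz : z ∉ C ∪ D) => ⟨fun h => hz (Or.inl h), fun h => hz (Or.inr h.1)⟩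
  obtain ⟨u, hu, y, hy, huy⟩ := relConnected_of_minimizes_moved hinv hS hC.compl (D \ C)
    (fun z hz => hz.2) hDC hU'
  have hvD : v ∈ endpoints S D := by
    refine ⟨v⁻¹ * x, by simpa using hinv _ hxv, ?_⟩
    rw [mem_coboundary, mul_inv_cancel_left]
    exact fun h => hv.2 (h.2 hx.2)
  have huD : u ∈ endpoints S D := by
    refine ⟨u⁻¹ * y, huy, ?_⟩
    rw [mem_coboundary, mul_inv_cancel_left]
    exact fun h => hy.2 ⟨h.1 hu.1, hy.1⟩
  exact ⟨v, hv, u, hu, D, hD, v, hvD, u, huD, rfl⟩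

lemma Moved.inter_or_inter_compl (hC : Moved f C) (hD : AlmostInvariant D) :
    Moved f (C ∩ D) ∨ Moved f (C ∩ Dᶜ) :=
  hC.or_of_union_eq (hC.1.inter hD) (hC.1.inter hD.compl)
    (by rw [← Set.inter_inter_distrib_left, Set.inter_compl_self, Set.inter_empty])
    (Set.inter_union_compl C D)

lemma Moved.inter_and_union_or (hC : Moved f C) (hD : Moved f D) :
    Moved f (C ∩ D) ∧ Moved f (C ∪ D) ∨ Moved f (C ∩ Dᶜ) ∧ Moved f (C ∪ Dᶜ) := by
  have hunion (A B : Set G) : Moved f (Aᶜ ∩ Bᶜ) → Moved f (A ∪ B) := fun h => by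
    simpa only [Set.compl_inter, compl_compl] using h.compl
  have hC' := hC.compl.inter_or_inter_compl hD.1
  have hD' := hD.compl.inter_or_inter_compl hC.1
  have hCI := hC.inter_or_inter_compl hD.1
  have hDI := hD.inter_or_inter_compl hC.1
  have hU := hunion C D
  have hU' := hunion C Dᶜ
  rw [Set.inter_comm D C, Set.inter_comm D Cᶜ] at hDI
  rw [Set.inter_comm Dᶜ C, Set.inter_comm Dᶜ Cᶜ] at hD'
  rw [compl_compl] at hU'
  tauto

/-- Among the minimal moved sets, those with the fewest boundary edges for the larger generating
set of boundary displacements. -/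
abbrev BiminimalMoved (f : MulAut G) (S J : Finset G) : Set G → Prop :=
  Minimizes (MinimalMoved f S) (boundarySize J)

namespace BiminimalMoved

variable {J : Finset G}

lemma compl (hC : BiminimalMoved f S J C) : BiminimalMoved f S J Cᶜ :=
  hC.map (fun _ => MinimalMoved.compl) (boundarySize_compl J)

/-- Uncrossing: `C ∩ D` and `C ∪ D` would have a strictly smaller total boundary. -/
lemma subset_or_subset (hinv : ∀ s ∈ S, s⁻¹ ∈ S) (hS : Subgroup.closure (S : Set G) = ⊤)
    (hJ : boundaryDisplacements f S ⊆ J) (hC : BiminimalMoved f S J C)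
    (hD : BiminimalMoved f S J D) (hI : Moved f (C ∩ D)) (hU : Moved f (C ∪ D)) :
    C ⊆ D ∨ D ⊆ C := by
  by_contra! hcon
  obtain ⟨v, hv, u, hu, hvu⟩ := exists_mem_boundaryDisplacements hinv hS hC.1 hD.1 hI.nonempty
    hU.compl.nonempty (Set.sdiff_nonempty.2 hcon.1) (Set.sdiff_nonempty.2 hcon.2)
  have hlt := boundarySize_inter_add_union_lt hC.1.1.1 hD.1.1.1 hv hu (hJ hvu)
  obtain ⟨hIP, hUP⟩ := hC.1.inter_and_union hD.1 hI hU
  have hCI := hC.2 _ hIP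
  have hDU := hD.2 _ hUP
  lia

lemma nested (hinv : ∀ s ∈ S, s⁻¹ ∈ S) (hS : Subgroup.closure (S : Set G) = ⊤)
    (hJ : boundaryDisplacements f S ⊆ J) (hC : BiminimalMoved f S J C)
    (hD : BiminimalMoved f S J D) : Nested C D := by
  rcases hC.1.1.inter_and_union_or hD.1.1 with ⟨hI, hU⟩ | ⟨hI, hU⟩
  · rcases subset_or_subset hinv hS hJ hC hD hI hU with h | h
    · exact Or.inl h
    · exact Or.inr (Or.inl h)
  · rcases subset_or_subset hinv hS hJ hC hD.compl hI hU with h | h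
    · exact Or.inr (Or.inr (Or.inl h))
    · exact Or.inr (Or.inr (Or.inr (Set.compl_subset_comm.1 h)))

end BiminimalMoved

theorem exists_nested_moved (hinv : ∀ s ∈ S, s⁻¹ ∈ S) (hSf : ∀ s, f s ∈ S ↔ s ∈ S)
    (hS : Subgroup.closure (S : Set G) = ⊤) (hex : ∃ C, Moved f C) :
    ∃ N : Set (Set G), N.Nonempty ∧ (∀ C ∈ N, Moved f C) ∧ (∀ C ∈ N, ∀ a : G, a • C ∈ N) ∧
      (∀ C ∈ N, f '' C ∈ N) ∧ ∀ C ∈ N, ∀ D ∈ N, Nested C D := by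
  have hfin := finite_boundaryDisplacements (f := f) hinv hS
  set J := hfin.toFinset
  have hJ : boundaryDisplacements f S ⊆ J := hfin.coe_toFinset.ge
  have hJf (g : G) : f g ∈ J ↔ g ∈ J := by
    simpa only [J, hfin.mem_toFinset] using apply_mem_boundaryDisplacements_iff hSf hfin g
  exact ⟨{C | BiminimalMoved f S J C}, exists_minimizes _ (exists_minimizes _ hex),
    fun C hC => hC.1.1,
    fun C hC a => hC.map (fun D hD => hD.smul a) (boundarySize_smul J a),
    fun C hC => hC.map (fun D hD => hD.image hSf) (boundarySize_mulAut_image hJf),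
    fun C hC D hD => hC.nested hinv hS hJ hD⟩

end NestedCuts

section CutSystems

/-- A cut is adjacent to a point if it is maximal among the cuts not containing it. -/
def Adjacent {X : Type*} (E : Set (Set X)) (x : X) (C : Set X) : Prop :=
  Maximal (fun D => D ∈ E ∧ x ∉ D) C

/-- Two points are not separated if they lie in the same cuts. -/
def NotSeparated {X : Type*} (E : Set (Set X)) (x y : X) : Prop := ∀ C ∈ E, x ∈ C ↔ y ∈ C

lemma NotSeparated.symm {X : Type*} {E : Set (Set X)} {x y : X} (h : NotSeparated E x y) :
    NotSeparated E y x :=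
  fun C hC => (h C hC).symm

lemma Adjacent.of_notSeparated {X : Type*} {E : Set (Set X)} {x y : X} {C : Set X}
    (h : Adjacent E x C) (hxy : NotSeparated E x y) : Adjacent E y C :=
  ⟨⟨h.prop.1, mt (hxy C h.prop.1).2 h.prop.2⟩,
    fun D hD => h.2 ⟨hD.1, mt (hxy D hD.1).1 hD.2⟩⟩

variable {G : Type*} [Group G]

/-- A nested family of cuts invariant under translations and complements, only finitely many of
which separate two given points. Such a family is the set of oriented edges of a tree on which `G`
acts; the classes of `NotSeparated` are those vertices of the tree that come from points of `G`. -/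
structure CutSystem (E : Set (Set G)) : Prop where
  compl_mem : ∀ C ∈ E, Cᶜ ∈ E
  smul_mem : ∀ C ∈ E, ∀ a : G, a • C ∈ E
  nested : ∀ C ∈ E, ∀ D ∈ E, Nested C D
  nonempty : ∀ C ∈ E, C.Nonempty
  finite_separating : ∀ x y, {C ∈ E | x ∉ C ∧ y ∈ C}.Finite

/-- The cut `C` is an immediate successor of the cut `D` in the order by inclusion. -/
structure Consecutive (E : Set (Set G)) (D C : Set G) : Prop where
  left_mem : D ∈ E
  right_mem : C ∈ E
  ssubset : D ⊂ C
  eq_right : ∀ F ∈ E, D ⊂ F → F ⊆ C → F = C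

variable {E : Set (Set G)} {x y : G} {C D : Set G}

namespace CutSystem

lemma notSeparated_mul (hE : CutSystem E) (h : NotSeparated E x y) (a : G) :
    NotSeparated E (a * x) (a * y) := fun C hC => by
  simpa only [Set.mem_inv_smul_set_iff, smul_eq_mul] using h _ (hE.smul_mem C hC a⁻¹)

lemma adjacent_smul (hE : CutSystem E) (h : Adjacent E x C) (a : G) :
    Adjacent E (a * x) (a • C) := by
  refine ⟨⟨hE.smul_mem _ h.prop.1 a, ?_⟩, fun D hD hCD => ?_⟩
  · simpa [Set.mem_smul_set_iff_inv_smul_mem] using h.prop.2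
  · exact Set.subset_smul_set_iff.2 <| h.2
      ⟨hE.smul_mem _ hD.1 _, by simpa [Set.mem_inv_smul_set_iff] using hD.2⟩
      (Set.smul_set_subset_iff_subset_inv_smul_set.1 hCD)

lemma notSeparated_of_adjacent (hE : CutSystem E) (hx : Adjacent E x C) (hy : Adjacent E y C) :
    NotSeparated E x y := by
  have mem_of_mem : ∀ x y : G, Adjacent E x C → Adjacent E y C → ∀ D ∈ E, x ∈ D → y ∈ D := by
    intro x y hx hy D hD hxD
    by_contra hyD
    rcases hE.nested D hD C hx.prop.1 with h | h | h | h
    · exact hx.prop.2 (h hxD)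
    · exact hx.prop.2 (hy.eq_of_subset ⟨hD, hyD⟩ h ▸ hxD)
    · have hCD := hx.eq_of_subset ⟨hE.compl_mem D hD, not_not.2 hxD⟩ (Set.subset_compl_comm.1 h)
      exact hy.prop.2 (hCD ▸ hyD)
    · exact hy.prop.2 (h hyD)
  exact fun D hD => ⟨mem_of_mem x y hx hy D hD, mem_of_mem y x hy hx D hD⟩

lemma finite_above (hE : CutSystem E) (hD : D ∈ E) (x : G) :
    {F ∈ E | x ∉ F ∧ D ⊆ F}.Finite := by
  obtain ⟨y, hy⟩ := hE.nonempty D hD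
  exact (hE.finite_separating x y).subset fun C hC => ⟨hC.1, hC.2.1, hC.2.2 hy⟩

lemma exists_adjacent (hE : CutSystem E) (hD : D ∈ E) (hx : x ∉ D) :
    ∃ C, D ⊆ C ∧ Adjacent E x C := by
  obtain ⟨C, hDC, hC⟩ := (hE.finite_above hD x).exists_le_maximal (a := D) ⟨hD, hx, subset_rfl⟩
  exact ⟨C, hDC, ⟨hC.prop.1, hC.prop.2.1⟩,
    fun F hF hCF => hC.2 ⟨hF.1, hF.2, hDC.trans hCF⟩ hCF⟩

lemma eq_of_adjacent_adjacent_compl (hE : CutSystem E) {z : G} (hx : Adjacent E x C)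
    (hz : Adjacent E z Cᶜ) (hD : D ∈ E) (hxD : x ∉ D) (hzD : z ∈ D) : D = C := by
  have hzC : z ∈ C := not_not.1 hz.prop.2
  rcases hE.nested D hD C hx.prop.1 with h | h | h | h
  · exact compl_injective (hz.eq_of_subset ⟨hE.compl_mem D hD, not_not.2 hzD⟩
      (Set.compl_subset_compl.2 h)).symm
  · exact (hx.eq_of_subset ⟨hD, hxD⟩ h).symm
  · exact absurd hzC (h hzD)
  · exact absurd (h hxD) hx.prop.2

lemma consecutive_compl (hE : CutSystem E) (h : Consecutive E D C) : Consecutive E Cᶜ Dᶜ where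
  left_mem := hE.compl_mem C h.right_mem
  right_mem := hE.compl_mem D h.left_mem
  ssubset := compl_lt_compl_iff_lt.2 h.ssubset
  eq_right F hF hCF hFD := by
    by_contra hne
    have hDF : D ⊂ Fᶜ := (Set.subset_compl_comm.1 hFD).ssubset_of_ne fun h => hne (by simp [h])
    exact hCF.ne (by simp [← h.eq_right Fᶜ (hE.compl_mem F hF) hDF (Set.compl_subset_comm.1 hCF.1)])

lemma adjacent_of_consecutive (hE : CutSystem E) (h : Consecutive E D C) {z : G}
    (hz : Adjacent E z Cᶜ) : Adjacent E z D := by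
  have hzC : z ∈ C := not_not.1 hz.prop.2
  have hzD : z ∉ D := fun hzD => h.ssubset.ne <| compl_injective
    (hz.eq_of_subset ⟨hE.compl_mem D h.left_mem, not_not.2 hzD⟩
      (Set.compl_subset_compl.2 h.ssubset.1)).symm
  obtain ⟨d, hd⟩ := hE.nonempty D h.left_mem
  refine ⟨⟨h.left_mem, hzD⟩, fun F ⟨hF, hzF⟩ hDF => ?_⟩
  by_contra hne
  rcases hE.nested F hF C h.right_mem with hFC | hCF | hFC | hFC
  · exact hzF (h.eq_right F hF ⟨hDF, hne⟩ hFC ▸ hzC)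
  · exact hzF (hCF hzC)
  · exact hFC (hDF hd) (h.ssubset.1 hd)
  · have hCF := hz.eq_of_subset ⟨hF, hzF⟩ (Set.compl_subset_comm.1 hFC)
    exact (hCF.symm ▸ hDF hd : d ∈ Cᶜ) (h.ssubset.1 hd)

lemma exists_consecutive (hE : CutSystem E) (hD : D ∈ E) (hx : x ∉ D)
    (hadj : ¬ Adjacent E x D) :
    ∃ C, x ∉ C ∧ Consecutive E D C ∧ ∀ F ∈ E, D ⊂ F → x ∉ F → C ⊆ F := by
  obtain ⟨F, hDF, hF, hxF⟩ := (not_maximal_iff_exists_gt ⟨hD, hx⟩).1 hadj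
  obtain ⟨y, hy⟩ := hE.nonempty D hD
  have hfin : {C | C ∈ E ∧ x ∉ C ∧ D ⊂ C}.Finite :=
    (hE.finite_above hD x).subset fun C hC => ⟨hC.1, hC.2.1, hC.2.2.1⟩
  obtain ⟨C, -, hC⟩ := hfin.exists_le_minimal (a := F) ⟨hF, hxF, hDF⟩
  obtain ⟨hCE, hxC, hDC⟩ := hC.prop
  have hmin : ∀ F ∈ E, D ⊂ F → x ∉ F → C ⊆ F := by
    intro K hK hDK hxK
    rcases hE.nested K hK C hCE with h | h | h | h
    · exact (hC.eq_of_subset ⟨hK, hxK, hDK⟩ h).superset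
    · exact h
    · exact absurd (hDC.1 hy) (h (hDK.1 hy))
    · exact absurd (h hxK) hxC
  exact ⟨C, hxC, ⟨hD, hCE, hDC, fun K hK hDK hKC =>
    hKC.antisymm (hmin K hK hDK fun h => hxC (hKC h))⟩, hmin⟩

lemma induction_above (hE : CutSystem E) {P : Set G → Prop} (base : ∀ D, Adjacent E x D → P D)
    (step : ∀ D C, x ∉ C → Consecutive E D C → (∀ F ∈ E, D ⊂ F → x ∉ F → C ⊆ F) → P C → P D)
    (hD : D ∈ E) (hx : x ∉ D) : P D := by
  by_contra hPD
  have hfin : {F | F ∈ E ∧ x ∉ F ∧ D ⊆ F ∧ ¬ P F}.Finite :=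
    (hE.finite_above hD x).subset fun F hF => ⟨hF.1, hF.2.1, hF.2.2.1⟩
  obtain ⟨F, -, hF⟩ := hfin.exists_le_maximal (a := D) ⟨hD, hx, subset_rfl, hPD⟩
  obtain ⟨hFE, hxF, hDF, hPF⟩ := hF.prop
  obtain ⟨C, hxC, hFC, hmin⟩ := hE.exists_consecutive hFE hxF (mt (base F) hPF)
  refine hPF (step F C hxC hFC hmin ?_)
  by_contra hPC
  exact hFC.ssubset.2 (hF.2 ⟨hFC.right_mem, hxC, hDF.trans hFC.ssubset.1, hPC⟩ hFC.ssubset.1)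

end CutSystem

end CutSystems

section Occupation

/-- A cut is occupied if it is adjacent to some point. -/
def Occupied {X : Type*} (E : Set (Set X)) (C : Set X) : Prop := ∃ x, Adjacent E x C

open Classical in
/-- The number of occupied ends of a cut, counted with signs. -/
noncomputable def occupationDiff {X : Type*} (E : Set (Set X)) (C : Set X) : ℤ :=
  (if Occupied E Cᶜ then 1 else 0) - if Occupied E C then 1 else 0

lemma occupationDiff_compl {X : Type*} (E : Set (Set X)) (C : Set X) :
    occupationDiff E Cᶜ = -occupationDiff E C := by
  rw [occupationDiff, occupationDiff, compl_compl, neg_sub]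

lemma occupied_compl_iff_of_occupationDiff_eq_zero {X : Type*} {E : Set (Set X)} {C : Set X}
    (h : occupationDiff E C = 0) : Occupied E Cᶜ ↔ Occupied E C := by
  unfold occupationDiff at h
  split_ifs at h <;> simp_all

variable {G : Type*} [Group G] {E : Set (Set G)} {x : G} {C D : Set G}

namespace CutSystem

lemma occupied_smul (hE : CutSystem E) (a : G) (C : Set G) :
    Occupied E (a • C) ↔ Occupied E C := by
  refine ⟨fun ⟨x, hx⟩ => ⟨a⁻¹ * x, ?_⟩, fun ⟨x, hx⟩ => ⟨a * x, hE.adjacent_smul hx a⟩⟩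
  simpa only [inv_smul_smul] using hE.adjacent_smul hx a⁻¹

lemma occupationDiff_smul (hE : CutSystem E) (a : G) (C : Set G) :
    occupationDiff E (a • C) = occupationDiff E C := by
  rw [occupationDiff, occupationDiff, ← Set.smul_set_compl, propext (hE.occupied_smul a _),
    propext (hE.occupied_smul a _)]

lemma occupied_compl_iff_of_consecutive (hE : CutSystem E) (h : Consecutive E D C) :
    Occupied E Cᶜ ↔ Occupied E D := by
  refine ⟨fun ⟨z, hz⟩ => ⟨z, hE.adjacent_of_consecutive h hz⟩, fun ⟨z, hz⟩ => ⟨z, ?_⟩⟩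
  exact hE.adjacent_of_consecutive (hE.consecutive_compl h) (by rwa [compl_compl])

/-- Along a chain of consecutive cuts the sum telescopes. -/
lemma finsum_occupationDiff_above (hE : CutSystem E) (hD : D ∈ E) (hx : x ∉ D)
    (hocc : Occupied E Dᶜ) : ∑ᶠ F ∈ {F ∈ E | x ∉ F ∧ D ⊆ F}, occupationDiff E F = 0 := by
  classical
  suffices h : ∑ᶠ F ∈ {F ∈ E | x ∉ F ∧ D ⊆ F}, occupationDiff E F =
      (if Occupied E Dᶜ then 1 else 0) - 1 by simpa only [hocc, if_true, sub_self] using h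
  refine hE.induction_above (P := fun D => ∑ᶠ F ∈ {F ∈ E | x ∉ F ∧ D ⊆ F}, occupationDiff E F =
    (if Occupied E Dᶜ then 1 else 0) - 1) (fun D hadj => ?_) (fun D C hxC hDC hmin ih => ?_) hD hx
  · have habove : {F ∈ E | x ∉ F ∧ D ⊆ F} = {D} := by
      refine Set.eq_singleton_iff_unique_mem.2 ⟨⟨hadj.prop.1, hadj.prop.2, subset_rfl⟩, ?_⟩
      exact fun F hF => (hadj.eq_of_subset ⟨hF.1, hF.2.1⟩ hF.2.2).symm
    rw [habove, finsum_mem_singleton, occupationDiff, if_pos (show Occupied E D from ⟨x, hadj⟩)]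
  · have habove : {F ∈ E | x ∉ F ∧ D ⊆ F} = insert D {F ∈ E | x ∉ F ∧ C ⊆ F} := by
      ext F
      constructor
      · rintro ⟨hF, hxF, hDF⟩
        exact (eq_or_ne F D).imp_right fun h =>
          ⟨hF, hxF, hmin F hF (hDF.ssubset_of_ne h.symm) hxF⟩
      · rintro (rfl | ⟨hF, hxF, hCF⟩)
        · exact ⟨hDC.left_mem, fun h => hxC (hDC.ssubset.1 h), subset_rfl⟩
        · exact ⟨hF, hxF, hDC.ssubset.1.trans hCF⟩
    rw [habove, finsum_mem_insert _ (fun h => hDC.ssubset.2 h.2.2)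
      (hE.finite_above hDC.right_mem x), ih, occupationDiff]
    simp only [hE.occupied_compl_iff_of_consecutive hDC]
    ring

lemma finsum_occupationDiff_separating (hE : CutSystem E) (x y : G) :
    ∑ᶠ F ∈ {C ∈ E | x ∉ C ∧ y ∈ C}, occupationDiff E F = 0 := by
  rcases Set.eq_empty_or_nonempty {C ∈ E | x ∉ C ∧ y ∈ C} with hempty | ⟨C, hC⟩
  · rw [hempty, finsum_mem_empty]
  obtain ⟨D, -, hD⟩ := (hE.finite_separating x y).exists_le_minimal hC
  obtain ⟨hDE, hxD, hyD⟩ := hD.prop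
  have hadj : Adjacent E y Dᶜ := by
    refine ⟨⟨hE.compl_mem D hDE, not_not.2 hyD⟩, fun F ⟨hF, hyF⟩ hDF => ?_⟩
    have hFD : Fᶜ ⊆ D := Set.compl_subset_comm.1 hDF
    exact Set.subset_compl_comm.1 (hD.2 ⟨hE.compl_mem F hF, fun h => hxD (hFD h), hyF⟩ hFD)
  have habove : {C ∈ E | x ∉ C ∧ y ∈ C} = {F ∈ E | x ∉ F ∧ D ⊆ F} := by
    refine Set.Subset.antisymm (fun K ⟨hK, hxK, hyK⟩ => ⟨hK, hxK, ?_⟩)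
      fun K ⟨hK, hxK, hDK⟩ => ⟨hK, hxK, hDK hyD⟩
    rcases hE.nested K hK D hDE with h | h | h | h
    · exact hD.2 ⟨hK, hxK, hyK⟩ h
    · exact h
    · exact absurd hyD (h hyK)
    · exact absurd (h hxK) hxD
  rw [habove, hE.finsum_occupationDiff_above hDE hxD ⟨y, hadj⟩]

lemma occupied_of_occupationDiff_eq_zero (hE : CutSystem E)
    (h : ∀ C ∈ E, occupationDiff E C = 0) (hD : D ∈ E) : Occupied E D := by
  obtain ⟨x, hx⟩ := hE.nonempty _ (hE.compl_mem D hD)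
  refine hE.induction_above (fun D hadj => ⟨x, hadj⟩) (fun D C _ hDC _ hC => ?_) hD hx
  rw [← hE.occupied_compl_iff_of_consecutive hDC]
  exact (occupied_compl_iff_of_occupationDiff_eq_zero (h C hDC.right_mem)).2 hC

end CutSystem

end Occupation

section NestedFamilies

variable {G : Type*} [Group G]

/-- The elements `h` for which the translate `h • C` contains `y` but not `x`. -/
def separators (C : Set G) (x y : G) : Set G := {h | x ∉ h • C ∧ y ∈ h • C}

variable {C : Set G}

lemma AlmostInvariant.finite_separators (hC : AlmostInvariant C) (x y : G) :
    (separators C x y).Finite := by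
  refine ((hC (x⁻¹ * y)).preimage (f := fun h : G => h⁻¹ * x) (by simp)).subset ?_
  rintro h ⟨hx, hy⟩
  rw [Set.mem_smul_set_iff_inv_smul_mem, smul_eq_mul] at hx hy
  simp [mem_coboundary, mul_assoc, hx, hy]

lemma AlmostInvariant.finsum_separators_sub (hC : AlmostInvariant C) (c : ℤ) (x y : G) :
    (∑ᶠ h ∈ separators C x y, c) - ∑ᶠ h ∈ separators C y x, c = c * cutHom C (x⁻¹ * y) := by
  have hfin (x y : G) :
      (Function.support ((separators C x y).indicator fun _ => c)).Finite :=
    (hC.finite_separators x y).subset Set.support_indicator_subset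
  have hcut : cutHom C (x⁻¹ * y) =
      ∑ᶠ h : G, (C.indicator 1 (h⁻¹ * y) - C.indicator 1 (h⁻¹ * x)) := by
    rw [cutHom, ← finsum_comp_equiv ((Equiv.inv G).trans (Equiv.mulRight x))]
    exact finsum_congr fun h => by simp [mul_assoc]
  rw [finsum_mem_def, finsum_mem_def, ← finsum_sub_distrib (hfin x y) (hfin y x), hcut,
    mul_finsum]
  refine finsum_congr fun h => ?_
  by_cases hx : h⁻¹ * x ∈ C <;> by_cases hy : h⁻¹ * y ∈ C <;>
    simp [separators, Set.indicator, Set.mem_smul_set_iff_inv_smul_mem, hx, hy]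

lemma AlmostInvariant.eq_one_of_smul_eq [IsMulTorsionFree G] (hC : AlmostInvariant C)
    (hχ : cutHom C ≠ 0) {t : G} (ht : t • C = C) : t = 1 := by
  obtain ⟨g, hg⟩ := Function.ne_iff.1 hχ
  obtain ⟨x, hx⟩ : (coboundary C g).Nonempty := by
    rw [← support_indicator_sub, Function.support_nonempty_iff]
    intro h
    exact hg (finsum_eq_zero_of_forall_eq_zero fun x => congrFun h x)
  have hmem (k : ℕ) (y : G) : t ^ k * y ∈ C ↔ y ∈ C := by
    conv_lhs => rw [← MulAction.mem_stabilizer_iff.1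
      (pow_mem (MulAction.mem_stabilizer_iff.2 ht) k), ← smul_eq_mul, Set.smul_mem_smul_set_iff]
  by_contra ht1
  refine Set.infinite_of_injective_forall_mem (f := fun k : ℕ => t ^ k * x)
    ((mul_left_injective x).comp (IsMulTorsionFree.pow_right_injective ht1)) (fun k => ?_) (hC g)
  rwa [mem_coboundary, mul_assoc, hmem, hmem]

/-- The translates of a set and their complements. -/
def cutOrbit (A : Set G) : Set (Set G) := {D | ∃ h : G, D = h • A ∨ D = (h • A)ᶜ}

lemma compl_mem_cutOrbit {A D : Set G} (hD : D ∈ cutOrbit A) : Dᶜ ∈ cutOrbit A := by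
  obtain ⟨h, rfl | rfl⟩ := hD
  · exact ⟨h, Or.inr rfl⟩
  · exact ⟨h, Or.inl (compl_compl _)⟩

lemma smul_mem_cutOrbit {A D : Set G} (hD : D ∈ cutOrbit A) (a : G) : a • D ∈ cutOrbit A := by
  obtain ⟨h, rfl | rfl⟩ := hD
  · exact ⟨a * h, Or.inl (smul_smul _ _ _)⟩
  · exact ⟨a * h, Or.inr (by rw [Set.smul_set_compl, smul_smul])⟩

lemma self_mem_cutOrbit (A : Set G) : A ∈ cutOrbit A := ⟨1, Or.inl (one_smul _ _).symm⟩

/-- The translates of the members of a family and their complements. -/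
def orbitCuts {ι : Type*} (C : ι → Set G) : Set (Set G) := {D | ∃ i, D ∈ cutOrbit (C i)}

lemma separating_orbitCuts {ι : Type*} (C : ι → Set G) (x y : G) :
    {F ∈ orbitCuts C | x ∉ F ∧ y ∈ F} = ⋃ i, ((· • C i) '' separators (C i) x y ∪
      (fun h : G => (h • C i)ᶜ) '' separators (C i) y x) := by
  ext F
  simp only [Set.mem_iUnion, Set.mem_union, Set.mem_image]
  constructor
  · rintro ⟨⟨i, h, rfl | rfl⟩, hx, hy⟩
    · exact ⟨i, Or.inl ⟨h, ⟨hx, hy⟩, rfl⟩⟩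
    · exact ⟨i, Or.inr ⟨h, ⟨hy, not_not.1 hx⟩, rfl⟩⟩
  · rintro ⟨i, ⟨h, ⟨hx, hy⟩, rfl⟩ | ⟨h, ⟨hy, hx⟩, rfl⟩⟩
    · exact ⟨⟨i, h, Or.inl rfl⟩, hx, hy⟩
    · exact ⟨⟨i, h, Or.inr rfl⟩, not_not.2 hx, hy⟩

/-- A family of almost invariant sets with nested translates and linearly independent
homomorphisms to `ℤ`. -/
structure NestedFamily {ι : Type*} (C : ι → Set G) : Prop where
  almostInvariant : ∀ i, AlmostInvariant (C i)
  nested : ∀ i j, ∀ h : G, Nested (C i) (h • C j)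
  linearIndependent : LinearIndependent ℤ fun i => cutHom (C i)

namespace NestedFamily

variable {ι : Type*} {C : ι → Set G}

lemma smul_ne_compl (hC : NestedFamily C) (a b : G) (i j : ι) :
    a • C i ≠ (b • C j)ᶜ := by
  intro h
  have hχ : cutHom (C i) + cutHom (C j) = 0 := by
    ext g
    rw [Pi.add_apply, ← cutHom_smul a, h, cutHom_compl, cutHom_smul, neg_add_cancel, Pi.zero_apply]
  rcases eq_or_ne i j with rfl | hij
  · exact hC.linearIndependent.ne_zero i (self_eq_neg.1 (eq_neg_of_add_eq_zero_left hχ))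
  · have hpair := (LinearIndepOn.pair_iff _ hij).1 (hC.linearIndependent.linearIndepOn {i, j})
    exact one_ne_zero (hpair 1 1 (by simpa using hχ)).1

lemma smul_injective [IsMulTorsionFree G] (hC : NestedFamily C) {a b : G} {i j : ι}
    (h : a • C i = b • C j) : i = j ∧ a = b := by
  obtain rfl : i = j := hC.linearIndependent.injective <| funext fun g => by
    rw [← cutHom_smul a, h, cutHom_smul]
  refine ⟨rfl, inv_mul_eq_one.1 ?_⟩
  exact (hC.almostInvariant i).eq_one_of_smul_eq (hC.linearIndependent.ne_zero i)
    (by rw [mul_smul, ← h, inv_smul_smul])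

lemma nested_smul_smul (hC : NestedFamily C) (a b : G) (i j : ι) :
    Nested (a • C i) (b • C j) := by
  simpa only [smul_smul, mul_inv_cancel_left] using (hC.nested i j (a⁻¹ * b)).smul a

lemma nonempty (hC : NestedFamily C) (i : ι) : (C i).Nonempty := by
  refine Set.nonempty_iff_ne_empty.2 fun h => hC.linearIndependent.ne_zero i (funext fun g => ?_)
  rw [h, cutHom_empty, Pi.zero_apply]

lemma compl_nonempty (hC : NestedFamily C) (i : ι) : (C i)ᶜ.Nonempty := by
  refine Set.nonempty_iff_ne_empty.2 fun h => hC.linearIndependent.ne_zero i (funext fun g => ?_)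
  rw [← neg_inj, ← cutHom_compl, h, cutHom_empty, Pi.zero_apply, neg_zero]

lemma finite_separating (hC : NestedFamily C) (i : ι) (x y : G) :
    ((· • C i) '' separators (C i) x y ∪
      (fun h : G => (h • C i)ᶜ) '' separators (C i) y x).Finite :=
  (((hC.almostInvariant i).finite_separators x y).image _).union
    (((hC.almostInvariant i).finite_separators y x).image _)

lemma cutSystem [Finite ι] (hC : NestedFamily C) : CutSystem (orbitCuts C) where
  compl_mem := fun _ ⟨i, hD⟩ => ⟨i, compl_mem_cutOrbit hD⟩
  smul_mem := fun _ ⟨i, hD⟩ a => ⟨i, smul_mem_cutOrbit hD a⟩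
  nested := by
    rintro _ ⟨i, h, rfl | rfl⟩ _ ⟨j, k, rfl | rfl⟩
    · exact hC.nested_smul_smul h k i j
    · exact (hC.nested_smul_smul h k i j).compl_right
    · exact (hC.nested_smul_smul h k i j).compl_left
    · exact (hC.nested_smul_smul h k i j).compl_left.compl_right
  nonempty := by
    rintro _ ⟨i, h, rfl | rfl⟩
    · exact (hC.nonempty i).smul_set
    · exact Set.smul_set_compl (a := h) (s := C i) ▸ (hC.compl_nonempty i).smul_set
  finite_separating x y := by
    rw [separating_orbitCuts]
    exact Set.finite_iUnion fun i => hC.finite_separating i x y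

lemma finsum_occupationDiff_separating [Finite ι] [IsMulTorsionFree G] (hC : NestedFamily C)
    (i : ι) (g : G) :
    ∑ᶠ F ∈ (· • C i) '' separators (C i) 1 g ∪
        (fun h : G => (h • C i)ᶜ) '' separators (C i) g 1, occupationDiff (orbitCuts C) F =
      occupationDiff (orbitCuts C) (C i) * cutHom (C i) g := by
  rw [finsum_mem_union, finsum_mem_image, finsum_mem_image]
  · simp only [occupationDiff_compl, hC.cutSystem.occupationDiff_smul]
    rw [finsum_mem_neg_distrib _ ((hC.almostInvariant i).finite_separators g 1), ← sub_eq_add_neg,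
      (hC.almostInvariant i).finsum_separators_sub, inv_one, one_mul]
  · exact fun a _ b _ hab => (hC.smul_injective (compl_injective hab)).2
  · exact fun a _ b _ hab => (hC.smul_injective hab).2
  · rw [Set.disjoint_left]
    rintro _ ⟨a, -, rfl⟩ ⟨b, -, hab⟩
    exact hC.smul_ne_compl a b i i hab.symm
  · exact ((hC.almostInvariant i).finite_separators 1 g).image _
  · exact ((hC.almostInvariant i).finite_separators g 1).image _

lemma sum_occupationDiff_mul_cutHom [Fintype ι] [IsMulTorsionFree G] (hC : NestedFamily C)
    (g : G) : ∑ i, occupationDiff (orbitCuts C) (C i) * cutHom (C i) g = 0 := by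
  rw [← hC.cutSystem.finsum_occupationDiff_separating 1 g, separating_orbitCuts,
    finsum_mem_iUnion _ fun i => hC.finite_separating i 1 g, finsum_eq_sum_of_fintype]
  · exact Finset.sum_congr rfl fun i _ => (hC.finsum_occupationDiff_separating i g).symm
  · intro i j hij
    rw [Function.onFun, Set.disjoint_left]
    rintro _ (⟨a, -, rfl⟩ | ⟨a, -, rfl⟩) (⟨b, -, hab⟩ | ⟨b, -, hab⟩)
    · exact hij (hC.smul_injective hab).1.symm
    · exact hC.smul_ne_compl a b i j hab.symm
    · exact hC.smul_ne_compl b a j i hab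
    · exact hij (hC.smul_injective (compl_injective hab)).1.symm

lemma occupied [Finite ι] [IsMulTorsionFree G] (hC : NestedFamily C) {D : Set G}
    (hD : D ∈ orbitCuts C) : Occupied (orbitCuts C) D := by
  have := Fintype.ofFinite ι
  have hdiff : ∀ i, occupationDiff (orbitCuts C) (C i) = 0 :=
    Fintype.linearIndependent_iff.1 hC.linearIndependent _ <| funext fun g => by
      simpa using hC.sum_occupationDiff_mul_cutHom g
  refine hC.cutSystem.occupied_of_occupationDiff_eq_zero ?_ hD
  rintro _ ⟨i, h, rfl | rfl⟩
  · rw [hC.cutSystem.occupationDiff_smul, hdiff]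
  · rw [occupationDiff_compl, hC.cutSystem.occupationDiff_smul, hdiff, neg_zero]

end NestedFamily

/-- A cut system whose cuts are the translates of the sets `C i` and their complements, where
`C i` is adjacent to `1` and its complement is adjacent to `y i`. -/
structure CutBasis {ι : Type*} (E : Set (Set G)) (C : ι → Set G) (y : ι → G) : Prop where
  cutSystem : CutSystem E
  exists_mem_cutOrbit : ∀ D ∈ E, ∃ i, D ∈ cutOrbit (C i)
  adjacent_one : ∀ i, Adjacent E 1 (C i)
  adjacent_compl : ∀ i, Adjacent E (y i) (C i)ᶜ
  smul_injective : ∀ {a b : G} {i j}, a • C i = b • C j → i = j ∧ a = b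
  smul_ne_compl : ∀ (a b : G) i j, a • C i ≠ (b • C j)ᶜ

lemma NestedFamily.exists_cutBasis {ι : Type*} [Finite ι] [IsMulTorsionFree G] {C : ι → Set G}
    (hC : NestedFamily C) :
    ∃ a y : ι → G, CutBasis (orbitCuts C) (fun i => a i • C i) y := by
  have hE := hC.cutSystem
  have hmem : ∀ i, C i ∈ orbitCuts C := fun i => ⟨i, self_mem_cutOrbit _⟩
  choose a ha using fun i => hC.occupied (hmem i)
  choose b hb using fun i => hC.occupied (hE.compl_mem _ (hmem i))
  refine ⟨fun i => (a i)⁻¹, fun i => (a i)⁻¹ * b i, hE, ?_, fun i => ?_, fun i => ?_,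
    fun {c d i j} h => ?_, fun c d i j => ?_⟩
  · rintro _ ⟨i, h, rfl | rfl⟩
    · exact ⟨i, h * a i, Or.inl (by simp [smul_smul])⟩
    · exact ⟨i, h * a i, Or.inr (by simp [smul_smul])⟩
  · simpa using hE.adjacent_smul (ha i) (a i)⁻¹
  · simpa only [Set.smul_set_compl] using hE.adjacent_smul (hb i) (a i)⁻¹
  · rw [smul_smul, smul_smul] at h
    obtain ⟨rfl, h⟩ := hC.smul_injective h
    exact ⟨rfl, mul_right_cancel h⟩
  · rw [smul_smul, smul_smul]
    exact hC.smul_ne_compl _ _ _ _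

end NestedFamilies

section Generation

variable {G : Type*} [Group G] {E : Set (Set G)}

lemma Adjacent.mono {X : Type*} {E E' : Set (Set X)} {x : X} {C : Set X} (h : Adjacent E x C)
    (hsub : E' ⊆ E) (hC : C ∈ E') : Adjacent E' x C :=
  ⟨⟨hC, h.prop.2⟩, fun _ hD => h.2 ⟨hsub hD.1, hD.2⟩⟩

namespace CutSystem

/-- The group of elements not separated from `1` by a cut system, that is, the stabilizer of the
vertex of the tree that comes from `1`. -/
def vertexGroup (hE : CutSystem E) : Subgroup G where
  carrier := {g | NotSeparated E 1 g}
  one_mem' _ _ := Iff.rfl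
  mul_mem' {a b} ha hb C hC :=
    (ha C hC).trans (by simpa only [mul_one] using hE.notSeparated_mul hb a C hC)
  inv_mem' {a} ha C hC := by
    simpa only [mul_one, inv_mul_cancel] using (hE.notSeparated_mul ha a⁻¹ C hC).symm

variable {x z g : G} {A B D F : Set G}

lemma mem_vertexGroup (hE : CutSystem E) : g ∈ hE.vertexGroup ↔ NotSeparated E 1 g := Iff.rfl

lemma inv_mul_mem_vertexGroup (hE : CutSystem E) (h : NotSeparated E x z) :
    x⁻¹ * z ∈ hE.vertexGroup := by
  simpa only [mem_vertexGroup, inv_mul_cancel] using hE.notSeparated_mul h x⁻¹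

lemma mem_iff_of_adjacent (hE : CutSystem E) (hx : Adjacent E x F) (hz : Adjacent E z Fᶜ)
    (hD : D ∈ E) (hDF : D ≠ F) (hDF' : D ≠ Fᶜ) : x ∈ D ↔ z ∈ D := by
  by_cases hxD : x ∈ D <;> by_cases hzD : z ∈ D
  · exact iff_of_true hxD hzD
  · exact absurd (compl_eq_comm.1 (hE.eq_of_adjacent_adjacent_compl hx hz (hE.compl_mem D hD)
      (not_not.2 hxD) hzD)).symm hDF'
  · exact absurd (hE.eq_of_adjacent_adjacent_compl hx hz hD hxD hzD) hDF
  · exact iff_of_false hxD hzD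

lemma disjoint_of_adjacent (hE : CutSystem E) (hA : Adjacent E x A) (hB : Adjacent E x B)
    (hAB : A ≠ B) : Disjoint A B := by
  rcases hE.nested A hA.prop.1 B hB.prop.1 with h | h | h | h
  · exact absurd (hA.eq_of_subset hB.prop h) hAB
  · exact absurd (hB.eq_of_subset hA.prop h).symm hAB
  · exact Set.disjoint_left.2 h
  · exact absurd (h hA.prop.2) hB.prop.2

lemma subsystem (hE : CutSystem E) {E' : Set (Set G)} (hsub : E' ⊆ E)
    (hcompl : ∀ C ∈ E', Cᶜ ∈ E') (hsmul : ∀ C ∈ E', ∀ a : G, a • C ∈ E') : CutSystem E' where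
  compl_mem := hcompl
  smul_mem := hsmul
  nested C hC D hD := hE.nested C (hsub hC) D (hsub hD)
  nonempty C hC := hE.nonempty C (hsub hC)
  finite_separating x y := (hE.finite_separating x y).subset fun _ hC => ⟨hsub hC.1, hC.2⟩

lemma separating_ssubset_of_adjacent (hE : CutSystem E) (hx : Adjacent E x F)
    (hz : Adjacent E z Fᶜ) (hg : g ∈ F) :
    {D ∈ E | z ∉ D ∧ g ∈ D} ⊂ {D ∈ E | x ∉ D ∧ g ∈ D} := by
  refine ⟨fun D ⟨hD, hzD, hgD⟩ => ⟨hD, ?_, hgD⟩,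
    fun h => hz.prop.2 (h ⟨hx.prop.1, hx.prop.2, hg⟩).2.1⟩
  have hDF : D ≠ F := fun h => hz.prop.2 (h ▸ hzD)
  have hDF' : D ≠ Fᶜ := fun h => (h ▸ hgD : g ∈ Fᶜ) hg
  rwa [hE.mem_iff_of_adjacent hx hz hD hDF hDF']

lemma exists_adjacent_of_not_notSeparated (hE : CutSystem E) (h : ¬ NotSeparated E x g) :
    ∃ F, Adjacent E x F ∧ g ∈ F := by
  obtain ⟨D, hD, hxD, hgD⟩ : ∃ D ∈ E, x ∉ D ∧ g ∈ D := by
    simp only [NotSeparated, not_forall] at h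
    obtain ⟨D, hD, hsep⟩ := h
    by_cases hxD : x ∈ D
    · exact ⟨Dᶜ, hE.compl_mem D hD, not_not.2 hxD, fun hgD => hsep (iff_of_true hxD hgD)⟩
    · exact ⟨D, hD, hxD, by tauto⟩
  obtain ⟨F, hDF, hF⟩ := hE.exists_adjacent hD hxD
  exact ⟨F, hF, hDF hgD⟩

end CutSystem

namespace CutBasis

variable {ι : Type*} {C : ι → Set G} {y : ι → G}

lemma adjacent_self (hC : CutBasis E C y) (i : ι) (h : G) : Adjacent E h (h • C i) := by
  simpa only [mul_one] using hC.cutSystem.adjacent_smul (hC.adjacent_one i) h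

lemma adjacent_mul (hC : CutBasis E C y) (i : ι) (h : G) : Adjacent E (h * y i) (h • C i)ᶜ :=
  Set.smul_set_compl (a := h) (s := C i) ▸ hC.cutSystem.adjacent_smul (hC.adjacent_compl i) h

lemma smul_mem (hC : CutBasis E C y) (i : ι) (h : G) : h • C i ∈ E := (hC.adjacent_self i h).prop.1

lemma cutOrbit_subset (hC : CutBasis E C y) (i : ι) : cutOrbit (C i) ⊆ E := by
  rintro _ ⟨h, rfl | rfl⟩
  · exact hC.smul_mem i h
  · exact hC.cutSystem.compl_mem _ (hC.smul_mem i h)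

lemma ne_of_mem_cutOrbit (hC : CutBasis E C y) {i j : ι} (hij : i ≠ j) {D F : Set G}
    (hD : D ∈ cutOrbit (C i)) (hF : F ∈ cutOrbit (C j)) : D ≠ F := by
  obtain ⟨a, rfl | rfl⟩ := hD <;> obtain ⟨b, rfl | rfl⟩ := hF
  · exact fun h => hij (hC.smul_injective h).1
  · exact hC.smul_ne_compl _ _ _ _
  · exact (hC.smul_ne_compl _ _ _ _).symm
  · exact fun h => hij (hC.smul_injective (compl_injective h)).1

lemma notSeparated_of_adjacent_compl (hC : CutBasis E C y) {x z : G} {i j : ι} {F : Set G}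
    (hF : F ∈ cutOrbit (C i)) (hx : Adjacent E x F) (hz : Adjacent E z Fᶜ) (hij : i ≠ j) :
    NotSeparated (cutOrbit (C j)) x z := fun _ hD =>
  hC.cutSystem.mem_iff_of_adjacent hx hz (hC.cutOrbit_subset j hD)
    (hC.ne_of_mem_cutOrbit hij.symm hD hF)
    (hC.ne_of_mem_cutOrbit hij.symm hD (compl_mem_cutOrbit hF))

lemma exists_adjacent_compl (hC : CutBasis E C y) {x : G} {F : Set G} (hF : Adjacent E x F) :
    ∃ i z, F ∈ cutOrbit (C i) ∧ Adjacent E z Fᶜ ∧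
      ∀ K : Subgroup G, hC.cutSystem.vertexGroup ≤ K → y i ∈ K → x⁻¹ * z ∈ K := by
  obtain ⟨i, h, rfl | rfl⟩ := hC.exists_mem_cutOrbit F hF.prop.1
  · refine ⟨i, h * y i, ⟨h, Or.inl rfl⟩, hC.adjacent_mul i h, fun K hK hy => ?_⟩
    rw [← mul_assoc]
    exact K.mul_mem (hK (hC.cutSystem.inv_mul_mem_vertexGroup
      (hC.cutSystem.notSeparated_of_adjacent hF (hC.adjacent_self i h)))) hy
  · refine ⟨i, h, ⟨h, Or.inr rfl⟩, by simpa only [compl_compl] using hC.adjacent_self i h,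
      fun K hK hy => ?_⟩
    rw [show x⁻¹ * h = x⁻¹ * (h * y i) * (y i)⁻¹ by group]
    exact K.mul_mem (hK (hC.cutSystem.inv_mul_mem_vertexGroup
      (hC.cutSystem.notSeparated_of_adjacent hF (hC.adjacent_mul i h)))) (K.inv_mem hy)

lemma inv_mul_mem_closure (hC : CutBasis E C y) {J : Set ι} {g x : G}
    (hJ : ∀ i ∉ J, NotSeparated (cutOrbit (C i)) x g) :
    x⁻¹ * g ∈ Subgroup.closure ((hC.cutSystem.vertexGroup : Set G) ∪ y '' J) := by
  have hE := hC.cutSystem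
  set K := Subgroup.closure ((hE.vertexGroup : Set G) ∪ y '' J)
  have hK : hE.vertexGroup ≤ K := fun g hg => Subgroup.subset_closure (Or.inl hg)
  induction hk : {D ∈ E | x ∉ D ∧ g ∈ D}.ncard using Nat.strong_induction_on generalizing x with
  | h k ih =>
    by_cases hsep : NotSeparated E x g
    · exact hK (hE.inv_mul_mem_vertexGroup hsep)
    obtain ⟨F, hF, hgF⟩ := hE.exists_adjacent_of_not_notSeparated hsep
    obtain ⟨i, z, hFi, hz, hxz⟩ := hC.exists_adjacent_compl hF
    have hiJ : i ∈ J := by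
      by_contra hiJ
      exact hF.prop.2 ((hJ i hiJ F hFi).2 hgF)
    have hzg : z⁻¹ * g ∈ K := by
      refine ih _ ?_ (fun j hj D hD => ?_) rfl
      · rw [← hk]
        exact Set.ncard_lt_ncard (hE.separating_ssubset_of_adjacent hF hz hgF)
          (hE.finite_separating x g)
      · rw [← hJ j hj D hD]
        exact (hC.notSeparated_of_adjacent_compl hFi hF hz (ne_of_mem_of_not_mem hiJ hj) D hD).symm
    rw [show x⁻¹ * g = x⁻¹ * z * (z⁻¹ * g) by group]
    exact K.mul_mem (hxz K hK (Subgroup.subset_closure (Or.inr ⟨i, hiJ, rfl⟩))) hzg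

lemma closure_eq_top (hC : CutBasis E C y) :
    Subgroup.closure ((hC.cutSystem.vertexGroup : Set G) ∪ Set.range y) = ⊤ := by
  rw [eq_top_iff, ← Set.image_univ]
  intro g _
  simpa only [inv_one, one_mul] using hC.inv_mul_mem_closure (J := Set.univ) (g := g) (x := 1)
    fun i hi => absurd (Set.mem_univ i) hi

end CutBasis

end Generation

section PingPong

universe u v

lemma closure_range_freeGroupBasis {ι G : Type*} [Group G] (b : FreeGroupBasis ι G) :
    Subgroup.closure (Set.range b) = ⊤ := by
  have h : Set.range b = b.repr.symm.toMonoidHom '' Set.range (FreeGroup.of (α := ι)) := by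
    rw [← Set.range_comp]
    rfl
  rw [h, ← MonoidHom.map_closure, FreeGroup.closure_range_of, ← MonoidHom.range_eq_map]
  exact MonoidHom.range_eq_top.2 b.repr.symm.surjective

lemma closure_range_subgroupBasis {ι G : Type*} [Group G] {H : Subgroup G}
    (b : FreeGroupBasis ι H) : Subgroup.closure (Set.range fun x => (b x : G)) = H := by
  rw [show (fun x => (b x : G)) = H.subtype ∘ b from rfl, Set.range_comp, ← MonoidHom.map_closure,
    closure_range_freeGroupBasis, ← MonoidHom.range_eq_map, Subgroup.range_subtype]

lemma exists_basis_zpowers {G : Type*} [Group G] [IsMulTorsionFree G] {y : G} (hy : y ≠ 1) :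
    ∃ b : FreeGroupBasis PUnit.{u + 1} (Subgroup.zpowers y), ∀ x, (b x : G) = y := by
  have hinj : Function.Injective (zpowersHom G y) := by
    rw [injective_iff_map_eq_one]
    intro k hk
    rwa [zpowersHom_apply, IsMulTorsionFree.zpow_eq_one_iff_right hy] at hk
  refine ⟨(FreeGroupBasis.ofFreeGroup PUnit).map
    (FreeGroup.mulEquivIntOfUnique.trans (MonoidHom.ofInjective hinj)), fun x => ?_⟩
  change y ^ (FreeGroup.equivIntOfUnique (FreeGroup.of x)) = y
  simp [FreeGroup.equivIntOfUnique]

lemma exists_basis_of_lift_bijective {ι G : Type*} [Group G] {H : ι → Subgroup G}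
    (hH : Function.Bijective (Monoid.CoprodI.lift fun i => (H i).subtype)) {X : ι → Type*}
    (b : ∀ i, FreeGroupBasis (X i) (H i)) :
    ∃ β : FreeGroupBasis (Σ i, X i) G, ∀ i x, β ⟨i, x⟩ = b i x := by
  refine ⟨(Monoid.CoprodI.FreeGroupBasis.coprodI b).map (MulEquiv.ofBijective _ hH), fun i x => ?_⟩
  change Monoid.CoprodI.lift (M := fun i => H i) (fun i => (H i).subtype)
    (FreeGroup.lift (fun x : Σ i, X i => Monoid.CoprodI.of (M := fun i => H i) (b x.1 x.2))
      (FreeGroup.of ⟨i, x⟩)) = _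
  rw [FreeGroup.lift_apply_of, Monoid.CoprodI.lift_of, Subgroup.subtype_apply]

namespace CutBasis

variable {G : Type u} [Group G] {E : Set (Set G)} {ι : Type v} {C : ι → Set G} {y : ι → G}

lemma mem_cut (hC : CutBasis E C y) (i : ι) : y i ∈ C i := not_not.1 (hC.adjacent_compl i).prop.2

lemma ne_one (hC : CutBasis E C y) (i : ι) : y i ≠ 1 := fun h =>
  (hC.adjacent_one i).prop.2 (h ▸ hC.mem_cut i)

/-- The two cuts adjacent to `1` that are translates of `C i` or of its complement: the ends of
the tree into which the positive (`true`) and the negative (`false`) powers of `y i` move. -/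
def side (C : ι → Set G) (y : ι → G) (i : ι) : Bool → Set G
  | true => C i
  | false => ((y i)⁻¹ • C i)ᶜ

lemma adjacent_side (hC : CutBasis E C y) (i : ι) (s : Bool) : Adjacent E 1 (side C y i s) := by
  cases s
  · simpa only [side, inv_mul_cancel] using hC.adjacent_mul i (y i)⁻¹
  · exact hC.adjacent_one i

lemma smul_side_ne (hC : CutBasis E C y) {i j : ι} {s t : Bool} {h : G}
    (hne : i = j → s = t → h ≠ 1) : h • side C y i s ≠ side C y j t := by
  intro heq
  rw [← one_smul G (side C y j t)] at heq
  cases s <;> cases t <;> simp only [side, Set.smul_set_compl, smul_smul, one_mul] at heq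
  · obtain ⟨rfl, h1⟩ := hC.smul_injective (compl_injective heq)
    exact hne rfl rfl (mul_eq_right.1 h1)
  · exact hC.smul_ne_compl _ _ _ _ heq.symm
  · exact hC.smul_ne_compl _ _ _ _ heq
  · obtain ⟨rfl, h1⟩ := hC.smul_injective heq
    exact hne rfl rfl h1

lemma disjoint_side (hC : CutBasis E C y) {i j : ι} {s t : Bool} (hne : i = j → s ≠ t) :
    Disjoint (side C y i s) (side C y j t) := by
  refine hC.cutSystem.disjoint_of_adjacent (hC.adjacent_side i s) (hC.adjacent_side j t) ?_
  rw [← one_smul G (side C y i s)]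
  exact hC.smul_side_ne fun hij hst => absurd hst (hne hij)

lemma disjoint_smul_side (hC : CutBasis E C y) {h : G} (hh : h ∈ hC.cutSystem.vertexGroup)
    (h1 : h ≠ 1) (i j : ι) (s t : Bool) : Disjoint (h • side C y i s) (side C y j t) := by
  refine hC.cutSystem.disjoint_of_adjacent (x := 1) ?_ (hC.adjacent_side j t)
    (hC.smul_side_ne fun _ _ => h1)
  have hadj := hC.cutSystem.adjacent_smul (hC.adjacent_side i s) h
  rw [mul_one] at hadj
  exact hadj.of_notSeparated hh.symm

lemma mul_mem_side_true {i : ι} {x : G} (hx : x ∉ side C y i false) :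
    y i * x ∈ side C y i true := by
  simpa [side, Set.mem_inv_smul_set_iff] using hx

lemma inv_mul_mem_side_false {i : ι} {x : G} (hx : x ∉ side C y i true) :
    (y i)⁻¹ * x ∈ side C y i false := by
  simpa [side, Set.mem_inv_smul_set_iff] using hx

lemma pow_mul_mem_side_true (hC : CutBasis E C y) {i : ι} {x : G} (hx : x ∉ side C y i false)
    (k : ℕ) : y i ^ (k + 1) * x ∈ side C y i true := by
  induction k with
  | zero => simpa using mul_mem_side_true hx
  | succ k ih =>
    rw [pow_succ', mul_assoc]
    exact mul_mem_side_true (Set.disjoint_left.1 (hC.disjoint_side fun _ => by simp) ih)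

lemma inv_pow_mul_mem_side_false (hC : CutBasis E C y) {i : ι} {x : G}
    (hx : x ∉ side C y i true) (k : ℕ) : (y i)⁻¹ ^ (k + 1) * x ∈ side C y i false := by
  induction k with
  | zero => simpa using inv_mul_mem_side_false hx
  | succ k ih =>
    rw [pow_succ', mul_assoc]
    exact inv_mul_mem_side_false (Set.disjoint_left.1 (hC.disjoint_side fun _ => by simp) ih)

/-- The sets on which the ping-pong argument is played. -/
def pong (C : ι → Set G) (y : ι → G) : Option ι → Set G
  | none => {x | ∀ i s, x ∉ side C y i s}
  | some i => {x | ∃ s, x ∈ side C y i s}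

lemma disjoint_pong (hC : CutBasis E C y) : Pairwise (Function.onFun Disjoint (pong C y)) := by
  rintro (_ | i) (_ | j) hij
  · exact absurd rfl hij
  · exact Set.disjoint_left.2 fun x hx ⟨s, hs⟩ => hx j s hs
  · exact Set.disjoint_right.2 fun x hx ⟨s, hs⟩ => hx i s hs
  · exact Set.disjoint_left.2 fun x ⟨s, hs⟩ ⟨t, ht⟩ => Set.disjoint_left.1
      (hC.disjoint_side fun h => absurd (congrArg some h) hij) hs ht

lemma zpow_smul_subset_pong (hC : CutBasis E C y) {i : ι} {o : Option ι} (hio : some i ≠ o)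
    {k : ℤ} (hk : k ≠ 0) : y i ^ k • pong C y o ⊆ pong C y (some i) := by
  rintro _ ⟨x, hx, rfl⟩
  have hx : ∀ s, x ∉ side C y i s := fun s hs =>
    Set.disjoint_left.1 (hC.disjoint_pong hio) ⟨s, hs⟩ hx
  obtain ⟨m, rfl | rfl⟩ := k.eq_nat_or_neg
  · obtain ⟨m, rfl⟩ := Nat.exists_eq_succ_of_ne_zero (n := m) (by lia)
    exact ⟨true, by
      simpa only [zpow_natCast, smul_eq_mul] using hC.pow_mul_mem_side_true (hx false) m⟩
  · obtain ⟨m, rfl⟩ := Nat.exists_eq_succ_of_ne_zero (n := m) (by lia)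
    refine ⟨false, ?_⟩
    rw [_root_.zpow_neg, zpow_natCast, ← inv_pow]
    exact hC.inv_pow_mul_mem_side_false (hx true) m

lemma smul_subset_pong_none (hC : CutBasis E C y) {h : G} (hh : h ∈ hC.cutSystem.vertexGroup)
    (h1 : h ≠ 1) (i : ι) : h • pong C y (some i) ⊆ pong C y none := by
  rintro _ ⟨x, ⟨s, hs⟩, rfl⟩ j t ht
  exact Set.disjoint_left.1 (hC.disjoint_smul_side hh h1 i j s t)
    (Set.smul_mem_smul_set hs) ht

/-- The factors of the free product decomposition given by a cut basis. -/
def factor (hC : CutBasis E C y) : Option ι → Subgroup G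
  | none => hC.cutSystem.vertexGroup
  | some i => Subgroup.zpowers (y i)

lemma lift_factor_injective [IsMulTorsionFree G] [Nonempty ι] (hC : CutBasis E C y) :
    Function.Injective (Monoid.CoprodI.lift fun o => (hC.factor o).subtype) := by
  have hcard : ∃ o, 3 ≤ Cardinal.mk (hC.factor o) := by
    obtain ⟨i⟩ := ‹Nonempty ι›
    have : Infinite (Subgroup.zpowers (y i)) :=
      infinite_zpowers.2 (not_isOfFinOrder_of_isMulTorsionFree (hC.ne_one i)) |>.to_subtype
    exact ⟨some i, Cardinal.ofNat_le_aleph0.trans (Cardinal.infinite_iff.1 this)⟩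
  refine Monoid.CoprodI.lift_injective_of_ping_pong _ (Or.inr hcard) (pong C y) ?_
    hC.disjoint_pong ?_
  · rintro (_ | i)
    · exact ⟨1, fun i s => (hC.adjacent_side i s).prop.2⟩
    · exact ⟨y i, true, hC.mem_cut i⟩
  · rintro (_ | i) o hio ⟨g, hg⟩ h1
    · obtain ⟨j, rfl⟩ := Option.ne_none_iff_exists'.1 hio.symm
      exact hC.smul_subset_pong_none hg (fun h => h1 (Subtype.ext h)) j
    · obtain ⟨k, rfl⟩ := hg
      refine hC.zpow_smul_subset_pong hio ?_
      rintro rfl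
      exact h1 (Subtype.ext (zpow_zero _))

lemma lift_factor_surjective (hC : CutBasis E C y) :
    Function.Surjective (Monoid.CoprodI.lift fun o => (hC.factor o).subtype) := by
  rw [← MonoidHom.range_eq_top, eq_top_iff, ← hC.closure_eq_top, Subgroup.closure_le]
  rintro g (hg | ⟨i, rfl⟩)
  · exact ⟨Monoid.CoprodI.of (i := none) ⟨g, hg⟩, by simp⟩
  · exact ⟨Monoid.CoprodI.of (i := some i) ⟨y i, Subgroup.mem_zpowers _⟩, by simp⟩

lemma exists_basis [IsFreeGroup G] [IsMulTorsionFree G] [Nonempty ι] (hC : CutBasis E C y) :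
    ∃ (X : Type u) (β : FreeGroupBasis (X ⊕ ι) G), (∀ i, β (Sum.inr i) = y i) ∧
      Subgroup.closure (Set.range (β ∘ Sum.inl)) = hC.cutSystem.vertexGroup := by
  choose b hb using fun i => exists_basis_zpowers.{u} (hC.ne_one i)
  let X : Option ι → Type u :=
    fun o => o.elim (IsFreeGroup.Generators hC.cutSystem.vertexGroup) fun _ => PUnit
  let B : ∀ o, FreeGroupBasis (X o) (hC.factor o)
    | none => IsFreeGroup.basis hC.cutSystem.vertexGroup
    | some i => b i
  let σ : (Σ o, X o) ≃ X none ⊕ ι :=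
    { toFun
        | ⟨none, x⟩ => Sum.inl x
        | ⟨some i, _⟩ => Sum.inr i
      invFun := Sum.elim (fun x => ⟨none, x⟩) fun i => ⟨some i, PUnit.unit⟩
      left_inv := by rintro ⟨_ | i, x⟩ <;> rfl
      right_inv := by rintro (x | i) <;> rfl }
  obtain ⟨β, hβ⟩ :=
    exists_basis_of_lift_bijective ⟨hC.lift_factor_injective, hC.lift_factor_surjective⟩ B
  refine ⟨X none, β.reindex σ, fun i => (hβ _ _).trans (hb i _), ?_⟩
  rw [show β.reindex σ ∘ Sum.inl = fun x => (B none x : G) from funext fun x => hβ none x]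
  exact closure_range_subgroupBasis (B none)

end CutBasis

end PingPong

section CutExchange

section

variable {X Y : Type*} {E : Set (Set X)} {E' : Set (Set Y)} {T : X → Y}

lemma Adjacent.image {x : X} {D : Set X} (h : Adjacent E x D) (hT : Function.Bijective T)
    (hE : ∀ D, T '' D ∈ E' ↔ D ∈ E) : Adjacent E' (T x) (T '' D) := by
  refine ⟨⟨(hE D).2 h.prop.1, mt hT.1.mem_set_image.1 h.prop.2⟩, fun F hF hDF => ?_⟩
  obtain ⟨F, rfl⟩ := hT.2.image_surjective F
  exact Set.image_mono (h.2 ⟨(hE F).1 hF.1, mt hT.1.mem_set_image.2 hF.2⟩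
    ((Set.image_subset_image_iff hT.1).1 hDF))

lemma notSeparated_image_iff (hT : Function.Bijective T) (hE : ∀ D, T '' D ∈ E' ↔ D ∈ E)
    {x y : X} : NotSeparated E' (T x) (T y) ↔ NotSeparated E x y := by
  simp only [NotSeparated, hT.2.image_surjective.forall, hE, hT.1.mem_set_image]

end

section

variable {G : Type*} [Group G]

lemma cutOrbit_smul (a : G) (A : Set G) : cutOrbit (a • A) = cutOrbit A := by
  ext D
  simp only [cutOrbit, Set.mem_ofPred_eq, smul_smul]
  exact ((mul_right_surjective a).exists (p := fun h => D = h • A ∨ D = (h • A)ᶜ)).symm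

lemma image_mem_cutOrbit (f : MulAut G) (A D : Set G) :
    f '' D ∈ cutOrbit (f '' A) ↔ D ∈ cutOrbit A := by
  simp only [cutOrbit, Set.mem_ofPred_eq]
  rw [f.surjective.exists]
  simp only [← Set.image_smul_distrib, ← Set.image_compl_eq f.bijective,
    f.injective.image_injective.eq_iff]

end

namespace CutBasis

variable {G : Type*} [Group G] {E : Set (Set G)} {ι : Type*} {C : ι → Set G} {y : ι → G}

lemma cutSystem_cutOrbit (hC : CutBasis E C y) (i : ι) : CutSystem (cutOrbit (C i)) :=
  hC.cutSystem.subsystem (hC.cutOrbit_subset i) (fun _ => compl_mem_cutOrbit)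
    fun _ => smul_mem_cutOrbit

lemma vertexGroup_cutOrbit (hC : CutBasis E C y) {X : Type*} {β : X ⊕ ι → G}
    (hy : ∀ i, β (Sum.inr i) = y i)
    (hX : Subgroup.closure (Set.range (β ∘ Sum.inl)) = hC.cutSystem.vertexGroup) (i : ι) :
    (hC.cutSystem_cutOrbit i).vertexGroup = Subgroup.closure (β '' {Sum.inr i}ᶜ) := by
  apply le_antisymm
  · intro g hg
    have hgJ : g ∈ Subgroup.closure ((hC.cutSystem.vertexGroup : Set G) ∪ y '' {i}ᶜ) := by
      simpa only [inv_one, one_mul] using hC.inv_mul_mem_closure (x := 1) fun j hj => by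
        rwa [Set.notMem_compl_iff.1 hj]
    refine (Subgroup.closure_le _).2 (Set.union_subset ?_ ?_) hgJ
    · rw [SetLike.coe_subset_coe, ← hX]
      exact Subgroup.closure_mono (Set.range_subset_iff.2 fun x => ⟨_, Sum.inl_ne_inr, rfl⟩)
    · rintro _ ⟨j, hj, rfl⟩
      exact Subgroup.subset_closure ⟨Sum.inr j, Sum.inr_injective.ne hj, hy j⟩
  · rw [Subgroup.closure_le]
    rintro _ ⟨x | j, hj, rfl⟩
    · have hx : β (Sum.inl x) ∈ hC.cutSystem.vertexGroup :=
        hX ▸ Subgroup.subset_closure ⟨x, rfl⟩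
      exact fun D hD => hx D (hC.cutOrbit_subset i hD)
    · rw [hy]
      exact hC.notSeparated_of_adjacent_compl (self_mem_cutOrbit _) (hC.adjacent_one j)
        (hC.adjacent_compl j) fun h => hj (congrArg Sum.inr h)

section

variable {f : MulAut G} {i j : ι} {h : G}

lemma image_mem_cutOrbit_iff (hf : f '' C i = h • C j) (D : Set G) :
    f '' D ∈ cutOrbit (C j) ↔ D ∈ cutOrbit (C i) := by
  rw [← image_mem_cutOrbit f (C i), hf, cutOrbit_smul]

lemma map_vertexGroup (hC : CutBasis E C y) (hf : f '' C i = h • C j) :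
    (hC.cutSystem_cutOrbit i).vertexGroup.map f.toMonoidHom =
      (hC.cutSystem_cutOrbit j).vertexGroup := by
  have hmem (x : G) : f x ∈ (hC.cutSystem_cutOrbit j).vertexGroup ↔
      x ∈ (hC.cutSystem_cutOrbit i).vertexGroup := by
    simpa only [CutSystem.mem_vertexGroup, _root_.map_one] using
      notSeparated_image_iff f.bijective (image_mem_cutOrbit_iff hf) (x := 1) (y := x)
  ext x
  obtain ⟨x, rfl⟩ := f.surjective x
  rw [hmem]
  exact Subgroup.mem_map_iff_mem f.injective

lemma exists_map_y (hC : CutBasis E C y) (hf : f '' C i = h • C j) :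
    ∃ k ∈ (hC.cutSystem_cutOrbit j).vertexGroup, ∃ m ∈ (hC.cutSystem_cutOrbit j).vertexGroup,
      f (y i) = k * y j * m := by
  have hE := hC.cutSystem_cutOrbit j
  have hmem : h • C j ∈ cutOrbit (C j) := smul_mem_cutOrbit (self_mem_cutOrbit _) h
  have hself : C i ∈ cutOrbit (C i) := self_mem_cutOrbit _
  have hf_one : Adjacent (cutOrbit (C j)) 1 (h • C j) := by
    simpa only [_root_.map_one, hf] using ((hC.adjacent_one i).mono (hC.cutOrbit_subset i)
      hself).image f.bijective (image_mem_cutOrbit_iff hf)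
  have hf_y : Adjacent (cutOrbit (C j)) (f (y i)) (h • C j)ᶜ := by
    simpa only [Set.image_compl_eq f.bijective, hf] using
      ((hC.adjacent_compl i).mono (hC.cutOrbit_subset i)
        (compl_mem_cutOrbit hself)).image f.bijective (image_mem_cutOrbit_iff hf)
  have h_self := (hC.adjacent_self j h).mono (hC.cutOrbit_subset j) hmem
  have h_mul := (hC.adjacent_mul j h).mono (hC.cutOrbit_subset j) (compl_mem_cutOrbit hmem)
  refine ⟨h, hE.notSeparated_of_adjacent hf_one h_self, (h * y j)⁻¹ * f (y i),
    hE.inv_mul_mem_vertexGroup (hE.notSeparated_of_adjacent h_mul hf_y), ?_⟩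
  rw [mul_inv_cancel_left]

end

section

variable {n : ℕ} {E : Set (Set (FreeGroup (Fin n)))} {C : ι → Set (FreeGroup (Fin n))}
  {y : ι → FreeGroup (Fin n)}

lemma exists_aut [Nonempty ι] (hC : CutBasis E C y) :
    ∃ (Φ : FrAut n) (e : ι → Fin n), Function.Injective e ∧
      (∀ i, Φ (FreeGroup.of (e i)) = y i) ∧
      ∀ i, (omitGen (e i)).map Φ.toMonoidHom = (hC.cutSystem_cutOrbit i).vertexGroup := by
  obtain ⟨X, β, hy, hX⟩ := hC.exists_basis
  let σ : X ⊕ ι ≃ Fin n := Equiv.ofFreeGroupEquiv β.repr.symm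
  let Φ : FrAut n := (β.reindex σ).repr.symm
  have hΦ (k : X ⊕ ι) : Φ (FreeGroup.of (σ k)) = β k := by
    change (β.reindex σ) (σ k) = β k
    rw [FreeGroupBasis.reindex_apply, Equiv.symm_apply_apply]
  refine ⟨Φ, fun i => σ (Sum.inr i), σ.injective.comp Sum.inr_injective,
    fun i => (hΦ _).trans (hy i), fun i => ?_⟩
  rw [hC.vertexGroup_cutOrbit hy hX, omitGen, MonoidHom.map_closure, ← Set.image_singleton,
    ← Set.image_compl_eq σ.bijective, Set.image_image, Set.image_image]
  exact congrArg _ (Set.image_congr fun k _ => hΦ k)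

lemma containsTransvections_normalClosure (hC : CutBasis E C y) (hn : 3 ≤ n) {f : FrAut n}
    {i j : ι} (hij : i ≠ j) {h : FreeGroup (Fin n)} (hf : f '' C i = h • C j) :
    ContainsTransvections (Subgroup.normalClosure {f}) := by
  have : Nonempty ι := ⟨i⟩
  obtain ⟨Φ, e, he, hy, hmap⟩ := hC.exists_aut
  obtain ⟨l, hli, hlj⟩ := Fin.exists_ne_and_ne_of_two_lt (e i) (e j) hn
  have hmem : Φ⁻¹ * f * Φ ∈ Subgroup.normalClosure {f} := by
    simpa only [inv_inv] using Subgroup.normalClosure_normal.conj_mem f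
      (Subgroup.subset_normalClosure (Set.mem_singleton f)) Φ⁻¹
  have hcomp : f.toMonoidHom.comp Φ.toMonoidHom =
      Φ.toMonoidHom.comp (Φ⁻¹ * f * Φ : FrAut n).toMonoidHom := by
    change (f * Φ).toMonoidHom = (Φ * (Φ⁻¹ * f * Φ)).toMonoidHom
    rw [mul_assoc Φ⁻¹, mul_inv_cancel_left]
  have homit : (omitGen (e i)).map (Φ⁻¹ * f * Φ : FrAut n).toMonoidHom = omitGen (e j) := by
    apply Subgroup.map_injective (f := Φ.toMonoidHom) Φ.injective
    rw [Subgroup.map_map, ← hcomp, ← Subgroup.map_map, hmap, hmap, hC.map_vertexGroup hf]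
  obtain ⟨k, hk, m, hm, hfy⟩ := hC.exists_map_y hf
  rw [← hmap] at hk hm
  obtain ⟨k, hk, rfl⟩ := hk
  obtain ⟨m, hm, rfl⟩ := hm
  refine containsTransvections_of_mem hli (rightTransvection_mem_of_exchange _ hmem
    (he.ne hij).symm hli hlj homit hk hm ?_)
  rw [MulAut.mul_apply, MulAut.mul_apply, FrAut.inv_apply_eq, hy, hfy, _root_.map_mul,
    _root_.map_mul, hy]
  rfl

end

end CutBasis

end CutExchange

section Conclusion

section

variable {G : Type*} [Group G] {f : MulAut G} {p : ℕ} {A : Set G}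

lemma pow_mul_cutHom_apply_pow {a b : ℤ} (h : ∀ g, b * cutHom A (f g) = a * cutHom A g) (k : ℕ)
    (g : G) : b ^ k * cutHom A ((f ^ k) g) = a ^ k * cutHom A g := by
  induction k with
  | zero => rw [pow_zero, pow_zero, pow_zero, MulAut.one_apply]
  | succ k ih => rw [pow_succ' f, MulAut.mul_apply, pow_succ, mul_assoc, h, mul_left_comm, ih,
      pow_succ', mul_assoc]

lemma Moved.linearIndependent (hA : Moved f A) (hodd : Odd p) (hf : f ^ p = 1) :
    LinearIndependent ℤ fun b : Bool => cutHom (cond b (f '' A) A) := by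
  obtain ⟨-, g₀, hg₀⟩ := hA
  refine Fintype.linearIndependent_iff.2 fun w hw => ?_
  have hrel (g : G) : w false * cutHom A (f g) = -w true * cutHom A g := by
    have hfg : w true * cutHom (f '' A) (f g) + w false * cutHom A (f g) = 0 := by
      simpa using congrFun hw (f g)
    have hχ : cutHom (f '' A) (f g) = cutHom A g :=
      cutHom_image (T := f.toEquiv) (_root_.map_mul f) A g
    rw [hχ] at hfg
    rw [neg_mul, eq_neg_of_add_eq_zero_right hfg]
  obtain ⟨g₁, hg₁⟩ : ∃ g, cutHom A g ≠ 0 := by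
    by_contra! hcon
    exact hg₀ (by rw [hcon, hcon])
  have hpow : w false ^ p = (-w true) ^ p := mul_right_cancel₀ hg₁ <| by
    simpa only [hf, MulAut.one_apply] using pow_mul_cutHom_apply_pow hrel p g₁
  have hneg : w false = -w true := hodd.strictMono_pow.injective hpow
  have hzero : w false = 0 := by
    by_contra hne
    exact hg₀ (mul_left_cancel₀ hne ((hrel g₀).trans (by rw [hneg])))
  rintro (_ | _)
  · exact hzero
  · lia

lemma Moved.nestedFamily (hA : Moved f A) (hodd : Odd p) (hf : f ^ p = 1)
    (hnest : ∀ b b' : Bool, ∀ h : G, Nested (cond b (f '' A) A) (h • cond b' (f '' A) A)) :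
    NestedFamily fun b : Bool => cond b (f '' A) A where
  almostInvariant
    | false => hA.1
    | true => hA.1.image (T := f.toEquiv) (_root_.map_mul f)
  nested := hnest
  linearIndependent := hA.linearIndependent hodd hf

lemma exists_finset_invariant_generators [Group.FG G] (hf : IsOfFinOrder f) :
    ∃ S : Finset G, (∀ s ∈ S, s⁻¹ ∈ S) ∧ (∀ s, f s ∈ S ↔ s ∈ S) ∧
      Subgroup.closure (S : Set G) = ⊤ := by
  obtain ⟨S₀, hS₀, hfin⟩ := Group.fg_iff.1 ‹Group.FG G›
  let A : Set G := (Subgroup.zpowers f : Set (MulAut G)) • (S₀ ∪ S₀⁻¹)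
  have hA : A.Finite := (finite_zpowers.2 hf).smul (hfin.union hfin.inv)
  have hfA (s : G) (g : MulAut G) (hg : g ∈ Subgroup.zpowers f) (hs : s ∈ A) : g s ∈ A := by
    obtain ⟨φ, hφ, x, hx, rfl⟩ := hs
    exact ⟨g * φ, mul_mem hg hφ, x, hx, rfl⟩
  refine ⟨hA.toFinset, fun s hs => ?_, fun s => ?_, ?_⟩
  · rw [hA.mem_toFinset] at hs ⊢
    obtain ⟨φ, hφ, x, hx, rfl⟩ := hs
    refine ⟨φ, hφ, x⁻¹, ?_, _root_.map_inv φ x⟩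
    rwa [← Set.mem_inv, Set.union_inv, inv_inv, Set.union_comm]
  · rw [hA.mem_toFinset, hA.mem_toFinset]
    refine ⟨fun hs => ?_, hfA s f (Subgroup.mem_zpowers f)⟩
    simpa only [MulAut.inv_apply_self] using
      hfA _ f⁻¹ (inv_mem (Subgroup.mem_zpowers f)) hs
  · rw [hA.coe_toFinset, eq_top_iff, ← hS₀]
    exact Subgroup.closure_mono fun s hs => ⟨1, one_mem _, s, Or.inl hs, rfl⟩

end

variable {n p : ℕ} {f : FrAut n}

lemma exists_moved (hp : p.Prime) (hodd : Odd p) (hf : orderOf f = p) : ∃ C, Moved f C := by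
  have hIA : f ∉ IA n := fun hIA => hp.one_lt.ne' <| hf ▸ orderOf_eq_one_iff.2
    (eq_one_of_pow_prime_of_mem_IA hp hodd (hf ▸ pow_orderOf_eq_one f) hIA)
  simp only [mem_IA_iff_expSum, not_forall] at hIA
  obtain ⟨i, w, hw⟩ := hIA
  refine ⟨basicCut i, almostInvariant_basicCut i, w, ?_⟩
  rw [cutHom_basicCut, cutHom_basicCut]
  exact Multiplicative.toAdd.injective.ne hw

theorem containsTransvections_normalClosure_of_prime_order (hn : 3 ≤ n) (hp : p.Prime)
    (hodd : Odd p) (hf : orderOf f = p) : ContainsTransvections (Subgroup.normalClosure {f}) := by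
  obtain ⟨S, hinv, hSf, hS⟩ := exists_finset_invariant_generators (f := f)
    (orderOf_pos_iff.1 (hf ▸ hp.pos))
  obtain ⟨N, ⟨A, hA⟩, hmoved, hsmul, himage, hnested⟩ :=
    exists_nested_moved hinv hSf hS (exists_moved hp hodd hf)
  have hmem (b : Bool) : cond b (f '' A) A ∈ N := by
    cases b
    · exact hA
    · exact himage A hA
  obtain ⟨a, y, hC⟩ := ((hmoved A hA).nestedFamily hodd (hf ▸ pow_orderOf_eq_one f)
    fun b b' h => hnested _ (hmem b) _ (hsmul _ (hmem b') h)).exists_cutBasis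
  refine hC.containsTransvections_normalClosure hn (i := false) (j := true) (by decide)
    (h := f (a false) * (a true)⁻¹) ?_
  rw [smul_smul, inv_mul_cancel_right]
  exact Set.image_smul_distrib f (a false) A

theorem sAut_le_normalClosure (hn : 3 ≤ n) (hp : p.Prime) (hodd : Odd p) (hf : IsOfFinOrder f)
    (hpf : p ∣ orderOf f) : SAut n ≤ Subgroup.normalClosure {f} := by
  have : NeZero n := ⟨by lia⟩
  have hSAut : (SAut n).Normal := MonoidHom.normal_ker _
  obtain ⟨k, hk⟩ := hpf
  have hgp : orderOf (f ^ k) = p := by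
    have hk0 : 0 < k := Nat.pos_of_mul_pos_left (hk ▸ hf.orderOf_pos)
    rw [orderOf_pow_of_dvd hk0.ne' (hk ▸ dvd_mul_left k p), hk, Nat.mul_div_cancel _ hk0]
  have hdet : detρ n (f ^ k) = 1 := by
    have hpow : detρ n (f ^ k) ^ p = 1 := by
      rw [← _root_.map_pow, ← hgp, pow_orderOf_eq_one, _root_.map_one]
    rwa [Int.units_pow_eq_pow_mod_two, Nat.odd_iff.1 hodd, pow_one] at hpow
  exact ((containsTransvections_normalClosure_of_prime_order hn hp hodd hgp).sAut_le
    (Subgroup.normalClosure_le_normal (Set.singleton_subset_iff.2 hdet))).trans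
    (Subgroup.normalClosure_le_normal (Set.singleton_subset_iff.2
      (pow_mem (Subgroup.subset_normalClosure (Set.mem_singleton f)) k)))

end Conclusion

end

theorem normalClosure_odd_prime_order_aut_general (n p : ℕ) (hn : 3 ≤ n) (hp : p.Prime)
    (hodd : Odd p) (f : FrAut n) (hf : IsOfFinOrder f) (hpf : p ∣ orderOf f) :
    (detρ n f = 1 → Subgroup.normalClosure {f} = SAut n) ∧
    (detρ n f = -1 → Subgroup.normalClosure {f} = ⊤) := by
  have hle : SAut n ≤ Subgroup.normalClosure {f} := sAut_le_normalClosure hn hp hodd hf hpf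
  have hSAut : (SAut n).Normal := MonoidHom.normal_ker _
  constructor
  · intro hdet
    exact (Subgroup.normalClosure_le_normal (Set.singleton_subset_iff.2 hdet)).antisymm hle
  · refine fun hdet => eq_top_iff.2 fun h _ => ?_
    rcases Int.units_eq_one_or (detρ n h) with hh | hh
    · exact hle hh
    · rw [← inv_mul_cancel_right h f⁻¹, inv_inv]
      refine mul_mem (hle ?_) (inv_mem (Subgroup.subset_normalClosure (Set.mem_singleton f)))
      change detρ n (h * f) = 1
      rw [_root_.map_mul, hdet, hh, neg_mul_neg, one_mul]

/-- **Proposition 1.5.** For `n ≥ 3` and an odd prime `p`, if `f ∈ Aut(F_n)` has order `p`,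
then `N(f) = SAut(F_n)` if `det f̄ = 1` and `N(f) = Aut(F_n)` if `det f̄ = -1`. -/
theorem normalClosure_odd_prime_order_aut (n p : ℕ) (hn : 3 ≤ n) (hp : p.Prime) (hodd : Odd p)
    (f : FrAut n) (hf : orderOf f = p) :
    (detρ n f = 1 → Subgroup.normalClosure {f} = SAut n) ∧
    (detρ n f = -1 → Subgroup.normalClosure {f} = ⊤) :=
  normalClosure_odd_prime_order_aut_general n p hn hp hodd f
    (orderOf_pos_iff.1 (hf ▸ hp.pos)) (hf ▸ dvd_rfl)

end NormalClosurePaper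
end

section
/- Let g ∈ Aut(F_4) be the automorphism determined by g(x_1) = x_2, g(x_2) = x_3, g(x_3) = x_4 x_1 x_4^{-1}, g(x_4) = x_4, and let ḡ denote its image in Out(F_4). Then ḡ has order 3, and no element of Aut(F_4) of finite order projects to ḡ under the quotient map Aut(F_4) → Out(F_4); that is, every h ∈ Aut(F_4) whose image in Out(F_4) equals ḡ has infinite order. -/
open Matrix

namespace NormalClosurePaper

/-!
Since `g³` is conjugation by `x₄`, the class `ḡ` has order dividing `3`, and it is not trivial, as
it acts nontrivially on the abelianization. A lift of `ḡ` is `h = conj b * g` for some `b`, and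
`h³` is conjugation by `b * g b * g² b * x₄`. A free group of rank at least two is torsion-free
and has trivial center, so if `h` has finite order, then this element is trivial. But `g`
preserves the exponent sum of `x₄`, so the exponent sum of `x₄` in it is `3 e + 1`, where `e` is
that of `b`, and `3 e + 1 ≠ 0`.
-/

section InnerAutomorphisms

variable {G : Type*} [Group G]

lemma mulAut_conj_injective_of_center_eq_bot (hG : Subgroup.center G = ⊥) :
    Function.Injective (MulAut.conj (G := G)) := by
  rw [injective_iff_map_eq_one]
  intro a ha
  rw [← Subgroup.mem_bot, ← hG, Subgroup.mem_center_iff]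
  intro x
  have hx : a * x * a⁻¹ = x := DFunLike.congr_fun ha x
  exact (mul_inv_eq_iff_eq_mul.mp hx).symm

lemma mulAut_mul_conj (f : MulAut G) (a : G) : f * MulAut.conj a = MulAut.conj (f a) * f := by
  ext x
  simp

lemma mulAut_conj_mul_pow (f : MulAut G) (b : G) (n : ℕ) :
    (MulAut.conj b * f) ^ n =
      MulAut.conj ((List.range n).map fun i => (f ^ i) b).prod * f ^ n := by
  induction n with
  | zero => simp
  | succ n ih =>
    rw [pow_succ, ih, List.prod_range_succ, _root_.map_mul, pow_succ f, mul_assoc,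
      ← mul_assoc (f ^ n), mulAut_mul_conj]
    simp only [mul_assoc]

theorem prod_mul_eq_one_of_isOfFinOrder_conj_mul [IsMulTorsionFree G]
    (hG : Subgroup.center G = ⊥) {f : MulAut G} {n : ℕ} {b u : G} (hf : f ^ n = MulAut.conj u)
    (hb : IsOfFinOrder (MulAut.conj b * f)) :
    ((List.range n).map fun i => (f ^ i) b).prod * u = 1 := by
  have hpow := hb.pow (n := n)
  rw [mulAut_conj_mul_pow, hf, ← _root_.map_mul,
    (mulAut_conj_injective_of_center_eq_bot hG).isOfFinOrder_iff] at hpow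
  exact (isOfFinOrder_iff_eq_one _).mp hpow

lemma map_pow_apply_of_comp_eq {M : Type*} [Monoid M] {f : MulAut G} {χ : G →* M}
    (hχ : χ.comp f.toMonoidHom = χ) (i : ℕ) (x : G) : χ ((f ^ i) x) = χ x := by
  induction i with
  | zero => rfl
  | succ i ih =>
    rw [pow_succ', MulAut.mul_apply]
    exact (DFunLike.congr_fun hχ _).trans ih

theorem map_pow_mul_map_eq_one_of_isOfFinOrder_conj_mul [IsMulTorsionFree G]
    (hG : Subgroup.center G = ⊥) {M : Type*} [Monoid M] {f : MulAut G} {χ : G →* M}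
    (hχ : χ.comp f.toMonoidHom = χ) {n : ℕ} {b u : G} (hf : f ^ n = MulAut.conj u)
    (hb : IsOfFinOrder (MulAut.conj b * f)) : χ b ^ n * χ u = 1 := by
  have hprod := congrArg χ (prod_mul_eq_one_of_isOfFinOrder_conj_mul hG hf hb)
  simpa [map_list_prod, Function.comp_def, map_pow_apply_of_comp_eq hχ] using hprod

end InnerAutomorphisms

lemma center_freeGroup_eq_bot {α : Type*} [Nontrivial α] :
    Subgroup.center (FreeGroup α) = ⊥ := by
  classical
  refine (Subgroup.eq_bot_iff_forall _).mpr fun w hw => ?_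
  rw [← FreeGroup.toWord_eq_nil_iff]
  rcases hL : w.toWord with _ | ⟨c, L⟩
  · rfl
  -- For `a` not the letter at which `w` starts, `of a * w` is reduced and starts with `a`,
  -- whereas `w * of a` starts as `w` does.
  obtain ⟨a, hac⟩ := exists_ne c.1
  have hleft : (FreeGroup.of a * w).toWord = (a, true) :: c :: L := by
    have hred : FreeGroup.IsReduced ((a, true) :: c :: L) :=
      FreeGroup.isReduced_cons_cons.mpr ⟨fun h => absurd h hac, hL ▸ FreeGroup.isReduced_toWord⟩
    rw [FreeGroup.toWord_mul, FreeGroup.toWord_of, hL]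
    exact hred.reduce_eq
  have hsub : (FreeGroup.of a * w).toWord.Sublist (c :: L ++ [(a, true)]) := by
    simpa only [Subgroup.mem_center_iff.mp hw, hL, FreeGroup.toWord_of] using
      FreeGroup.toWord_mul_sublist w (FreeGroup.of a)
  have heq : (a, true) :: c :: L = c :: (L ++ [(a, true)]) :=
    hleft ▸ hsub.eq_of_length (by simp [hleft])
  exact absurd (congrArg Prod.fst (List.cons.inj heq).1) hac

lemma toOut_eq_toOut_iff {n : ℕ} {f f' : FrAut n} :
    toOut n f = toOut n f' ↔ ∃ b, MulAut.conj b * f' = f :=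
  QuotientGroup.eq_iff_div_mem.trans (exists_congr fun _ => eq_div_iff_mul_eq')

lemma mat_eq_one_of_toOut_eq_one {n : ℕ} {f : FrAut n} (hf : toOut n f = 1) : mat f = 1 := by
  obtain ⟨a, rfl⟩ := (QuotientGroup.eq_one_iff f).mp hf
  exact mat_conj a

/-- The outer automorphism `ḡ` of `F_4` induced by `g : x_1 ↦ x_2, x_2 ↦ x_3,
x_3 ↦ x_4 x_1 x_4⁻¹, x_4 ↦ x_4` has order 3, yet no finite order element of `Aut(F_4)`
projects to `ḡ`. -/
theorem out_order_three_without_finite_order_lift (g : FrAut 4)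
    (h1 : g (FreeGroup.of 0) = FreeGroup.of 1)
    (h2 : g (FreeGroup.of 1) = FreeGroup.of 2)
    (h3 : g (FreeGroup.of 2) = FreeGroup.of 3 * FreeGroup.of 0 * (FreeGroup.of 3)⁻¹)
    (h4 : g (FreeGroup.of 3) = FreeGroup.of 3) :
    orderOf (toOut 4 g) = 3 ∧
    ∀ h : FrAut 4, toOut 4 h = toOut 4 g → ¬ IsOfFinOrder h := by
  have hcube : g ^ 3 = MulAut.conj (FreeGroup.of 3) := by
    refine MulEquiv.toMonoidHom_injective (FreeGroup.ext_hom _ _ fun k => ?_)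
    fin_cases k <;> simp [pow_succ, h1, h2, h3, h4]
  refine ⟨orderOf_eq_prime ?_ fun htriv => ?_, fun h hlift hfin => ?_⟩
  · rw [← _root_.map_pow, hcube]
    exact (QuotientGroup.eq_one_iff _).mpr ⟨_, rfl⟩
  · have hentry := congrFun₂ (mat_eq_one_of_toOut_eq_one htriv) 0 0
    simp [mat, h1, expSum] at hentry
  · obtain ⟨b, rfl⟩ := toOut_eq_toOut_iff.mp hlift
    have hinv : (expSum 3).comp g.toMonoidHom = expSum 3 := by
      refine FreeGroup.ext_hom _ _ fun k => ?_
      fin_cases k <;> simp [h1, h2, h3, h4, expSum]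
    have hprod : expSum 3 b ^ 3 * expSum 3 (FreeGroup.of 3) = 1 :=
      map_pow_mul_map_eq_one_of_isOfFinOrder_conj_mul center_freeGroup_eq_bot hinv hcube hfin
    have hsum : 3 * (expSum 3 b).toAdd + 1 = 0 := by
      simpa [expSum] using congrArg Multiplicative.toAdd hprod
    omega

end NormalClosurePaper
end
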